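/- arXiv:1309.7593 — 3 statements merged into one kernel-verified Lean document; each statement's English description precedes it below -/
import Mathlib

section
/- Let f: [0,1] → [0,1] be a multimodal map of class C^3 with non-flat critical points, with all periodic points hyperbolic repelling, and topologically exact. Then for every κ > 0 there is δ > 0 such that for every x ∈ [0,1], every integer n ≥ 1, and every pull-back W of B(x,δ) by f^n (i.e., every connected component W of f^{−n}(B(x,δ))), we have |W| < κ. -/
/-!
By compactness topological exactness is uniform: for each `r > 0` there is `N` such that every
iterate `f^m` with `m ≥ N` maps every ball of radius `r` onto the whole space. The finitely many
iterates `f^k`, `k ≤ N`, are equicontinuous, so a set which one of them maps onto the whole space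
cannot be too small. Applied to `f^n(B)`, with `B` a ball of radius `r`, which `f^(max n N - n)`
maps onto the whole space, this bounds the size of `f^n(B)` from below uniformly in `n`. An interval
of length at least `κ` contains a ball of radius `κ/4`, so it cannot be mapped into a ball of very
small radius by any iterate.
-/

open Set MeasureTheory Metric Filter

noncomputable section

/-- The unit interval as a subset of `ℝ`. -/
def unitI : Set ℝ := Set.Icc 0 1

/-- The ball of `I` centered at `x` of radius `r`. -/
def ballI (x r : ℝ) : Set ℝ := {y ∈ unitI | |x - y| < r}

/-- `f` is a multimodal map of the unit interval: continuous, non-injective,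
and there is a finite partition of `I` into intervals on each of which `f` is injective. -/
def Multimodal (f : ℝ → ℝ) : Prop :=
  ContinuousOn f unitI ∧ Set.MapsTo f unitI unitI ∧ ¬ Set.InjOn f unitI ∧
    ∃ (n : ℕ) (J : Fin n → Set ℝ), (∀ i, (J i).OrdConnected) ∧ (⋃ i, J i) = unitI ∧
      Pairwise (Function.onFun Disjoint J) ∧ ∀ i, Set.InjOn f (J i)

/-- `f` is topologically exact on the unit interval. -/
def TopExact (f : ℝ → ℝ) : Prop :=
  ∀ U : Set ℝ, U.Nonempty → U ⊆ unitI → (∃ V : Set ℝ, IsOpen V ∧ U = V ∩ unitI) →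
    ∃ n : ℕ, 1 ≤ n ∧ f^[n] '' U = unitI

/-- The set of critical points of `f` in the unit interval. -/
def Crit (f : ℝ → ℝ) : Set ℝ := {x ∈ unitI | deriv f x = 0}

/-- The set of turning points of `f`: points of `I` at which `f` is not locally injective. -/
def TurnPts (f : ℝ → ℝ) : Set ℝ :=
  {x ∈ unitI | ∀ ε > 0, ¬ Set.InjOn f (ballI x ε)}

/-- A `C^3` diffeomorphism of `ℝ`. -/
def IsC3Diffeo (φ : ℝ → ℝ) : Prop :=
  ContDiff ℝ 3 φ ∧ Function.Bijective φ ∧ ∀ x : ℝ, deriv φ x ≠ 0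

/-- `f` is non-flat at `c` with exponent `ℓc`. -/
def NonflatAt (f : ℝ → ℝ) (ℓc : ℝ) (c : ℝ) : Prop :=
  1 < ℓc ∧ ∃ φ ψ : ℝ → ℝ, IsC3Diffeo φ ∧ IsC3Diffeo ψ ∧ φ c = 0 ∧ ψ (f c) = 0 ∧
    ∃ U ∈ nhdsWithin c unitI, ∀ x ∈ U, |ψ (f x)| = |φ x| ^ ℓc

/-- `f` is of class `C^3` with non-flat critical points, with exponents given by `ℓ`. -/
def C3NonflatWith (f : ℝ → ℝ) (ℓ : ℝ → ℝ) : Prop :=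
  ContDiffOn ℝ 1 f unitI ∧ ContDiffOn ℝ 3 f (unitI \ Crit f) ∧
    ∀ c ∈ Crit f, NonflatAt f (ℓ c) c

/-- `f` is of class `C^3` with non-flat critical points. -/
def C3Nonflat (f : ℝ → ℝ) : Prop := ∃ ℓ : ℝ → ℝ, C3NonflatWith f ℓ

/-- All periodic points of `f` are hyperbolic repelling. -/
def AllPeriodicRepelling (f : ℝ → ℝ) : Prop :=
  ∀ p ∈ unitI, ∀ n : ℕ, 1 ≤ n → f^[n] p = p → 1 < |deriv (f^[n]) p|

/-- The criticality of `f^m` at `x` with respect to `r`: the number of `j < m` such that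
the connected component of `f^{-(m-j)}(B(f^m(x),r) ∩ I)` containing `f^j(x)` meets the
set of turning points. -/
def criticality (f : ℝ → ℝ) (m : ℕ) (x r : ℝ) : ℕ :=
  Nat.card {j : ℕ // j < m ∧
    (connectedComponentIn (unitI ∩ f^[m - j] ⁻¹' ballI (f^[m] x) r) (f^[j] x) ∩ TurnPts f).Nonempty}

/-- `f` is semi-hyperbolic. -/
def SemiHyperbolic (f : ℝ → ℝ) : Prop :=
  ∃ r : ℝ, 0 < r ∧ ∃ D : ℕ, 1 ≤ D ∧ ∀ x ∈ unitI, ∀ n : ℕ, 1 ≤ n → criticality f n x r ≤ D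

/-- `c` is a recurrent point of `f`: `c` belongs to the set of accumulation points of
its forward orbit. -/
def RecurrentPt (f : ℝ → ℝ) (c : ℝ) : Prop :=
  ∀ ε > 0, ∀ N : ℕ, ∃ n : ℕ, N ≤ n ∧ |f^[n] c - c| < ε

/-- A Borel measure on the unit interval is doubling. -/
def DoublingOn (μ : Measure ℝ) : Prop :=
  ∃ C : ℝ, 0 < C ∧ ∃ r₀ : ℝ, 0 < r₀ ∧ ∀ x ∈ unitI, ∀ r : ℝ, 0 < r → r < r₀ →
    μ (ballI x (2 * r)) ≤ ENNReal.ofReal C * μ (ballI x r)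

/-- A homeomorphism of the unit interval is quasi-symmetric. -/
def QuasiSymmetricOn (h : ℝ → ℝ) : Prop :=
  ∃ K : ℝ, 1 ≤ K ∧ ∀ x ∈ unitI, ∀ ε : ℝ, 0 < ε → x + ε ∈ unitI → x - ε ∈ unitI →
    |h (x + ε) - h x| ≤ K * |h x - h (x - ε)| ∧
    |h x - h (x - ε)| ≤ K * |h (x + ε) - h x|

/-- `F` is piecewise affine on the unit interval with slope `±s` everywhere. -/
def PiecewiseAffineSlope (F : ℝ → ℝ) (s : ℝ) : Prop :=
  ∃ (n : ℕ) (a : Fin (n + 1) → ℝ), a 0 = 0 ∧ a (Fin.last n) = 1 ∧ StrictMono a ∧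
    ∀ i : Fin n, ∃ b σ : ℝ, (σ = 1 ∨ σ = -1) ∧
      ∀ x ∈ Set.Icc (a i.castSucc) (a i.succ), F x = σ * s * x + b

/-- `f` is quasi-symmetrically conjugate to a piecewise affine map of the unit interval
with slope `±s` everywhere. -/
def QSConjPiecewiseAffine (f : ℝ → ℝ) (s : ℝ) : Prop :=
  ∃ h F : ℝ → ℝ, ContinuousOn h unitI ∧ Set.BijOn h unitI unitI ∧ QuasiSymmetricOn h ∧
    Set.MapsTo F unitI unitI ∧ PiecewiseAffineSlope F s ∧ ∀ x ∈ unitI, h (f x) = F (h x)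

/-- The topological entropy of `f` on the unit interval (Bowen's definition). -/
def htop (f : ℝ → ℝ) : ℝ := (Dynamics.coverEntropy f unitI).toReal

/-- `μ` is an `f`-invariant Borel probability measure on the unit interval which is
non-atomic, has topological support equal to the unit interval, and has constant
Jacobian `s`; for a topologically exact multimodal map this characterizes the unique
measure of maximal entropy when `s = exp (htop f)`. -/
def IsMaxEntropyLike (f : ℝ → ℝ) (μ : Measure ℝ) (s : ℝ) : Prop :=
  IsProbabilityMeasure μ ∧ μ unitIᶜ = 0 ∧
    (∀ A : Set ℝ, MeasurableSet A → μ (f ⁻¹' A) = μ A) ∧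
    (∀ x : ℝ, μ {x} = 0) ∧
    (∀ x ∈ unitI, ∀ r : ℝ, 0 < r → 0 < μ (ballI x r)) ∧
    (∀ A : Set ℝ, MeasurableSet A → A ⊆ unitI → Set.InjOn f A →
      μ (f '' A) = ENNReal.ofReal s * μ A)

/-- `W` is a pull-back of `J` by `f^n`, i.e. a connected component of `f^{-n}(J)`. -/
def IsPullback (f : ℝ → ℝ) (n : ℕ) (J W : Set ℝ) : Prop :=
  ∃ x ∈ unitI ∩ f^[n] ⁻¹' J, W = connectedComponentIn (unitI ∩ f^[n] ⁻¹' J) x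

/-- `J` is `τ`-well inside `T` (for intervals): both components of `T ∖ J`
have length at least `τ|J|`. -/
def WellInside (τ : ℝ) (J T : Set ℝ) : Prop :=
  J ⊆ T ∧ τ * Metric.diam J ≤ sInf J - sInf T ∧ τ * Metric.diam J ≤ sSup T - sSup J


/-- Topological exactness of `f` relative to a subset `s` of the phase space: some iterate of `f`
with positive exponent maps each nonempty relatively open subset of `s` onto a set containing `s`.
The invariance of `s` under `f` is not part of the definition. -/
def ExactOn {X : Type*} [TopologicalSpace X] (f : X → X) (s : Set X) : Prop :=
  ∀ U : Set X, IsOpen U → (U ∩ s).Nonempty → ∃ n : ℕ, n ≠ 0 ∧ SurjOn f^[n] (U ∩ s) s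

section Topology

variable {X : Type*} [TopologicalSpace X] {f : X → X} {s : Set X}

theorem ExactOn.surjOn (hex : ExactOn f s) (hmaps : MapsTo f s s) : SurjOn f s s := by
  rcases s.eq_empty_or_nonempty with rfl | hne
  · exact surjOn_empty f ∅
  · obtain ⟨n, hn, hsurj⟩ := hex univ isOpen_univ (by rwa [univ_inter])
    obtain ⟨k, rfl⟩ := Nat.exists_eq_succ_of_ne_zero hn
    rw [univ_inter, Nat.succ_eq_add_one, Function.iterate_succ'] at hsurj
    exact hsurj.of_comp (hmaps.iterate k)

theorem ExactOn.eventually_surjOn_iterate (hex : ExactOn f s) (hmaps : MapsTo f s s) {U : Set X}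
    (hU : IsOpen U) (hne : (U ∩ s).Nonempty) :
    ∀ᶠ m in atTop, SurjOn f^[m] (U ∩ s) s := by
  obtain ⟨n, -, hn⟩ := hex U hU hne
  filter_upwards [eventually_ge_atTop n] with m hnm
  rw [← Nat.sub_add_cancel hnm, Function.iterate_add]
  exact ((hex.surjOn hmaps).iterate (m - n)).comp hn

end Topology

section Metric

variable {X : Type*} [PseudoMetricSpace X] {f : X → X} {s : Set X}

theorem ExactOn.eventually_forall_surjOn_iterate_ball (hex : ExactOn f s) (hmaps : MapsTo f s s)
    (hs : TotallyBounded s) {r : ℝ} (hr : 0 < r) :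
    ∀ᶠ m in atTop, ∀ x ∈ s, SurjOn f^[m] (ball x r ∩ s) s := by
  obtain ⟨t, hts, htfin, hcover⟩ := finite_approx_of_totallyBounded hs (r / 2) (half_pos hr)
  have hcenters : ∀ᶠ m in atTop, ∀ c ∈ t, SurjOn f^[m] (ball c (r / 2) ∩ s) s :=
    (eventually_all_finite htfin).2 fun c hc =>
      hex.eventually_surjOn_iterate hmaps isOpen_ball
        ⟨c, mem_ball_self (half_pos hr), hts hc⟩
  filter_upwards [hcenters] with m hm x hx
  obtain ⟨c, hc, hxc⟩ := mem_iUnion₂.1 (hcover hx)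
  have hball : ball c (r / 2) ⊆ ball x r :=
    ball_subset (by linarith [mem_ball'.1 hxc])
  exact (hm c hc).mono (inter_subset_inter_left s hball) subset_rfl

theorem exists_forall_dist_iterate_lt (hs : IsCompact s) (hcont : ContinuousOn f s)
    (hmaps : MapsTo f s s) (N : ℕ) {ε : ℝ} (hε : 0 < ε) :
    ∃ η > 0, ∀ k ≤ N, ∀ x ∈ s, ∀ y ∈ s, dist x y < η → dist (f^[k] x) (f^[k] y) < ε := by
  have hequi : UniformEquicontinuousOn (fun k : Iic N => f^[k]) s :=
    uniformEquicontinuousOn_finite.2 fun k =>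
      hs.uniformContinuousOn_of_continuous (hcont.iterate hmaps k)
  obtain ⟨η, hη, h⟩ := (uniformity_basis_dist.inf_principal (s ×ˢ s)).eventually_iff.1
    (hequi _ (dist_mem_uniformity hε))
  exact ⟨η, hη, fun k hk x hx y hy hxy => @h (x, y) ⟨hxy, hx, hy⟩ ⟨k, hk⟩⟩

theorem exists_forall_le_dist_iterate_of_surjOn (hs : IsCompact s) (hcont : ContinuousOn f s)
    (hmaps : MapsTo f s s) {p q : X} (hp : p ∈ s) (hq : q ∈ s) (hpq : 0 < dist p q) (N : ℕ) :
    ∃ η > 0, ∀ A ⊆ s, (∀ m ≥ N, SurjOn f^[m] A s) →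
      ∀ n, ∃ u ∈ A, ∃ v ∈ A, η ≤ dist (f^[n] u) (f^[n] v) := by
  obtain ⟨η, hη, hclose⟩ := exists_forall_dist_iterate_lt hs hcont hmaps N hpq
  refine ⟨η, hη, fun A hA hsurj n => ?_⟩
  obtain ⟨k, hkN, hNk⟩ : ∃ k ≤ N, N ≤ k + n := ⟨N - n, Nat.sub_le N n, by omega⟩
  obtain ⟨u, hu, rfl⟩ := hsurj (k + n) hNk hp
  obtain ⟨v, hv, rfl⟩ := hsurj (k + n) hNk hq
  refine ⟨u, hu, v, hv, not_lt.1 fun hlt => ?_⟩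
  simp only [Function.iterate_add_apply] at hclose
  exact (hclose k hkN _ (hmaps.iterate n (hA hu)) _ (hmaps.iterate n (hA hv)) hlt).false

theorem ExactOn.exists_forall_le_dist_iterate_ball (hex : ExactOn f s) (hs : IsCompact s)
    (hcont : ContinuousOn f s) (hmaps : MapsTo f s s) {p q : X} (hp : p ∈ s) (hq : q ∈ s)
    (hpq : 0 < dist p q) {r : ℝ} (hr : 0 < r) :
    ∃ η > 0, ∀ x ∈ s, ∀ n, ∃ u ∈ ball x r ∩ s, ∃ v ∈ ball x r ∩ s,
      η ≤ dist (f^[n] u) (f^[n] v) := by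
  obtain ⟨N, hN⟩ := eventually_atTop.1
    (hex.eventually_forall_surjOn_iterate_ball hmaps hs.totallyBounded hr)
  obtain ⟨η, hη, h⟩ := exists_forall_le_dist_iterate_of_surjOn hs hcont hmaps hp hq hpq N
  exact ⟨η, hη, fun x hx => h _ inter_subset_right fun m hm => hN m hm x hx⟩

theorem exists_lt_dist_of_lt_diam {r : ℝ} (hr : 0 ≤ r) (h : r < diam s) :
    ∃ x ∈ s, ∃ y ∈ s, r < dist x y := by
  contrapose! h
  exact diam_le_of_forall_dist_le hr h

end Metric

theorem exists_ball_subset_of_ordConnected {W : Set ℝ} (hW : W.OrdConnected) {r : ℝ} (hr : 0 ≤ r)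
    (h : 2 * r < diam W) : ∃ c ∈ W, ball c r ⊆ W := by
  obtain ⟨a, ha, b, hb, hab⟩ := exists_lt_dist_of_lt_diam (by positivity) h
  wlog hle : a ≤ b generalizing a b
  · exact this b hb a ha (by rwa [dist_comm]) (le_of_not_ge hle)
  rw [dist_comm, Real.dist_eq, abs_of_nonneg (sub_nonneg.2 hle)] at hab
  refine ⟨(a + b) / 2, hW.out ha hb ⟨by linarith, by linarith⟩, fun y hy => ?_⟩
  rw [Real.ball_eq_Ioo] at hy
  exact hW.out ha hb ⟨by linarith [hy.1], by linarith [hy.2]⟩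

theorem TopExact.exactOn {f : ℝ → ℝ} (hex : TopExact f) : ExactOn f unitI := by
  intro U hU hne
  obtain ⟨n, hn, himage⟩ := hex (U ∩ unitI) hne inter_subset_right ⟨U, hU, rfl⟩
  exact ⟨n, Nat.one_le_iff_ne_zero.1 hn, himage.ge⟩

theorem dist_lt_two_mul_of_mem_ballI {x δ y z : ℝ} (hy : y ∈ ballI x δ) (hz : z ∈ ballI x δ) :
    dist y z < 2 * δ := by
  have hyx : dist x y < δ := hy.2
  have hzx : dist x z < δ := hz.2
  linarith [dist_triangle_left y z x]

theorem IsPullback.subset {f : ℝ → ℝ} {n : ℕ} {J W : Set ℝ} (hW : IsPullback f n J W) :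
    W ⊆ unitI ∩ f^[n] ⁻¹' J := by
  obtain ⟨w, -, rfl⟩ := hW
  exact connectedComponentIn_subset _ _

theorem IsPullback.ordConnected {f : ℝ → ℝ} {n : ℕ} {J W : Set ℝ} (hW : IsPullback f n J W) :
    W.OrdConnected := by
  obtain ⟨w, -, rfl⟩ := hW
  exact isPreconnected_connectedComponentIn.ordConnected

theorem pullback_stability_general {f : ℝ → ℝ} (hcont : ContinuousOn f unitI)
    (hmaps : MapsTo f unitI unitI) (hex : TopExact f) {κ : ℝ} (hκ : 0 < κ) :
    ∃ δ > 0, ∀ (x : ℝ) (n : ℕ) (W : Set ℝ), IsPullback f n (ballI x δ) W → diam W < κ := by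
  obtain ⟨η, hη, hspread⟩ := hex.exactOn.exists_forall_le_dist_iterate_ball isCompact_Icc hcont
    hmaps (left_mem_Icc.2 zero_le_one) (right_mem_Icc.2 zero_le_one) (by simp)
    (r := κ / 4) (by positivity)
  refine ⟨η / 2, half_pos hη, fun x n W hW => ?_⟩
  by_contra! hdiam
  obtain ⟨c, hc, hball⟩ : ∃ c ∈ W, ball c (κ / 4) ⊆ W :=
    exists_ball_subset_of_ordConnected hW.ordConnected (by positivity) (by linarith)
  obtain ⟨u, hu, v, hv, huv⟩ := hspread c (hW.subset hc).1 n
  have hclose : dist (f^[n] u) (f^[n] v) < 2 * (η / 2) :=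
    dist_lt_two_mul_of_mem_ballI (hW.subset (hball hu.1)).2 (hW.subset (hball hv.1)).2
  linarith

/-- **Backward Lyapunov stability** (Lemma 2.1): pull-backs of small balls are small. -/
theorem pullback_stability (f : ℝ → ℝ)
    (hmm : Multimodal f) (hc3 : C3Nonflat f) (hrep : AllPeriodicRepelling f)
    (hex : TopExact f) :
    ∀ κ : ℝ, 0 < κ → ∃ δ : ℝ, 0 < δ ∧ ∀ x ∈ unitI, ∀ n : ℕ, 1 ≤ n →
      ∀ W : Set ℝ, IsPullback f n (ballI x δ) W → Metric.diam W < κ := by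
  intro κ hκ
  obtain ⟨δ, hδ, h⟩ := pullback_stability_general hmm.1 hmm.2.1 hex hκ
  exact ⟨δ, hδ, fun x _ n _ W hW => h x n W hW⟩

end
end

section
/- Let μ be a non-atomic Borel measure on I = [0,1] whose support equals I. Then μ is doubling if and only if there exists C > 1 such that for each x ∈ I and each ε > 0 with x ± ε ∈ I, one has C^{−1} μ((x, x+ε)) ≤ μ((x−ε, x)) ≤ C μ((x, x+ε)). -/
open Set MeasureTheory Metric Filter

noncomputable section

/-!
Comparing adjacent intervals of equal length propagates from small scales to all scales by
bisection: if each half of `(x, x + h)` is controlled by its left neighbour, both are controlled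
by `(x - h, x)`. So on a bounded interval only small scales matter.

At small scales, `(x - ε, x)` is the ball of radius `ε / 2` about its midpoint, and doubling it
twice covers `(x, x + ε)`. Conversely, the part of `B_I(x, 2r)` to the right of `B_I(x, r)` is, up
to null endpoints, an interval `(x + r, w)` with `w ≤ x + 2r`, whose reflection about `x + r` lies
in `B_I(x, r)`; likewise on the left.

The measure may be infinite, so the estimates avoid subtraction and division in `ℝ≥0∞`.
-/

open scoped NNReal ENNReal

/-- The doubling inequality with constant `C` for the balls of the subspace `s` of radius less
than `r₀`. Relative balls are written `s ∩ ball x r`, so that `μ` remains a measure on `X`. -/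
def DoublingWithin {X : Type*} [PseudoMetricSpace X] [MeasurableSpace X] (μ : Measure X)
    (s : Set X) (C : ℝ≥0) (r₀ : ℝ) : Prop :=
  ∀ x ∈ s, ∀ r : ℝ, 0 < r → r < r₀ → μ (s ∩ ball x (2 * r)) ≤ C * μ (s ∩ ball x r)

/-- Comparability, with constant `C`, of adjacent intervals of `s` of equal length less than `δ`.
The length `h` is signed, and the intervals are unordered, so that a single inequality expresses
both the comparison of the right interval with the left one and the opposite comparison. -/
def AdjacentComparableWithin (μ : Measure ℝ) (s : Set ℝ) (C : ℝ≥0) (δ : ℝ) : Prop :=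
  ∀ x h : ℝ, |h| < δ → x - h ∈ s → x + h ∈ s → μ (uIoo x (x + h)) ≤ C * μ (uIoo (x - h) x)

section Intervals

lemma uIoo_sub_add_eq_ball (x h : ℝ) : uIoo (x - h) (x + h) = ball x |h| := by
  rw [Real.ball_eq_Ioo]
  rcases le_total 0 h with hh | hh
  · rw [uIoo_of_le (by linarith), abs_of_nonneg hh]
  · rw [uIoo_of_ge (by linarith), abs_of_nonpos hh, sub_neg_eq_add, ← sub_eq_add_neg]

lemma uIcc_sub_add_eq_closedBall (x h : ℝ) : uIcc (x - h) (x + h) = closedBall x |h| := by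
  rw [Real.closedBall_eq_Icc]
  rcases le_total 0 h with hh | hh
  · rw [uIcc_of_le (by linarith), abs_of_nonneg hh]
  · rw [uIcc_of_ge (by linarith), abs_of_nonpos hh, sub_neg_eq_add, ← sub_eq_add_neg]

lemma exists_Icc_inter_uIcc_subset_uIcc {α : Type*} [LinearOrder α] {a b z : α}
    (hz : z ∈ Icc a b) (t : α) :
    ∃ w ∈ Icc a b ∩ uIcc z t, Icc a b ∩ uIcc z t ⊆ uIcc z w := by
  rcases lt_or_ge t a with hta | hat
  · refine ⟨a, ⟨left_mem_Icc.2 (hz.1.trans hz.2), mem_uIcc_of_ge hta.le hz.1⟩, ?_⟩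
    grind [mem_uIcc]
  rcases lt_or_ge b t with hbt | htb
  · refine ⟨b, ⟨right_mem_Icc.2 (hz.1.trans hz.2), mem_uIcc_of_le hz.2 hbt.le⟩, ?_⟩
    grind [mem_uIcc]
  · exact ⟨t, ⟨⟨hat, htb⟩, right_mem_uIcc⟩, inter_subset_right⟩

variable {α : Type*} [LinearOrder α] [MeasurableSpace α] (μ : Measure α) [NullSingletonClass μ]

lemma measure_uIcc_eq_measure_uIoo (u v : α) : μ (uIcc u v) = μ (uIoo u v) :=
  (measure_congr Ioo_ae_eq_Icc).symm

lemma measure_uIoo_le_add (u v w : α) : μ (uIoo u w) ≤ μ (uIoo u v) + μ (uIoo v w) := by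
  simp only [← measure_uIcc_eq_measure_uIoo μ]
  exact (measure_mono uIcc_subset_uIcc_union_uIcc).trans (measure_union_le _ _)

end Intervals

section Comparison

variable {μ : Measure ℝ} {s : Set ℝ} {C : ℝ≥0} {x h δ : ℝ}

lemma closedBall_subset_of_sub_mem_of_add_mem (hs : s.OrdConnected) (hl : x - h ∈ s)
    (hr : x + h ∈ s) : closedBall x |h| ⊆ s :=
  uIcc_sub_add_eq_closedBall x h ▸ hs.uIcc_subset hl hr

lemma forall_adjacentComparableWithin_iff_Ioo (hs : s.OrdConnected) :
    (∀ δ, AdjacentComparableWithin μ s C δ) ↔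
      ∀ x ∈ s, ∀ ε : ℝ, 0 < ε → x + ε ∈ s → x - ε ∈ s →
        μ (Ioo x (x + ε)) ≤ C * μ (Ioo (x - ε) x) ∧
        μ (Ioo (x - ε) x) ≤ C * μ (Ioo x (x + ε)) := by
  constructor
  · intro hμ x _ ε hε hr hl
    have hright := hμ (|ε| + 1) x ε (by linarith) hl hr
    have hleft := hμ (|-ε| + 1) x (-ε) (by linarith) (by rwa [sub_neg_eq_add])
      (by rwa [← sub_eq_add_neg])
    rw [uIoo_of_lt (by linarith), uIoo_of_lt (by linarith)] at hright
    rw [sub_neg_eq_add, ← sub_eq_add_neg, uIoo_of_gt (by linarith),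
      uIoo_of_gt (by linarith)] at hleft
    exact ⟨hright, hleft⟩
  · intro hμ δ x h _ hl hr
    have hx : x ∈ s :=
      closedBall_subset_of_sub_mem_of_add_mem hs hl hr (mem_closedBall_self (abs_nonneg h))
    rcases lt_trichotomy h 0 with hneg | rfl | hpos
    · rw [uIoo_of_gt (by linarith), uIoo_of_gt (by linarith)]
      simpa only [sub_neg_eq_add, ← sub_eq_add_neg] using
        (hμ x hx (-h) (neg_pos.2 hneg) hl (by rwa [sub_neg_eq_add])).2
    · simp
    · rw [uIoo_of_lt (by linarith), uIoo_of_lt (by linarith)]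
      exact (hμ x hx h hpos hr hl).1

lemma DoublingWithin.adjacentComparableWithin (hμ : DoublingWithin μ s C δ)
    (hs : s.OrdConnected) : AdjacentComparableWithin μ s (C ^ 2) δ := by
  intro x h hh hl hr
  rcases eq_or_ne h 0 with rfl | h0
  · simp
  have habs : 0 < |h| := abs_pos.2 h0
  have hhalf : |h / 2| = |h| / 2 := by rw [abs_div, abs_two]
  have hball_left : uIoo (x - h) x = ball (x - h / 2) |h / 2| := by
    rw [← uIoo_sub_add_eq_ball]; congr 1 <;> ring
  have hsub : closedBall x |h| ⊆ s := closedBall_subset_of_sub_mem_of_add_mem hs hl hr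
  have hc : x - h / 2 ∈ s := hsub <| by
    rw [mem_closedBall, Real.dist_eq, sub_sub_cancel_left, abs_neg]; linarith
  have hcover : uIoo x (x + h) ⊆ s ∩ ball (x - h / 2) (2 * (2 * |h / 2|)) := by
    have hball_right : uIoo x (x + h) = ball (x + h / 2) |h / 2| := by
      rw [← uIoo_sub_add_eq_ball]; congr 1 <;> ring
    rw [hball_right]
    refine subset_inter (ball_subset_closedBall.trans ?_ |>.trans hsub) (ball_subset_ball' ?_)
    · refine closedBall_subset_closedBall' ?_
      rw [Real.dist_eq, add_sub_cancel_left]; linarith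
    · rw [Real.dist_eq, add_sub_sub_cancel, add_halves]; linarith
  calc μ (uIoo x (x + h))
      ≤ μ (s ∩ ball (x - h / 2) (2 * (2 * |h / 2|))) := measure_mono hcover
    _ ≤ C * μ (s ∩ ball (x - h / 2) (2 * |h / 2|)) := hμ _ hc _ (by linarith) (by linarith)
    _ ≤ C * (C * μ (s ∩ ball (x - h / 2) |h / 2|)) := by
        gcongr; exact hμ _ hc _ (by linarith) (by linarith)
    _ ≤ C * (C * μ (uIoo (x - h) x)) := by rw [hball_left]; gcongr; exact inter_subset_right
    _ = (C ^ 2 : ℝ≥0) * μ (uIoo (x - h) x) := by push_cast; ring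

lemma AdjacentComparableWithin.scale_two_mul [NullSingletonClass μ]
    (hμ : AdjacentComparableWithin μ s C δ) (hs : s.OrdConnected) :
    AdjacentComparableWithin μ s (C + C ^ 2) (2 * δ) := by
  intro x h hh hl hr
  have hhalf : |h / 2| = |h| / 2 := by rw [abs_div, abs_two]
  have hsub : closedBall x |h| ⊆ s := closedBall_subset_of_sub_mem_of_add_mem hs hl hr
  have hmem : ∀ t : ℝ, |t| ≤ |h| → x + t ∈ s := fun t ht ↦ hsub <| by
    rwa [mem_closedBall, Real.dist_eq, add_sub_cancel_left]
  have hnear : μ (uIoo x (x + h / 2)) ≤ C * μ (uIoo (x - h) x) := by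
    have hsubset : uIoo (x - h / 2) x ⊆ uIoo (x - h) x := by grind [uIoo_eq_union]
    have hl_half : x - h / 2 ∈ s := by
      rw [sub_eq_add_neg]
      exact hmem _ (by rw [abs_neg]; linarith [abs_nonneg h])
    have hr_half : x + h / 2 ∈ s := hmem (h / 2) (by linarith [abs_nonneg h])
    exact (hμ x (h / 2) (by linarith) hl_half hr_half).trans (by gcongr)
  have hfar : μ (uIoo (x + h / 2) (x + h)) ≤ C * μ (uIoo x (x + h / 2)) := by
    have hx : x ∈ s := hsub (mem_closedBall_self (abs_nonneg h))
    simpa only [add_sub_cancel_right, add_assoc, add_halves, hx, hr, forall_const] using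
      hμ (x + h / 2) (h / 2) (by linarith)
  calc μ (uIoo x (x + h))
      ≤ μ (uIoo x (x + h / 2)) + μ (uIoo (x + h / 2) (x + h)) := measure_uIoo_le_add μ _ _ _
    _ ≤ C * μ (uIoo (x - h) x) + C * (C * μ (uIoo (x - h) x)) := by
        gcongr; exact hfar.trans (by gcongr)
    _ = (C + C ^ 2 : ℝ≥0) * μ (uIoo (x - h) x) := by push_cast; ring

lemma AdjacentComparableWithin.exists_scale_two_pow_mul [NullSingletonClass μ]
    (hμ : AdjacentComparableWithin μ s C δ) (hs : s.OrdConnected) (n : ℕ) :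
    ∃ K : ℝ≥0, AdjacentComparableWithin μ s K (2 ^ n * δ) := by
  induction n with
  | zero => exact ⟨C, by simpa using hμ⟩
  | succ n ih =>
    obtain ⟨K, hK⟩ := ih
    exact ⟨K + K ^ 2, by simpa only [pow_succ', mul_assoc] using hK.scale_two_mul hs⟩

lemma AdjacentComparableWithin.exists_forall_scale [NullSingletonClass μ]
    (hμ : AdjacentComparableWithin μ s C δ) (hδ : 0 < δ) (hs : s.OrdConnected)
    (hb : Bornology.IsBounded s) : ∃ K : ℝ≥0, ∀ R : ℝ, AdjacentComparableWithin μ s K R := by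
  obtain ⟨n, hn⟩ := pow_unbounded_of_one_lt (diam s / δ) (one_lt_two (α := ℝ))
  obtain ⟨K, hK⟩ := hμ.exists_scale_two_pow_mul hs n
  refine ⟨K, fun R x h _ hl hr ↦ hK x h ?_ hl hr⟩
  have hdist : dist (x + h) (x - h) = 2 * |h| := by
    rw [Real.dist_eq, add_sub_sub_cancel, ← two_mul, abs_mul, abs_two]
  have hdiam : dist (x + h) (x - h) ≤ diam s := dist_le_diam_of_mem hb hr hl
  have hlt : diam s < 2 ^ n * δ := (div_lt_iff₀ hδ).1 hn
  linarith [abs_nonneg h]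

lemma AdjacentComparableWithin.measure_outer_le [NullSingletonClass μ] {a b : ℝ}
    (hμ : AdjacentComparableWithin μ (Icc a b) C δ) (hx : x ∈ Icc a b) (hh : |h| < δ) :
    μ (Icc a b ∩ uIcc (x + h) (x + 2 * h)) ≤ C * μ (Icc a b ∩ ball x |h|) := by
  by_cases hz : x + h ∈ Icc a b
  · obtain ⟨w, ⟨hw, hwh⟩, hsub⟩ := exists_Icc_inter_uIcc_subset_uIcc hz (x + 2 * h)
    obtain ⟨k, rfl⟩ : ∃ k, w = x + h + k := ⟨w - (x + h), by ring⟩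
    have hk : 0 ≤ k ∧ k ≤ h ∨ h ≤ k ∧ k ≤ 0 := by grind [mem_uIcc]
    have hkh : |k| ≤ |h| := by grind
    have hreflect : x + h - k ∈ Icc a b := by grind
    have hinner : uIoo (x + h - k) (x + h) ⊆ Icc a b ∩ ball x |h| := by
      intro y hy
      rw [Real.ball_eq_Ioo]
      grind [uIoo_eq_union]
    calc μ (Icc a b ∩ uIcc (x + h) (x + 2 * h))
        ≤ μ (uIcc (x + h) (x + h + k)) := measure_mono hsub
      _ = μ (uIoo (x + h) (x + h + k)) := measure_uIcc_eq_measure_uIoo μ _ _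
      _ ≤ C * μ (uIoo (x + h - k) (x + h)) := hμ _ k (hkh.trans_lt hh) hreflect hw
      _ ≤ C * μ (Icc a b ∩ ball x |h|) := by gcongr
  · have hempty : Icc a b ∩ uIcc (x + h) (x + 2 * h) = ∅ := by grind [mem_uIcc]
    simp [hempty]

lemma AdjacentComparableWithin.doublingWithin [NullSingletonClass μ] {a b : ℝ}
    (hμ : AdjacentComparableWithin μ (Icc a b) C δ) :
    DoublingWithin μ (Icc a b) (1 + 2 * C) δ := by
  intro x hx r hr hrδ
  have hright : μ (Icc a b ∩ uIcc (x + r) (x + 2 * r)) ≤ C * μ (Icc a b ∩ ball x r) := by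
    simpa only [abs_of_pos hr] using hμ.measure_outer_le hx (h := r) (by rwa [abs_of_pos hr])
  have hleft : μ (Icc a b ∩ uIcc (x + -r) (x + 2 * -r)) ≤ C * μ (Icc a b ∩ ball x r) := by
    simpa only [abs_neg, abs_of_pos hr] using
      hμ.measure_outer_le hx (h := -r) (by rwa [abs_neg, abs_of_pos hr])
  have hcover : Icc a b ∩ ball x (2 * r) ⊆ Icc a b ∩ ball x r ∪
      (Icc a b ∩ uIcc (x + r) (x + 2 * r) ∪ Icc a b ∩ uIcc (x + -r) (x + 2 * -r)) := by
    intro y hy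
    simp only [Real.ball_eq_Ioo] at hy ⊢
    grind [mem_uIcc]
  calc μ (Icc a b ∩ ball x (2 * r))
      ≤ μ (Icc a b ∩ ball x r) + (μ (Icc a b ∩ uIcc (x + r) (x + 2 * r)) +
          μ (Icc a b ∩ uIcc (x + -r) (x + 2 * -r))) :=
        (measure_mono hcover).trans <| (measure_union_le _ _).trans <| by
          gcongr; exact measure_union_le _ _
    _ ≤ μ (Icc a b ∩ ball x r) +
          (C * μ (Icc a b ∩ ball x r) + C * μ (Icc a b ∩ ball x r)) := by gcongr
    _ = (1 + 2 * C : ℝ≥0) * μ (Icc a b ∩ ball x r) := by push_cast; ring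

end Comparison

theorem doubling_iff_adjacent_general (μ : Measure ℝ) [NullSingletonClass μ] (a b : ℝ) :
    (∃ C : ℝ≥0, ∃ r₀ : ℝ, 0 < r₀ ∧ DoublingWithin μ (Icc a b) C r₀) ↔
      ∃ C : ℝ≥0, ∀ x ∈ Icc a b, ∀ ε : ℝ, 0 < ε → x + ε ∈ Icc a b → x - ε ∈ Icc a b →
        μ (Ioo x (x + ε)) ≤ C * μ (Ioo (x - ε) x) ∧
        μ (Ioo (x - ε) x) ≤ C * μ (Ioo x (x + ε)) := by
  simp only [← forall_adjacentComparableWithin_iff_Ioo ordConnected_Icc]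
  constructor
  · rintro ⟨C, r₀, hr₀, hμ⟩
    exact (hμ.adjacentComparableWithin ordConnected_Icc).exists_forall_scale hr₀
      ordConnected_Icc (isBounded_Icc a b)
  · rintro ⟨C, hμ⟩
    exact ⟨1 + 2 * C, 1, one_pos, (hμ 1).doublingWithin⟩

lemma exists_lt_and_ofReal_iff_exists_nnreal {P : ℝ≥0∞ → Prop} (hP : Monotone P) (t : ℝ) :
    (∃ C : ℝ, t < C ∧ P (ENNReal.ofReal C)) ↔ ∃ C : ℝ≥0, P C := by
  constructor
  · rintro ⟨C, _, hC⟩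
    exact ⟨C.toNNReal, hC⟩
  · rintro ⟨C, hC⟩
    have hle : (C : ℝ≥0∞) ≤ ENNReal.ofReal (max C (t + 1)) :=
      ENNReal.ofReal_coe_nnreal.symm.trans_le (ENNReal.ofReal_le_ofReal (le_max_left _ _))
    exact ⟨max C (t + 1), lt_max_of_lt_right (lt_add_one t), hP hle hC⟩

lemma ballI_eq_unitI_inter_ball (x r : ℝ) : ballI x r = unitI ∩ ball x r := by
  ext y
  simp only [ballI, mem_ofPred_eq, mem_inter_iff, mem_ball', Real.dist_eq]

lemma doublingOn_iff_exists_doublingWithin (μ : Measure ℝ) :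
    DoublingOn μ ↔ ∃ C : ℝ≥0, ∃ r₀ : ℝ, 0 < r₀ ∧ DoublingWithin μ unitI C r₀ := by
  simp only [DoublingOn, DoublingWithin, ballI_eq_unitI_inter_ball]
  refine exists_lt_and_ofReal_iff_exists_nnreal (P := fun c ↦ ∃ r₀ : ℝ, 0 < r₀ ∧
    ∀ x ∈ unitI, ∀ r : ℝ, 0 < r → r < r₀ →
      μ (unitI ∩ ball x (2 * r)) ≤ c * μ (unitI ∩ ball x r)) ?_ 0
  rintro c d hcd ⟨r₀, hr₀, hμ⟩
  exact ⟨r₀, hr₀, fun x hx r hr hrr₀ ↦ (hμ x hx r hr hrr₀).trans (by gcongr)⟩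

lemma exists_one_lt_adjacent_Ioo_iff_exists_nnreal (μ : Measure ℝ) (s : Set ℝ) :
    (∃ C : ℝ, 1 < C ∧ ∀ x ∈ s, ∀ ε : ℝ, 0 < ε → x + ε ∈ s → x - ε ∈ s →
      μ (Ioo x (x + ε)) ≤ ENNReal.ofReal C * μ (Ioo (x - ε) x) ∧
      μ (Ioo (x - ε) x) ≤ ENNReal.ofReal C * μ (Ioo x (x + ε))) ↔
    ∃ C : ℝ≥0, ∀ x ∈ s, ∀ ε : ℝ, 0 < ε → x + ε ∈ s → x - ε ∈ s →
      μ (Ioo x (x + ε)) ≤ C * μ (Ioo (x - ε) x) ∧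
      μ (Ioo (x - ε) x) ≤ C * μ (Ioo x (x + ε)) := by
  refine exists_lt_and_ofReal_iff_exists_nnreal (P := fun c ↦ ∀ x ∈ s, ∀ ε : ℝ, 0 < ε →
    x + ε ∈ s → x - ε ∈ s → μ (Ioo x (x + ε)) ≤ c * μ (Ioo (x - ε) x) ∧
      μ (Ioo (x - ε) x) ≤ c * μ (Ioo x (x + ε))) ?_ 1
  intro c d hcd hμ x hx ε hε hr hl
  exact (hμ x hx ε hε hr hl).imp (·.trans (by gcongr)) (·.trans (by gcongr))

/-- **Lemma 2.4**: a non-atomic Borel measure with support equal to `I` is doubling if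
and only if measures of adjacent intervals of equal length are comparable. -/
theorem doubling_iff_adjacent (μ : Measure ℝ)
    (hna : ∀ x : ℝ, μ {x} = 0) (hz : μ unitIᶜ = 0)
    (hsupp : ∀ x ∈ unitI, ∀ r : ℝ, 0 < r → 0 < μ (ballI x r)) :
    DoublingOn μ ↔ ∃ C : ℝ, 1 < C ∧ ∀ x ∈ unitI, ∀ ε : ℝ, 0 < ε →
      x + ε ∈ unitI → x - ε ∈ unitI →
      μ (Set.Ioo x (x + ε)) ≤ ENNReal.ofReal C * μ (Set.Ioo (x - ε) x) ∧
      μ (Set.Ioo (x - ε) x) ≤ ENNReal.ofReal C * μ (Set.Ioo x (x + ε)) := by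
  have : NullSingletonClass μ := ⟨hna⟩
  rw [doublingOn_iff_exists_doublingWithin, exists_one_lt_adjacent_Ioo_iff_exists_nnreal]
  exact doubling_iff_adjacent_general μ 0 1

end
end

section
/- Let f: [0,1] → [0,1] be a multimodal map of class C^3 with non-flat critical points, with all periodic points hyperbolic repelling, and topologically exact, and let μ_f be its maximal entropy measure (the unique f-invariant Borel probability measure of maximal entropy; it is non-atomic, has full support, and has constant Jacobian exp(h_top(f))). If μ_f is doubling, then f has no recurrent critical points. -/
open Set MeasureTheory Metric Filter

noncomputable section

/-!
Let `h` be the distribution function of `μ`. In the coordinate `t = h x` the map `f` is piecewise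
affine with slope `± s`, and `s > 1` by topological exactness. Since `μ` is doubling, so is the
inverse `H` of `h`: the Euclidean length of the ball of radius `v` about `t` in the measure
coordinate at most multiplies by a constant when `v` doubles, and it grows by a definite factor when
`v` is multiplied by `s`. Let `R t v` be the logarithm of this length.

The map `f` sends the profile `v ↦ R (h y) v` to `v ↦ R (h (f y)) (s * v)`. If `η` is comparable
to the measure distance from `y` to the critical set, then for `v ≤ η` the two profiles have the
same increments up to errors summable over the scales, by bounded distortion; here only a bound of
`(log |f'|)'` by the inverse distance to the critical points is needed. For `v ≥ η` the second
profile is `ℓ` times the first up to a bounded error, where `ℓ > 1` is the order of the critical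
point.

For `θ < 1` consider the potential `Φ (h y) u = ∑ θ ^ k (r (k + 1) - r k)`, where
`r k = R (h y) (u * s ^ k)`. By the previous paragraph, passing from `(y, u)` to `(f y, s * u)`
loses at most a bounded multiple of `θ ^ N`, where `N` is the number of steps from `u` to the scale
`η`, while proximity to a critical point gives a gain of `(1 - 1 / ℓ) θ ^ N` times the potential at
the scale `η`. By reverse doubling the potential at small scales is as large as desired once `θ` is
close to `1`, so the gain wins. An endpoint of `[0, 1]` mapped to an interior point folds balls
without being critical; the loss there is paid by a correction term measuring the distance to the
boundary, which an orbit can acquire only near a critical point.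

Hence along any orbit the potential is nondecreasing up to a bounded error. At a critical point `c`,
however, `Φ (h c) u ≤ Φ (h (f c)) (s * u) / ℓ` up to a constant. If `c` is recurrent, an orbit
segment from `c` back close to `c` gives `Φ (h c) (r / s ^ n) ≤ Φ (h c) r / ℓ + C`, which is at
most `Φ (h c) r - 1`. Iterating contradicts `Φ ≥ 0`.
-/

/-! ### Discounted increments of a sequence -/

section DiscountedIncrement

/-- The discounted total increment `∑ θ ^ k (r (k + 1) - r k)` of a bounded sequence `r`, which
serves as a potential at a point once `r` is a profile of lengths over the scales. It is written
after summation by parts, which makes estimates uniform in `θ` visible. -/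
def discountedIncrement (θ : ℝ) (r : ℕ → ℝ) : ℝ := (1 - θ) * ∑' k, θ ^ k * r (k + 1) - r 0

variable {θ B : ℝ} {r g : ℕ → ℝ}

lemma summable_pow_mul_of_abs_le (h0 : 0 ≤ θ) (h1 : θ < 1) (hr : ∀ k, |r k| ≤ B) :
    Summable fun k => θ ^ k * r k := by
  refine Summable.of_norm_bounded (g := fun k => θ ^ k * B)
    ((summable_geometric_of_lt_one h0 h1).mul_right B) fun k => ?_
  rw [Real.norm_eq_abs, abs_mul, abs_of_nonneg (pow_nonneg h0 k)]
  exact mul_le_mul_of_nonneg_left (hr k) (pow_nonneg h0 k)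

lemma discountedIncrement_succ (h0 : 0 ≤ θ) (h1 : θ < 1) (hr : ∀ k, |r k| ≤ B) :
    discountedIncrement θ r = (r 1 - r 0) + θ * discountedIncrement θ (fun k => r (k + 1)) := by
  have hs := summable_pow_mul_of_abs_le h0 h1 (fun k => hr (k + 1))
  have hshift : ∑' k, θ ^ (k + 1) * r (k + 1 + 1) = θ * ∑' k, θ ^ k * r (k + 1 + 1) := by
    rw [← tsum_mul_left]
    exact tsum_congr fun k => by ring
  simp only [discountedIncrement, hs.tsum_eq_zero_add, hshift, zero_add, pow_zero, one_mul]
  ring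

lemma discountedIncrement_eq_sum_add (h0 : 0 ≤ θ) (h1 : θ < 1) (hr : ∀ k, |r k| ≤ B) (K : ℕ) :
    discountedIncrement θ r = ∑ k ∈ Finset.range K, θ ^ k * (r (k + 1) - r k)
      + θ ^ K * discountedIncrement θ (fun k => r (k + K)) := by
  induction K with
  | zero => simp
  | succ K ih =>
    rw [ih, discountedIncrement_succ h0 h1 (r := fun k => r (k + K)) (fun k => hr _),
      Finset.sum_range_succ]
    simp only [zero_add, add_right_comm _ 1 K, ← add_assoc, pow_succ]
    ring

/-- The bound does not deteriorate as `θ → 1`. -/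
lemma abs_discountedIncrement_sub_mul_le {C l : ℝ} (h0 : 0 ≤ θ) (h1 : θ < 1)
    (hr : ∀ k, |r k| ≤ B) (hg : ∀ k, |g k| ≤ B) (hC : ∀ k, |g k - l * r k| ≤ C) :
    |discountedIncrement θ g - l * discountedIncrement θ r| ≤ 2 * C := by
  have hsr := summable_pow_mul_of_abs_le h0 h1 (fun k => hr (k + 1))
  have hsg := summable_pow_mul_of_abs_le h0 h1 (fun k => hg (k + 1))
  have hp : 0 < 1 - θ := by linarith
  have hlin : discountedIncrement θ g - l * discountedIncrement θ r
      = (1 - θ) * ∑' k, θ ^ k * (g (k + 1) - l * r (k + 1)) - (g 0 - l * r 0) := by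
    have : ∑' k, θ ^ k * (g (k + 1) - l * r (k + 1))
        = ∑' k, θ ^ k * g (k + 1) - l * ∑' k, θ ^ k * r (k + 1) := by
      rw [← tsum_mul_left, ← hsg.tsum_sub (hsr.mul_left l)]
      exact tsum_congr fun k => by ring
    rw [this, discountedIncrement, discountedIncrement]
    ring
  have htsum : |∑' k, θ ^ k * (g (k + 1) - l * r (k + 1))| ≤ (1 - θ)⁻¹ * C := by
    refine tsum_of_norm_bounded (E := ℝ) ((hasSum_geometric_of_lt_one h0 h1).mul_right C)
      fun k => ?_
    rw [Real.norm_eq_abs, abs_mul, abs_of_nonneg (pow_nonneg h0 k)]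
    exact mul_le_mul_of_nonneg_left (hC _) (pow_nonneg h0 k)
  calc |discountedIncrement θ g - l * discountedIncrement θ r|
      ≤ |(1 - θ) * ∑' k, θ ^ k * (g (k + 1) - l * r (k + 1))| + |g 0 - l * r 0| := by
        rw [hlin]
        exact abs_sub _ _
    _ ≤ (1 - θ) * ((1 - θ)⁻¹ * C) + C := by
        rw [abs_mul, abs_of_pos hp]
        exact add_le_add (mul_le_mul_of_nonneg_left htsum hp.le) (hC 0)
    _ = 2 * C := by rw [mul_inv_cancel_left₀ hp.ne']; ring

lemma discountedIncrement_nonneg (h0 : 0 ≤ θ) (h1 : θ < 1) (hr : ∀ k, |r k| ≤ B)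
    (hm : Monotone r) : 0 ≤ discountedIncrement θ r := by
  have hp : 0 < 1 - θ := by linarith
  have hsum : (1 - θ)⁻¹ * r 0 ≤ ∑' k, θ ^ k * r (k + 1) :=
    hasSum_le (fun k => mul_le_mul_of_nonneg_left (hm (Nat.zero_le _)) (pow_nonneg h0 k))
      ((hasSum_geometric_of_lt_one h0 h1).mul_right (r 0))
      (summable_pow_mul_of_abs_le h0 h1 fun k => hr (k + 1)).hasSum
  rw [discountedIncrement, sub_nonneg]
  calc r 0 = (1 - θ) * ((1 - θ)⁻¹ * r 0) := (mul_inv_cancel_left₀ hp.ne' _).symm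
    _ ≤ _ := mul_le_mul_of_nonneg_left hsum hp.le

lemma pow_mul_sub_le_discountedIncrement (h0 : 0 ≤ θ) (h1 : θ < 1) (hr : ∀ k, |r k| ≤ B)
    (hm : Monotone r) (K : ℕ) : θ ^ K * (r K - r 0) ≤ discountedIncrement θ r := by
  have htail : 0 ≤ θ ^ K * discountedIncrement θ (fun k => r (k + K)) :=
    mul_nonneg (pow_nonneg h0 K) (discountedIncrement_nonneg h0 h1 (fun k => hr _)
      fun _ _ hab => hm (by lia))
  have hhead : θ ^ K * (r K - r 0) ≤ ∑ k ∈ Finset.range K, θ ^ k * (r (k + 1) - r k) := by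
    rw [← Finset.sum_range_sub, Finset.mul_sum]
    refine Finset.sum_le_sum fun k hk => ?_
    exact mul_le_mul_of_nonneg_right (pow_le_pow_of_le_one h0 h1.le (Finset.mem_range.1 hk).le)
      (sub_nonneg.2 (hm (Nat.le_succ k)))
  rw [discountedIncrement_eq_sum_add h0 h1 hr K]
  linarith

lemma sum_pow_mul_pow_sub_le {γ : ℝ} (hγ0 : 0 ≤ γ) (hγ : γ < θ) (K : ℕ) :
    ∑ k ∈ Finset.range K, θ ^ k * γ ^ (K - 1 - k) ≤ θ ^ K / (θ - γ) := by
  rw [le_div_iff₀ (sub_pos.2 hγ), geom_sum₂_mul]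
  exact sub_le_self _ (pow_nonneg hγ0 K)

/-- The errors before the index `K` decay geometrically away from `K`, so their discounted sum is
comparable to `θ ^ K`; if `l > 1`, the tail of `g` produces a gain of the same order. -/
lemma discountedIncrement_le_of_scaled_tail {γ C l : ℝ} (h1 : θ < 1) (hγ0 : 0 ≤ γ)
    (hγ : γ < θ) (hC : 0 ≤ C) (hl : 1 ≤ l) (hr : ∀ k, |r k| ≤ B) (hg : ∀ k, |g k| ≤ B) (K : ℕ)
    (hlow : ∀ k, k < K → r (k + 1) - r k ≤ g (k + 1) - g k + C * γ ^ (K - 1 - k))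
    (hhigh : ∀ k, K ≤ k → |g k - l * r k| ≤ C) :
    discountedIncrement θ r ≤ discountedIncrement θ g + θ ^ K * (C / (θ - γ) + 2 * C
      - (1 - 1 / l) * discountedIncrement θ (fun k => g (k + K))) := by
  have h0 : 0 ≤ θ := hγ0.trans hγ.le
  have hl0 : 0 < l := by linarith
  have htail : discountedIncrement θ (fun k => r (k + K))
      ≤ 1 / l * discountedIncrement θ (fun k => g (k + K)) + 2 * C := by
    have hcmp := abs_discountedIncrement_sub_mul_le (r := fun k => r (k + K))
      (g := fun k => g (k + K)) h0 h1 (fun k => hr _) (fun k => hg _)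
      (fun k => hhigh _ (Nat.le_add_left _ _))
    have hdiv : 2 * C / l ≤ 2 * C := div_le_self (by linarith) hl
    calc _ ≤ (discountedIncrement θ (fun k => g (k + K)) + 2 * C) / l := by
          rw [le_div_iff₀ hl0]
          linarith [(abs_le.1 hcmp).1]
      _ ≤ _ := by rw [add_div, one_div_mul_eq_div]; linarith
  have hhead : ∑ k ∈ Finset.range K, θ ^ k * (r (k + 1) - r k)
      ≤ ∑ k ∈ Finset.range K, θ ^ k * (g (k + 1) - g k) + θ ^ K * (C / (θ - γ)) := by
    calc _ ≤ ∑ k ∈ Finset.range K, (θ ^ k * (g (k + 1) - g k) + C * (θ ^ k * γ ^ (K - 1 - k))) :=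
          Finset.sum_le_sum fun k hk => by
            linarith [mul_le_mul_of_nonneg_left (hlow k (Finset.mem_range.1 hk)) (pow_nonneg h0 k)]
      _ ≤ _ := by
          rw [Finset.sum_add_distrib, ← Finset.mul_sum, mul_div_left_comm]
          exact add_le_add_right (mul_le_mul_of_nonneg_left (sum_pow_mul_pow_sub_le hγ0 hγ K) hC) _
  rw [discountedIncrement_eq_sum_add h0 h1 hr K, discountedIncrement_eq_sum_add h0 h1 hg K]
  linarith [mul_le_mul_of_nonneg_left htail (pow_nonneg h0 K)]

end DiscountedIncrement

/-! ### Doubling coordinates on the unit interval -/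

/-- A homeomorphism `h` of `[0,1]`, extended to `ℝ` by the constants `0` and `1`, together with its
inverse `H`, extended in the same way. Here `h` will be the distribution function of a measure. -/
structure UnitCoordinate (h H : ℝ → ℝ) : Prop where
  mono : Monotone h
  strictMonoOn : StrictMonoOn h unitI
  continuous : Continuous h
  eq_zero : ∀ x ≤ 0, h x = 0
  eq_one : ∀ x, 1 ≤ x → h x = 1
  inv_mem : ∀ t, H t ∈ unitI
  apply_inv : ∀ t, h (H t) = max 0 (min 1 t)

/-- Euclidean length of the ball of radius `v` about `t` in the coordinate with inverse `H`. -/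
def ballLength (H : ℝ → ℝ) (t v : ℝ) : ℝ := H (t + v) - H (t - v)

/-- A coordinate whose inverse is doubling: when the radius of a ball in the coordinate doubles, its
Euclidean length is multiplied by at most `K`. -/
structure DoublingCoordinate (h H : ℝ → ℝ) (K : ℝ) : Prop extends UnitCoordinate h H where
  ballLength_two_mul_le : ∀ t ∈ unitI, ∀ v > 0, ballLength H t (2 * v) ≤ K * ballLength H t v

/-- The measure with distribution function `h` is doubling with constant `C` on balls centred in
`[0,1]` and of radius less than `r₀`. -/
def DoublingBelow (h : ℝ → ℝ) (C r₀ : ℝ) : Prop :=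
  ∀ x ∈ unitI, ∀ r, 0 < r → r < r₀ → h (x + 2 * r) - h (x - 2 * r) ≤ C * (h (x + r) - h (x - r))

lemma zero_mem_unitI : (0 : ℝ) ∈ unitI := ⟨le_rfl, zero_le_one⟩

lemma one_mem_unitI : (1 : ℝ) ∈ unitI := ⟨zero_le_one, le_rfl⟩

lemma one_sub_mem_unitI {x : ℝ} (hx : x ∈ unitI) : 1 - x ∈ unitI :=
  ⟨by linarith [hx.2], by linarith [hx.1]⟩

namespace UnitCoordinate

variable {h H : ℝ → ℝ}

lemma lt_of_apply_lt (D : UnitCoordinate h H) {x y : ℝ} (hxy : h x < h y) : x < y :=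
  D.mono.reflect_lt hxy

lemma apply_inv_of_mem (D : UnitCoordinate h H) {t : ℝ} (ht : t ∈ unitI) : h (H t) = t := by
  rw [D.apply_inv, min_eq_right ht.2, max_eq_right ht.1]

lemma apply_mem (D : UnitCoordinate h H) (y : ℝ) : h y ∈ unitI :=
  ⟨by rw [← D.eq_zero (min y 0) (min_le_right _ _)]; exact D.mono (min_le_left _ _),
   by rw [← D.eq_one (max y 1) (le_max_right _ _)]; exact D.mono (le_max_left _ _)⟩

lemma inv_eq_of_apply_eq (D : UnitCoordinate h H) {t x : ℝ} (hx : x ∈ unitI)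
    (h_eq : h x = max 0 (min 1 t)) : H t = x :=
  D.strictMonoOn.injOn (D.inv_mem _) hx (by rw [D.apply_inv, h_eq])

lemma inv_apply (D : UnitCoordinate h H) {y : ℝ} (hy : y ∈ unitI) : H (h y) = y :=
  D.strictMonoOn.injOn (D.inv_mem _) hy (D.apply_inv_of_mem (D.apply_mem y))

lemma inv_of_nonpos (D : UnitCoordinate h H) {t : ℝ} (ht : t ≤ 0) : H t = 0 :=
  D.inv_eq_of_apply_eq zero_mem_unitI (by grind [D.eq_zero 0 le_rfl])

lemma inv_of_one_le (D : UnitCoordinate h H) {t : ℝ} (ht : 1 ≤ t) : H t = 1 :=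
  D.inv_eq_of_apply_eq one_mem_unitI (by grind [D.eq_one 1 le_rfl])

lemma inv_mono (D : UnitCoordinate h H) : Monotone H := fun a b hab => by
  rw [← D.strictMonoOn.le_iff_le (D.inv_mem a) (D.inv_mem b), D.apply_inv, D.apply_inv]
  exact max_le_max le_rfl (min_le_min le_rfl hab)

lemma inv_lt_inv (D : UnitCoordinate h H) {a b : ℝ} (hab : a < b) (hb : 0 < b) (ha : a < 1) :
    H a < H b := by
  refine D.lt_of_apply_lt ?_
  rw [D.apply_inv, D.apply_inv]
  grind

lemma apply_inv_sub_le (D : UnitCoordinate h H) {a b : ℝ} (hab : a ≤ b) :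
    h (H b) - h (H a) ≤ b - a := by
  rw [D.apply_inv, D.apply_inv]
  grind

lemma le_apply_inv_sub (D : UnitCoordinate h H) {t v : ℝ} (ht : t ∈ unitI) (h0 : 0 ≤ v)
    (h1 : v ≤ 1) : v ≤ h (H (t + v)) - h (H (t - v)) := by
  obtain ⟨ht0, ht1⟩ := ht
  rw [D.apply_inv, D.apply_inv]
  grind

lemma reflect (D : UnitCoordinate h H) :
    UnitCoordinate (fun x => 1 - h (1 - x)) (fun t => 1 - H (1 - t)) where
  mono _ _ hab := sub_le_sub_left (D.mono (sub_le_sub_left hab 1)) 1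
  strictMonoOn _ hx _ hy hxy := sub_lt_sub_left
    (D.strictMonoOn (one_sub_mem_unitI hy) (one_sub_mem_unitI hx) (sub_lt_sub_left hxy 1)) 1
  continuous := continuous_const.sub (D.continuous.comp (continuous_const.sub continuous_id))
  eq_zero x hx := by rw [D.eq_one _ (by linarith), sub_self]
  eq_one x hx := by rw [D.eq_zero _ (by linarith), sub_zero]
  inv_mem _ := one_sub_mem_unitI (D.inv_mem _)
  apply_inv t := by rw [sub_sub_cancel, D.apply_inv]; grind

lemma ballLength_pos (D : UnitCoordinate h H) {t v : ℝ} (ht : t ∈ unitI) (hv : 0 < v) :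
    0 < ballLength H t v :=
  sub_pos.2 (D.inv_lt_inv (by linarith) (by linarith [ht.1]) (by linarith [ht.2]))

lemma ballLength_le_one (D : UnitCoordinate h H) (t v : ℝ) : ballLength H t v ≤ 1 := by
  unfold ballLength
  linarith [(D.inv_mem (t + v)).2, (D.inv_mem (t - v)).1]

lemma ballLength_mono (D : UnitCoordinate h H) {t v t' v' : ℝ} (hleft : t' - v' ≤ t - v)
    (hright : t + v ≤ t' + v') : ballLength H t v ≤ ballLength H t' v' :=
  sub_le_sub (D.inv_mono hright) (D.inv_mono hleft)

lemma ballLength_of_one_le (D : UnitCoordinate h H) {t v : ℝ} (ht : t ∈ unitI) (hv : 1 ≤ v) :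
    ballLength H t v = 1 := by
  rw [ballLength, D.inv_of_one_le (by linarith [ht.1]), D.inv_of_nonpos (by linarith [ht.2]),
    sub_zero]

end UnitCoordinate

lemma exists_unitCoordinate {h : ℝ → ℝ} (mono : Monotone h) (strictMonoOn : StrictMonoOn h unitI)
    (continuous : Continuous h) (eq_zero : ∀ x ≤ 0, h x = 0) (eq_one : ∀ x, 1 ≤ x → h x = 1) :
    ∃ H, UnitCoordinate h H := by
  have hsurj (t : ℝ) : ∃ x ∈ unitI, h x = max 0 (min 1 t) := by
    have himage := intermediate_value_Icc (zero_le_one' ℝ) continuous.continuousOn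
    rw [eq_zero 0 le_rfl, eq_one 1 le_rfl] at himage
    exact himage ⟨le_max_left _ _, max_le zero_le_one (min_le_left _ _)⟩
  choose H inv_mem apply_inv using hsurj
  exact ⟨H, mono, strictMonoOn, continuous, eq_zero, eq_one, inv_mem, apply_inv⟩

/-! ### The inverse of a doubling distribution function is doubling -/

lemma DoublingBelow.reflect {h : ℝ → ℝ} {C r₀ : ℝ} (hd : DoublingBelow h C r₀) :
    DoublingBelow (fun x => 1 - h (1 - x)) C r₀ := fun x hx r h0 h1 => by
  have := hd (1 - x) (one_sub_mem_unitI hx) r h0 h1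
  simp only [← sub_sub, sub_sub_sub_cancel_left]
  simpa only [sub_add] using this

/-- Each dyadic block to the right of `[p, q]` has a definite proportion of the mass of `[p, q]`,
and `n` such blocks add up. -/
lemma DoublingBelow.nat_mul_sub_le {h : ℝ → ℝ} {C r₀ : ℝ} (hd : DoublingBelow h C r₀)
    (hm : Monotone h) (hC : 0 ≤ C) {p q : ℝ} (hp : 0 ≤ p) (hpq : p < q) (n : ℕ)
    (hq : q + 2 ^ (n + 1) * (q - p) ≤ 1) (hr₀ : 2 ^ n * (q - p) < r₀) :
    n * (h q - h p) ≤ C ^ 2 * (h (q + 2 ^ (n + 1) * (q - p)) - h q) := by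
  induction n with
  | zero =>
    rw [Nat.cast_zero, zero_mul]
    exact mul_nonneg (sq_nonneg C) (sub_nonneg.2 (hm (by norm_num; linarith)))
  | succ n ih =>
    set X : ℝ := 2 ^ (n + 1) * (q - p) with hX
    have e_succ : (2 : ℝ) ^ (n + 1 + 1) * (q - p) = 2 * X := by rw [hX]; ring
    have e_pred : (2 : ℝ) ^ n * (q - p) = X / 2 := by rw [hX]; ring
    rw [e_succ] at hq ⊢
    rw [e_pred] at ih
    have hX2 : 2 * (q - p) ≤ X := by
      have : (1 : ℝ) ≤ 2 ^ n := one_le_pow₀ one_le_two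
      rw [hX, pow_succ]
      nlinarith
    have hcenter : q + 3 / 2 * X ∈ unitI := ⟨by linarith, by linarith⟩
    have hblock : h q - h p ≤ C ^ 2 * (h (q + 2 * X) - h (q + X)) := by
      calc h q - h p ≤ h (q + 3 / 2 * X + 2 * X) - h (q + 3 / 2 * X - 2 * X) :=
            sub_le_sub (hm (by linarith)) (hm (by linarith))
        _ ≤ C * (h (q + 3 / 2 * X + X) - h (q + 3 / 2 * X - X)) :=
            hd _ hcenter X (by linarith) (by linarith)
        _ ≤ C * (C * (h (q + 3 / 2 * X + X / 2) - h (q + 3 / 2 * X - X / 2))) := by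
            have := hd _ hcenter (X / 2) (by linarith) (by linarith)
            rw [mul_div_cancel₀ X two_ne_zero] at this
            exact mul_le_mul_of_nonneg_left this hC
        _ = C ^ 2 * (h (q + 2 * X) - h (q + X)) := by ring_nf
    push_cast
    linarith [ih (by linarith) (by linarith)]

namespace UnitCoordinate

variable {h H : ℝ → ℝ} {C r₀ : ℝ} {N : ℕ} {t v : ℝ}

/-- Otherwise the `N` dyadic blocks to the right of the ball would carry more mass than `v`. -/
lemma inv_add_two_mul_le (D : UnitCoordinate h H) (hd : DoublingBelow h C r₀) (hC : 0 ≤ C)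
    (hN : C ^ 2 < N) (ht : t ∈ unitI) (h0 : 0 < v) (h1 : v ≤ 1)
    (hr₀ : 2 ^ N * ballLength H t v < r₀) :
    H (t + 2 * v) ≤ H (t + v) + 2 ^ (N + 1) * ballLength H t v := by
  by_contra! hlt
  have hpq : H (t - v) < H (t + v) := sub_pos.1 (D.ballLength_pos ht h0)
  have hblocks := hd.nat_mul_sub_le D.mono hC (D.inv_mem (t - v)).1 hpq N
    (hlt.le.trans (D.inv_mem _).2) hr₀
  have hmass : h (H (t + v) + 2 ^ (N + 1) * ballLength H t v) - h (H (t + v)) ≤ v := by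
    linarith [D.mono hlt.le, D.apply_inv_sub_le (a := t + v) (b := t + 2 * v) (by linarith)]
  have hNv : N * v ≤ C ^ 2 * v :=
    (mul_le_mul_of_nonneg_left (D.le_apply_inv_sub ht h0.le h1) (Nat.cast_nonneg _)).trans
      (hblocks.trans (mul_le_mul_of_nonneg_left hmass (sq_nonneg C)))
  exact absurd hNv (not_le.2 (mul_lt_mul_of_pos_right hN h0))

lemma ballLength_reflect : ballLength (fun t => 1 - H (1 - t)) (1 - t) v = ballLength H t v := by
  unfold ballLength
  ring_nf

lemma ballLength_two_mul_le (D : UnitCoordinate h H) (hd : DoublingBelow h C r₀) (hC : 0 ≤ C)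
    (hN : C ^ 2 < N) (ht : t ∈ unitI) (h0 : 0 < v) (h1 : v ≤ 1)
    (hr₀ : 2 ^ N * ballLength H t v < r₀) :
    ballLength H t (2 * v) ≤ (1 + 2 * 2 ^ (N + 1)) * ballLength H t v := by
  have hright := D.inv_add_two_mul_le hd hC hN ht h0 h1 hr₀
  have hleft := D.reflect.inv_add_two_mul_le hd.reflect hC hN (one_sub_mem_unitI ht) h0 h1
    (by rwa [ballLength_reflect])
  rw [ballLength_reflect] at hleft
  simp only [← sub_sub, sub_sub_cancel] at hleft
  unfold ballLength at hleft hright ⊢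
  linarith

lemma exists_doublingCoordinate (D : UnitCoordinate h H) (hd : DoublingBelow h C r₀) (hC : 0 ≤ C)
    (hr₀ : 0 < r₀) : ∃ K, DoublingCoordinate h H K := by
  obtain ⟨N, hN⟩ := exists_nat_gt (C ^ 2)
  refine ⟨max (1 + 2 * 2 ^ (N + 1)) (2 ^ N / r₀), D, fun t ht v hv => ?_⟩
  rcases lt_or_ge 1 v with h1 | h1
  · rw [D.ballLength_of_one_le ht (by linarith), D.ballLength_of_one_le ht h1.le, mul_one]
    refine le_max_of_le_left ?_
    have : (0 : ℝ) < 2 ^ (N + 1) := by positivity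
    linarith
  rw [max_mul_of_nonneg _ _ (D.ballLength_pos ht hv).le]
  rcases lt_or_ge (2 ^ N * ballLength H t v) r₀ with hl | hl
  · exact le_max_of_le_left (D.ballLength_two_mul_le hd hC hN ht hv h1 hl)
  · refine le_max_of_le_right ((D.ballLength_le_one _ _).trans ?_)
    rwa [div_mul_eq_mul_div, one_le_div hr₀]

end UnitCoordinate

namespace DoublingCoordinate

variable {h H : ℝ → ℝ} {K : ℝ}

lemma one_le (D : DoublingCoordinate h H K) : 1 ≤ K := by
  have := D.ballLength_two_mul_le 1 one_mem_unitI 1 one_pos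
  rwa [D.ballLength_of_one_le one_mem_unitI le_rfl,
    D.ballLength_of_one_le one_mem_unitI (by norm_num), mul_one] at this

lemma ballLength_two_pow_mul_le (D : DoublingCoordinate h H K) {t v : ℝ} (ht : t ∈ unitI)
    (hv : 0 < v) (n : ℕ) : ballLength H t (2 ^ n * v) ≤ K ^ n * ballLength H t v := by
  induction n with
  | zero => simp
  | succ n ih =>
    calc ballLength H t (2 ^ (n + 1) * v) = ballLength H t (2 * (2 ^ n * v)) := by
          rw [pow_succ', mul_assoc]
      _ ≤ K * ballLength H t (2 ^ n * v) := D.ballLength_two_mul_le t ht _ (by positivity)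
      _ ≤ K * (K ^ n * ballLength H t v) :=
          mul_le_mul_of_nonneg_left ih (zero_le_one.trans D.one_le)
      _ = K ^ (n + 1) * ballLength H t v := by ring

lemma ballLength_le_of_abs_sub_le (D : DoublingCoordinate h H K) {t v t' v' : ℝ}
    (ht' : t' ∈ unitI) (hv' : 0 < v') (n : ℕ) (hball : |t - t'| + v ≤ 2 ^ n * v') :
    ballLength H t v ≤ K ^ n * ballLength H t' v' :=
  have hdist := abs_le.1 (le_refl |t - t'|)
  (D.ballLength_mono (by linarith) (by linarith)).trans (D.ballLength_two_pow_mul_le ht' hv' n)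

lemma ballLength_le_mul_abs_sub (D : DoublingCoordinate h H K) {t v a b : ℝ} (ha : a ∈ unitI)
    (hb : b ∈ unitI) (hab : a ≠ b) (n : ℕ)
    (hball : |t - (a + b) / 2| + v ≤ 2 ^ n * (|b - a| / 2)) :
    ballLength H t v ≤ K ^ n * |H b - H a| := by
  wlog hlt : a < b generalizing a b
  · rw [abs_sub_comm]
    refine this hb ha hab.symm ?_ (lt_of_le_of_ne (not_lt.1 hlt) hab.symm)
    rwa [add_comm b, abs_sub_comm a]
  rw [abs_of_pos (sub_pos.2 hlt)] at hball
  calc ballLength H t v ≤ K ^ n * ballLength H ((a + b) / 2) ((b - a) / 2) :=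
        D.ballLength_le_of_abs_sub_le ⟨by linarith [ha.1, hb.1], by linarith [ha.2, hb.2]⟩
          (by linarith) n hball
    _ = K ^ n * |H b - H a| := by
        rw [abs_of_nonneg (sub_nonneg.2 (D.inv_mono hlt.le)), ballLength]
        ring_nf

lemma abs_sub_le_ballLength (D : DoublingCoordinate h H K) {x z : ℝ} (hx : x ∈ unitI)
    (hz : z ∈ unitI) : |z - x| ≤ ballLength H (h x) |h z - h x| := by
  have hdist := abs_le.1 (le_refl |h z - h x|)
  have hzr := D.inv_mono (show h z ≤ h x + |h z - h x| by linarith)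
  have hzl := D.inv_mono (show h x - |h z - h x| ≤ h z by linarith)
  have hxr := D.inv_mono (show h x ≤ h x + |h z - h x| by linarith [abs_nonneg (h z - h x)])
  have hxl := D.inv_mono (show h x - |h z - h x| ≤ h x by linarith [abs_nonneg (h z - h x)])
  rw [D.inv_apply hz] at hzr hzl
  rw [D.inv_apply hx] at hxr hxl
  exact abs_le.2 ⟨by unfold ballLength; linarith, by unfold ballLength; linarith⟩

lemma ballLength_le_sq_mul_abs_sub (D : DoublingCoordinate h H K) {x z : ℝ} (hx : x ∈ unitI)
    (hz : z ∈ unitI) (hne : z ≠ x) : ballLength H (h x) |h z - h x| ≤ K ^ 2 * |z - x| := by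
  have := D.ballLength_le_mul_abs_sub (t := h x) (v := |h z - h x|) (D.apply_mem x) (D.apply_mem z)
    (fun e => hne (D.strictMonoOn.injOn hz hx e.symm)) 2 (by
      rw [show h x - (h x + h z) / 2 = -((h z - h x) / 2) by ring, abs_neg, abs_div, abs_two]
      linarith [abs_nonneg (h z - h x)])
  rwa [D.inv_apply hx, D.inv_apply hz] at this

lemma exists_ballLength_mul_le (D : DoublingCoordinate h H K) (s : ℝ) :
    ∃ K' ≥ 1, ∀ t ∈ unitI, ∀ v > 0, ballLength H t (s * v) ≤ K' * ballLength H t v := by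
  obtain ⟨n, hn⟩ := pow_unbounded_of_one_lt s one_lt_two
  refine ⟨K ^ n, one_le_pow₀ D.one_le, fun t ht v hv => D.ballLength_le_of_abs_sub_le ht hv n ?_⟩
  rw [sub_self, abs_zero, zero_add]
  exact mul_le_mul_of_nonneg_right hn.le hv.le

lemma exists_le_ballLength (D : DoublingCoordinate h H K) {v₁ : ℝ} (hv₁ : 0 < v₁) :
    ∃ c > 0, ∀ t ∈ unitI, ∀ v, v₁ ≤ v → c ≤ ballLength H t v := by
  obtain ⟨K', hK', hmul⟩ := D.exists_ballLength_mul_le (1 / v₁)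
  refine ⟨K'⁻¹, by positivity, fun t ht v hv => ?_⟩
  have := hmul t ht v (hv₁.trans_le hv)
  rwa [D.ballLength_of_one_le ht (by rwa [one_div_mul_eq_div, one_le_div hv₁]),
    ← inv_le_iff_one_le_mul₀' (by positivity)] at this

/-- The part of the larger ball outside the smaller one is comparable to the smaller one, as soon
as one side of it stays inside `[0,1]`. -/
lemma exists_reverse_doubling (D : DoublingCoordinate h H K) {s : ℝ} (hs : 1 < s) :
    ∃ κ > 0, ∀ t ∈ unitI, ∀ v > 0, v * s ≤ 1 / 2 →
      (1 + κ) * ballLength H t v ≤ ballLength H t (v * s) := by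
  obtain ⟨n, hn⟩ := pow_unbounded_of_one_lt ((1 + (1 + s) / 2) / ((s - 1) / 2)) one_lt_two
  rw [div_lt_iff₀ (by linarith)] at hn
  have hKn : 0 < K ^ n := pow_pos (zero_lt_one.trans_le D.one_le) n
  refine ⟨(K ^ n)⁻¹, by positivity, fun t ht v hv hsv => ?_⟩
  have hvs : v < v * s := lt_mul_of_one_lt_right hv hs
  have hside (τ : ℝ) (hτ : |τ| = 1) (h_v : t + τ * v ∈ unitI) (h_vs : t + τ * (v * s) ∈ unitI) :
      ballLength H t v ≤ K ^ n * |H (t + τ * (v * s)) - H (t + τ * v)| := by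
    refine D.ballLength_le_mul_abs_sub h_v h_vs
      (fun e => hvs.ne (mul_left_cancel₀ (by rintro rfl; simp at hτ) (add_left_cancel e))) n ?_
    rw [show t - (t + τ * v + (t + τ * (v * s))) / 2 = -(τ * ((v + v * s) / 2)) by ring,
      show t + τ * (v * s) - (t + τ * v) = τ * (v * s - v) by ring, abs_neg, abs_mul, abs_mul, hτ,
      abs_of_pos (by linarith), abs_of_pos (by linarith)]
    linarith [mul_lt_mul_of_pos_right hn hv]
  have houter : ballLength H t v ≤ K ^ n * (ballLength H t (v * s) - ballLength H t v) := by
    have hl := D.inv_mono (show t - v * s ≤ t - v by linarith)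
    have hr := D.inv_mono (show t + v ≤ t + v * s by linarith)
    rcases le_total t (1 / 2) with ht2 | ht2
    · refine (hside 1 abs_one ?_ ?_).trans (mul_le_mul_of_nonneg_left ?_ hKn.le)
      · exact ⟨by linarith [ht.1], by linarith⟩
      · exact ⟨by linarith [ht.1], by linarith⟩
      · rw [one_mul, one_mul, abs_of_nonneg (by linarith), ballLength, ballLength]
        linarith
    · refine (hside (-1) (by simp) ?_ ?_).trans (mul_le_mul_of_nonneg_left ?_ hKn.le)
      · exact ⟨by linarith, by linarith [ht.2]⟩
      · exact ⟨by linarith, by linarith [ht.2]⟩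
      · rw [neg_one_mul, neg_one_mul, ← sub_eq_add_neg, ← sub_eq_add_neg,
          abs_of_nonpos (by linarith), ballLength, ballLength]
        linarith
  linarith [(inv_mul_le_iff₀ hKn).2 houter]

lemma exists_pow_mul_ballLength_le (D : DoublingCoordinate h H K) {s : ℝ} (hs : 1 < s) :
    ∃ κ > 0, ∀ t ∈ unitI, ∀ v > 0, ∀ j : ℕ, v * s ^ j ≤ 1 / 2 →
      (1 + κ) ^ j * ballLength H t v ≤ ballLength H t (v * s ^ j) := by
  obtain ⟨κ, hκ, hgrow⟩ := D.exists_reverse_doubling hs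
  refine ⟨κ, hκ, fun t ht v hv j => ?_⟩
  induction j with
  | zero => simp
  | succ j ih =>
    intro hj
    rw [pow_succ s, ← mul_assoc] at hj ⊢
    have hvj : 0 < v * s ^ j := by positivity
    calc (1 + κ) ^ (j + 1) * ballLength H t v = (1 + κ) * ((1 + κ) ^ j * ballLength H t v) := by
          ring
      _ ≤ (1 + κ) * ballLength H t (v * s ^ j) :=
          mul_le_mul_of_nonneg_left (ih (by nlinarith)) (by linarith)
      _ ≤ ballLength H t (v * s ^ j * s) := hgrow t ht _ hvj hj

lemma exists_ballLength_lt (D : DoublingCoordinate h H K) {δ : ℝ} (hδ : 0 < δ) :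
    ∃ v₁ > 0, ∀ t ∈ unitI, ∀ v ≤ v₁, ballLength H t v < δ := by
  obtain ⟨κ, hκ, hgrow⟩ := D.exists_pow_mul_ballLength_le one_lt_two
  obtain ⟨j, hj⟩ := pow_unbounded_of_one_lt (1 / δ) (show 1 < 1 + κ by linarith)
  refine ⟨1 / 2 / 2 ^ j, by positivity, fun t ht v hv => ?_⟩
  have hsmall := hgrow t ht (1 / 2 / 2 ^ j) (by positivity) j
    (div_mul_cancel₀ _ (pow_ne_zero j two_ne_zero)).le
  calc ballLength H t v ≤ ballLength H t (1 / 2 / 2 ^ j) :=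
        D.ballLength_mono (by linarith) (by linarith)
    _ ≤ 1 / (1 + κ) ^ j := by
        rw [le_div_iff₀' (by positivity)]
        exact hsmall.trans (D.ballLength_le_one _ _)
    _ < δ := by
        rw [div_lt_iff₀ (by positivity), ← div_lt_iff₀' hδ]
        exact hj

end DoublingCoordinate

/-! ### The distribution function of a doubling measure -/

section DistributionFunction

open ProbabilityTheory

variable {μ : Measure ℝ} [IsProbabilityMeasure μ]

lemma cdf_eq_one_of_one_le (hI : μ unitIᶜ = 0) {x : ℝ} (hx : 1 ≤ x) : cdf μ x = 1 := by
  have hIoi : μ (Iic x)ᶜ = 0 :=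
    measure_mono_null (compl_subset_compl.2 fun y hy => hy.2.trans hx) hI
  rw [cdf_eq_real, measureReal_def, (prob_compl_eq_zero_iff measurableSet_Iic).1 hIoi,
    ENNReal.toReal_one]

variable [NullSingletonClass μ]

lemma leftLim_cdf (x : ℝ) : Function.leftLim (cdf μ) x = cdf μ x := by
  have h := (cdf μ).measure_singleton x
  rw [measure_cdf, measure_singleton, eq_comm, ENNReal.ofReal_eq_zero] at h
  exact le_antisymm ((cdf μ).mono.leftLim_le le_rfl) (sub_nonpos.1 h)

lemma continuous_cdf : Continuous (cdf μ) :=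
  continuous_iff_continuousAt.2 fun x => by
    rw [(cdf μ).mono.continuousAt_iff_leftLim_eq_rightLim, (cdf μ).rightLim_eq, leftLim_cdf]

lemma measure_Icc_eq_cdf_sub (y z : ℝ) : μ (Icc y z) = ENNReal.ofReal (cdf μ z - cdf μ y) := by
  have h := (cdf μ).measure_Icc y z
  rwa [measure_cdf, leftLim_cdf] at h

lemma measure_Ioo_eq_cdf_sub (y z : ℝ) : μ (Ioo y z) = ENNReal.ofReal (cdf μ z - cdf μ y) := by
  rw [Ioo_ae_eq_Icc.measure_eq, measure_Icc_eq_cdf_sub]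

lemma measure_ballI_eq_cdf_sub (hI : μ unitIᶜ = 0) (x r : ℝ) :
    μ (ballI x r) = ENNReal.ofReal (cdf μ (x + r) - cdf μ (x - r)) := by
  have hball : ballI x r = Ioo (x - r) (x + r) ∩ unitI := by
    ext y
    simp only [ballI, mem_ofPred_eq, mem_inter_iff, mem_Ioo, abs_lt]
    grind
  rw [hball, measure_inter_conull hI, measure_Ioo_eq_cdf_sub]

lemma cdf_eq_zero_of_nonpos (hI : μ unitIᶜ = 0) {x : ℝ} (hx : x ≤ 0) : cdf μ x = 0 := by
  have hIio : μ (Iio x) = 0 :=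
    measure_mono_null (t := unitIᶜ) (fun y hy hyI => hyI.1.not_gt (hy.trans_le hx)) hI
  rw [cdf_eq_real, measureReal_def, ← Iio_ae_eq_Iic.measure_eq, hIio, ENNReal.toReal_zero]

lemma strictMonoOn_cdf (hI : μ unitIᶜ = 0) (hpos : ∀ x ∈ unitI, ∀ r > 0, 0 < μ (ballI x r)) :
    StrictMonoOn (cdf μ) unitI := fun a ha b hb hab => by
  have h := hpos ((a + b) / 2) ⟨by linarith [ha.1, hb.1], by linarith [ha.2, hb.2]⟩ ((b - a) / 2)
    (by linarith)
  rw [measure_ballI_eq_cdf_sub hI, ENNReal.ofReal_pos, sub_pos] at h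
  ring_nf at h
  exact h

lemma exists_doublingBelow_cdf (hI : μ unitIᶜ = 0) (hd : DoublingOn μ) :
    ∃ C ≥ 0, ∃ r₀ > 0, DoublingBelow (cdf μ) C r₀ := by
  obtain ⟨C, hC, r₀, hr₀, hd⟩ := hd
  refine ⟨C, hC.le, r₀, hr₀, fun x hx r h0 h1 => ?_⟩
  have h := hd x hx r h0 h1
  rwa [measure_ballI_eq_cdf_sub hI, measure_ballI_eq_cdf_sub hI, ← ENNReal.ofReal_mul hC.le,
    ENNReal.ofReal_le_ofReal_iff] at h
  exact mul_nonneg hC.le (sub_nonneg.2 ((cdf μ).mono (by linarith)))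

lemma exists_doublingCoordinate_cdf (hI : μ unitIᶜ = 0)
    (hpos : ∀ x ∈ unitI, ∀ r > 0, 0 < μ (ballI x r)) (hd : DoublingOn μ) :
    ∃ H K, DoublingCoordinate (cdf μ) H K := by
  obtain ⟨H, D⟩ := exists_unitCoordinate (cdf μ).mono (strictMonoOn_cdf hI hpos) continuous_cdf
    (fun _ => cdf_eq_zero_of_nonpos hI) (fun _ => cdf_eq_one_of_one_le hI)
  obtain ⟨C, hC, r₀, hr₀, hd⟩ := exists_doublingBelow_cdf hI hd
  exact ⟨H, D.exists_doublingCoordinate hd hC hr₀⟩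

end DistributionFunction

/-! ### Monotone branches -/

lemma injOn_Icc_of_disjoint_Crit {f : ℝ → ℝ} (hf : ContinuousOn f unitI) {y z : ℝ}
    (hsub : Icc y z ⊆ unitI) (hc : Disjoint (Ioo y z) (Crit f)) : InjOn f (Icc y z) := by
  have hlt {a b : ℝ} (ha : a ∈ Icc y z) (hb : b ∈ Icc y z) (hab : a < b) : f a ≠ f b := by
    intro hfab
    have hIcc : Icc a b ⊆ unitI := (Icc_subset_Icc ha.1 hb.2).trans hsub
    obtain ⟨c, hc1, hc2⟩ := exists_deriv_eq_zero hab (hf.mono hIcc) hfab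
    exact hc.le_bot ⟨⟨ha.1.trans_lt hc1.1, hc1.2.trans_le hb.2⟩,
      hIcc (Ioo_subset_Icc_self hc1), hc2⟩
  intro a ha b hb hab
  rcases lt_trichotomy a b with h | h | h
  · exact absurd hab (hlt ha hb h)
  · exact h
  · exact absurd hab.symm (hlt hb ha h)

/-- The map `f` is affine with slope `σ` on `S` when seen in the coordinate `h`. -/
def HasSlopeOn (h f : ℝ → ℝ) (σ : ℝ) (S : Set ℝ) : Prop :=
  ∀ a ∈ S, ∀ b ∈ S, h (f b) - h (f a) = σ * (h b - h a)

lemma hasSlopeOn_of_le {h f : ℝ → ℝ} {σ : ℝ} {S : Set ℝ}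
    (hle : ∀ a ∈ S, ∀ b ∈ S, a ≤ b → h (f b) - h (f a) = σ * (h b - h a)) :
    HasSlopeOn h f σ S := fun a ha b hb => by
  rcases le_total a b with hab | hab
  · exact hle a ha b hb hab
  · linear_combination -hle b hb a ha hab

section ConstantJacobian

open ProbabilityTheory

variable {f : ℝ → ℝ} {μ : Measure ℝ} [IsProbabilityMeasure μ] [NullSingletonClass μ] {s : NNReal}

lemma cdf_sub_eq_of_image_eq
    (hjac : ∀ A, MeasurableSet A → A ⊆ unitI → InjOn f A → μ (f '' A) = s * μ A) {a b u v : ℝ}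
    (hab : a ≤ b) (huv : u ≤ v) (hsub : Icc a b ⊆ unitI) (hinj : InjOn f (Icc a b))
    (himage : f '' Icc a b = Icc u v) : cdf μ v - cdf μ u = s * (cdf μ b - cdf μ a) := by
  have h := hjac _ measurableSet_Icc hsub hinj
  rwa [himage, measure_Icc_eq_cdf_sub, measure_Icc_eq_cdf_sub, ← ENNReal.ofReal_coe_nnreal,
    ← ENNReal.ofReal_mul s.coe_nonneg, ENNReal.ofReal_eq_ofReal_iff] at h
  · exact sub_nonneg.2 ((cdf μ).mono huv)
  · exact mul_nonneg s.coe_nonneg (sub_nonneg.2 ((cdf μ).mono hab))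

lemma exists_hasSlopeOn_cdf
    (hjac : ∀ A, MeasurableSet A → A ⊆ unitI → InjOn f A → μ (f '' A) = s * μ A)
    (hf : ContinuousOn f unitI) {y z : ℝ} (hyz : y ≤ z) (hsub : Icc y z ⊆ unitI)
    (hc : Disjoint (Ioo y z) (Crit f)) :
    ∃ σ : ℝ, |σ| = s ∧ HasSlopeOn (cdf μ) f σ (Icc y z) := by
  have hinj := injOn_Icc_of_disjoint_Crit hf hsub hc
  have hsubset {a b : ℝ} (ha : a ∈ Icc y z) (hb : b ∈ Icc y z) := Icc_subset_Icc ha.1 hb.2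
  rcases (hf.mono hsub).strictMonoOn_of_injOn_Icc' hyz hinj with hm | hm
  · refine ⟨s, abs_of_nonneg s.coe_nonneg, hasSlopeOn_of_le fun a ha b hb hab => ?_⟩
    have habyz := hsubset ha hb
    refine cdf_sub_eq_of_image_eq hjac hab (hm.monotoneOn ha hb hab) (habyz.trans hsub)
      (hinj.mono habyz) ?_
    exact subset_antisymm (hm.monotoneOn.mono habyz).image_Icc_subset
      (intermediate_value_Icc hab (hf.mono (habyz.trans hsub)))
  · refine ⟨-s, by rw [abs_neg, abs_of_nonneg s.coe_nonneg],
      hasSlopeOn_of_le fun a ha b hb hab => ?_⟩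
    have habyz := hsubset ha hb
    rw [neg_mul, ← cdf_sub_eq_of_image_eq hjac hab (hm.antitoneOn ha hb hab) (habyz.trans hsub)
      (hinj.mono habyz), neg_sub]
    exact subset_antisymm (hm.antitoneOn.mono habyz).image_Icc_subset
      (intermediate_value_Icc' hab (hf.mono (habyz.trans hsub)))

end ConstantJacobian

/-! ### Non-flat critical points -/

lemma eventually_mul_abs_sub_le_of_hasDerivAt {φ : ℝ → ℝ} {c d : ℝ} (hφ : HasDerivAt φ d c)
    (hd : d ≠ 0) : ∃ a > 0, ∃ A > 0, ∀ᶠ z in nhds c,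
      a * |z - c| ≤ |φ z - φ c| ∧ |φ z - φ c| ≤ A * |z - c| := by
  have h := (hasDerivAt_iff_isLittleO.1 hφ).def (c := |d| / 2) (by positivity)
  refine ⟨|d| / 2, by positivity, 2 * |d|, by positivity, h.mono fun z hz => ?_⟩
  rw [Real.norm_eq_abs, Real.norm_eq_abs, smul_eq_mul] at hz
  have h_mul : |(z - c) * d| = |d| * |z - c| := by rw [abs_mul, mul_comm]
  have h_lower := abs_sub_abs_le_abs_sub ((z - c) * d) (φ z - φ c)
  have h_upper := abs_sub_abs_le_abs_sub (φ z - φ c) ((z - c) * d)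
  rw [abs_sub_comm ((z - c) * d)] at h_lower
  have : 0 ≤ |d| * |z - c| := by positivity
  constructor <;> linarith

/-- Both sides are logarithmic derivatives of `|ψ ∘ f| = |φ| ^ ℓ`. -/
lemma deriv_div_eq_of_abs_eq_rpow {f φ ψ : ℝ → ℝ} {ℓ z : ℝ} (hf : DifferentiableAt ℝ f z)
    (hφ : DifferentiableAt ℝ φ z) (hψ : DifferentiableAt ℝ ψ (f z)) (hφz : φ z ≠ 0)
    (h : ∀ᶠ w in nhds z, |ψ (f w)| = |φ w| ^ ℓ) :
    ψ (f z) ≠ 0 ∧ deriv ψ (f z) * deriv f z / ψ (f z) = ℓ * (deriv φ z / φ z) := by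
  have hψz : ψ (f z) ≠ 0 := by
    rw [← abs_pos, h.self_of_nhds]
    exact Real.rpow_pos_of_pos (abs_pos.2 hφz) ℓ
  have h_log : (fun w => Real.log (ψ (f w))) =ᶠ[nhds z] fun w => ℓ * Real.log (φ w) := by
    filter_upwards [h, hφ.continuousAt.eventually_ne hφz] with w hw hφw
    rw [← Real.log_abs, hw, Real.log_rpow (abs_pos.2 hφw), Real.log_abs]
  exact ⟨hψz, (((hψ.hasDerivAt.comp z hf.hasDerivAt).log hψz).congr_of_eventuallyEq
    h_log.symm).unique ((hφ.hasDerivAt.log hφz).const_mul ℓ)⟩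

lemma differentiableAt_of_mem_Ioo {f : ℝ → ℝ} (hf : ContDiffOn ℝ 1 f unitI) {z : ℝ}
    (hz : z ∈ Ioo (0 : ℝ) 1) : DifferentiableAt ℝ f z :=
  (hf.differentiableOn one_ne_zero).differentiableAt (Icc_mem_nhds hz.1 hz.2)

lemma derivWithin_unitI_of_mem_Ioo {f : ℝ → ℝ} {z : ℝ} (hz : z ∈ Ioo (0 : ℝ) 1) :
    derivWithin f unitI z = deriv f z :=
  derivWithin_of_mem_nhds (Icc_mem_nhds hz.1 hz.2)

lemma uniqueDiffOn_unitI : UniqueDiffOn ℝ unitI := uniqueDiffOn_Icc zero_lt_one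

lemma isOpen_Ioo_diff_singleton (c : ℝ) : IsOpen (Ioo (0 : ℝ) 1 \ {c}) :=
  isOpen_Ioo.sdiff isClosed_singleton

lemma exists_log_deriv_eq_of_nonflatAt {f : ℝ → ℝ} {ℓ c : ℝ} (hf : ContDiffOn ℝ 1 f unitI)
    (hn : NonflatAt f ℓ c) : ∃ φ ψ : ℝ → ℝ, IsC3Diffeo φ ∧ IsC3Diffeo ψ ∧ φ c = 0 ∧
      ∀ᶠ z in nhdsWithin c (Ioo 0 1 \ {c}), deriv f z ≠ 0 ∧
        Real.log (deriv f z) = Real.log ℓ + (ℓ - 1) * Real.log (φ z) + Real.log (deriv φ z)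
          - Real.log (deriv ψ (f z)) := by
  obtain ⟨hℓ, φ, ψ, hφ, hψ, hφc, -, U, hU, hUeq⟩ := hn
  refine ⟨φ, ψ, hφ, hψ, hφc, ?_⟩
  have h_eq : ∀ᶠ z in nhdsWithin c (Ioo 0 1 \ {c}), |ψ (f z)| = |φ z| ^ ℓ :=
    nhdsWithin_mono c (sdiff_subset.trans Ioo_subset_Icc_self) (mem_of_superset hU hUeq)
  filter_upwards [eventually_eventually_nhdsWithin.2 h_eq, h_eq, self_mem_nhdsWithin] with z h h' hz
  rw [(isOpen_Ioo_diff_singleton c).nhdsWithin_eq hz] at h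
  have hφz : φ z ≠ 0 := fun h0 => hz.2 (hφ.2.1.1 (h0.trans hφc.symm))
  obtain ⟨hψz, h_div⟩ := deriv_div_eq_of_abs_eq_rpow (differentiableAt_of_mem_Ioo hf hz.1)
    (hφ.1.differentiable (by norm_num) z) (hψ.1.differentiable (by norm_num) _) hφz h
  have hφ' := hφ.2.2 z
  have hψ' := hψ.2.2 (f z)
  have hℓ0 : ℓ ≠ 0 := by linarith
  have h_deriv : deriv f z ≠ 0 := fun h0 => by
    rw [h0, mul_zero, zero_div] at h_div
    exact mul_ne_zero hℓ0 (div_ne_zero hφ' hφz) h_div.symm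
  have h_log := congrArg Real.log h_div
  rw [Real.log_div (mul_ne_zero hψ' h_deriv) hψz, Real.log_mul hψ' h_deriv,
    Real.log_mul hℓ0 (div_ne_zero hφ' hφz), Real.log_div hφ' hφz] at h_log
  have h_rpow := congrArg Real.log h'
  rw [Real.log_rpow (abs_pos.2 hφz), Real.log_abs, Real.log_abs] at h_rpow
  exact ⟨h_deriv, by linarith⟩

lemma eventually_deriv_ne_zero {f : ℝ → ℝ} (hf : C3Nonflat f) {c : ℝ} (hc : c ∈ unitI) :
    ∀ᶠ z in nhdsWithin c (Ioo 0 1 \ {c}), deriv f z ≠ 0 := by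
  obtain ⟨ℓ, hf1, -, hn⟩ := hf
  by_cases hcrit : c ∈ Crit f
  · obtain ⟨φ, ψ, -, -, -, h⟩ := exists_log_deriv_eq_of_nonflatAt hf1 (hn c hcrit)
    exact h.mono fun z hz => hz.1
  · have hd : deriv f c ≠ 0 := fun h => hcrit ⟨hc, h⟩
    have hdw : derivWithin f unitI c ≠ 0 := by
      rwa [(differentiableAt_of_deriv_ne_zero hd).derivWithin (uniqueDiffOn_unitI c hc)]
    have hne := (hf1.continuousOn_derivWithin uniqueDiffOn_unitI le_rfl c hc).eventually_ne hdw
    filter_upwards [nhdsWithin_mono c (sdiff_subset.trans Ioo_subset_Icc_self) hne,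
      self_mem_nhdsWithin] with z hz hzI
    rwa [derivWithin_unitI_of_mem_Ioo hzI.1] at hz

lemma finite_Crit {f : ℝ → ℝ} (hf : C3Nonflat f) : (Crit f).Finite := by
  suffices (unitI ∩ Crit f).Finite from this.subset fun x hx => ⟨hx.1, hx⟩
  refine (isCompact_Icc (a := (0 : ℝ)) (b := 1)).induction_on (p := fun A => (A ∩ Crit f).Finite)
    ?_ (fun A B hAB hB => hB.subset (inter_subset_inter_left _ hAB))
    (fun A B hA hB => ?_) fun c hc => ?_
  · rw [empty_inter]; exact finite_empty
  · rw [union_inter_distrib_right]; exact hA.union hB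
  · refine ⟨{z | z ∈ Ioo (0 : ℝ) 1 \ {c} → deriv f z ≠ 0}, mem_nhdsWithin_of_mem_nhds
      (eventually_nhdsWithin_iff.1 (eventually_deriv_ne_zero hf hc)), ?_⟩
    refine (toFinite {0, 1, c}).subset fun z hz => ?_
    by_contra hne
    simp only [mem_insert_iff, mem_singleton_iff, not_or] at hne
    exact hz.1 ⟨⟨hz.2.1.1.lt_of_ne' hne.1, hz.2.1.2.lt_of_ne hne.2.1⟩, hne.2.2⟩ hz.2.2

/-! ### Power laws and distortion -/

/-- Near `b`, the displacement `f z - f b` is comparable to `|z - b| ^ ℓ`. -/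
def HasPowerLawAt (f : ℝ → ℝ) (ℓ b : ℝ) : Prop :=
  ∃ a > 0, ∃ A > 0, ∀ᶠ z in nhdsWithin b unitI,
    a * |z - b| ^ ℓ ≤ |f z - f b| ∧ |f z - f b| ≤ A * |z - b| ^ ℓ

lemma hasPowerLawAt_one {f : ℝ → ℝ} {b : ℝ} (hb : deriv f b ≠ 0) : HasPowerLawAt f 1 b := by
  obtain ⟨a, ha, A, hA, h⟩ := eventually_mul_abs_sub_le_of_hasDerivAt
    (differentiableAt_of_deriv_ne_zero hb).hasDerivAt hb
  refine ⟨a, ha, A, hA, nhdsWithin_le_nhds (h.mono fun z hz => ?_)⟩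
  rwa [Real.rpow_one]

lemma NonflatAt.hasPowerLawAt {f : ℝ → ℝ} {ℓ b : ℝ} (hn : NonflatAt f ℓ b)
    (hf : ContinuousWithinAt f unitI b) : HasPowerLawAt f ℓ b := by
  obtain ⟨hℓ, φ, ψ, hφ, hψ, hφb, hψb, U, hU, hUeq⟩ := hn
  have hℓ0 : 0 ≤ ℓ := by linarith
  obtain ⟨a, ha, A, hA, h_φ⟩ := eventually_mul_abs_sub_le_of_hasDerivAt
    (hφ.1.differentiable (by norm_num) b).hasDerivAt (hφ.2.2 b)
  obtain ⟨a', ha', A', hA', h_ψ⟩ := eventually_mul_abs_sub_le_of_hasDerivAt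
    (hψ.1.differentiable (by norm_num) (f b)).hasDerivAt (hψ.2.2 (f b))
  refine ⟨a ^ ℓ / A', by positivity, A ^ ℓ / a', by positivity, ?_⟩
  filter_upwards [hU, nhdsWithin_le_nhds h_φ, hf.eventually h_ψ] with z hzU hzφ hzψ
  rw [hφb, sub_zero] at hzφ
  rw [hψb, sub_zero, hUeq z hzU] at hzψ
  have h_lower : (a * |z - b|) ^ ℓ ≤ |φ z| ^ ℓ := Real.rpow_le_rpow (by positivity) hzφ.1 hℓ0
  have h_upper : |φ z| ^ ℓ ≤ (A * |z - b|) ^ ℓ := Real.rpow_le_rpow (by positivity) hzφ.2 hℓ0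
  rw [Real.mul_rpow ha.le (abs_nonneg _)] at h_lower
  rw [Real.mul_rpow hA.le (abs_nonneg _)] at h_upper
  constructor
  · rw [div_mul_eq_mul_div, div_le_iff₀ hA']; linarith
  · rw [div_mul_eq_mul_div, le_div_iff₀ ha']; linarith

lemma exists_hasPowerLawAt {f : ℝ → ℝ} (hf : C3Nonflat f) {b : ℝ} (hb : b ∈ unitI) :
    ∃ ℓ, 1 ≤ ℓ ∧ (b ∈ Crit f → 1 < ℓ) ∧ HasPowerLawAt f ℓ b := by
  by_cases hcrit : b ∈ Crit f
  · obtain ⟨ℓ, hf1, -, hn⟩ := hf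
    have hℓ : 1 < ℓ b := (hn b hcrit).1
    exact ⟨ℓ b, hℓ.le, fun _ => hℓ, (hn b hcrit).hasPowerLawAt (hf1.continuousOn b hb)⟩
  · exact ⟨1, le_rfl, fun h => absurd h hcrit, hasPowerLawAt_one fun h => hcrit ⟨hb, h⟩⟩

/-- The set of interior points of `[0,1]` that are not critical. -/
def regularPts (f : ℝ → ℝ) : Set ℝ := Ioo 0 1 \ Crit f

lemma isOpen_regularPts {f : ℝ → ℝ} (hf : C3Nonflat f) : IsOpen (regularPts f) :=
  isOpen_Ioo.sdiff (finite_Crit hf).isClosed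

/-- The function `log |f'|` has a derivative at `z`, of absolute value at most
`C / min 1 (dist z (Crit f))`. Since `Real.log` is even the inner absolute value is left out, and
lower bounds `d` stand for the distance so as to cover the case of no critical point. -/
def LogDerivBound (f : ℝ → ℝ) (C z : ℝ) : Prop :=
  DifferentiableAt ℝ (fun w => Real.log (deriv f w)) z ∧
    ∀ d, 0 < d → d ≤ 1 → (∀ w ∈ Crit f, d ≤ |z - w|) →
      |deriv (fun w => Real.log (deriv f w)) z| * d ≤ C

lemma LogDerivBound.mono {f : ℝ → ℝ} {C C' z : ℝ} (h : LogDerivBound f C z) (hC : C ≤ C') :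
    LogDerivBound f C' z :=
  ⟨h.1, fun d h0 h1 hd => (h.2 d h0 h1 hd).trans hC⟩

section C3Diffeo

variable {φ : ℝ → ℝ}

lemma IsC3Diffeo.contDiff_deriv (hφ : IsC3Diffeo φ) : ContDiff ℝ 2 (deriv φ) :=
  ((contDiff_succ_iff_deriv (n := 2)).1 hφ.1).2.2

lemma IsC3Diffeo.hasDerivAt (hφ : IsC3Diffeo φ) (x : ℝ) : HasDerivAt φ (deriv φ x) x :=
  (hφ.1.differentiable (by norm_num) x).hasDerivAt

lemma IsC3Diffeo.hasDerivAt_deriv (hφ : IsC3Diffeo φ) (x : ℝ) :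
    HasDerivAt (deriv φ) (deriv (deriv φ) x) x :=
  (hφ.contDiff_deriv.differentiable (by norm_num) x).hasDerivAt

lemma IsC3Diffeo.continuous_deriv_deriv (hφ : IsC3Diffeo φ) : Continuous (deriv (deriv φ)) :=
  hφ.contDiff_deriv.continuous_deriv (by norm_num)

end C3Diffeo

/-- The part of the derivative of `log |f'|` that stays bounded near a non-flat critical point at
which `|ψ ∘ f| = |φ| ^ ℓ`. -/
def nonflatRemainder (f φ ψ : ℝ → ℝ) (z : ℝ) : ℝ :=
  deriv (deriv φ) z / deriv φ z - deriv (deriv ψ) (f z) * deriv f z / deriv ψ (f z)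

lemma exists_abs_nonflatRemainder_le {f φ ψ : ℝ → ℝ} (hf : ContDiffOn ℝ 1 f unitI)
    (hφ : IsC3Diffeo φ) (hψ : IsC3Diffeo ψ) {c : ℝ} (hc : c ∈ unitI) :
    ∃ Q, ∀ᶠ z in nhdsWithin c (Ioo 0 1), |nonflatRemainder f φ ψ z| ≤ Q := by
  have hfc : ContinuousWithinAt f unitI c := hf.continuousOn c hc
  have h_cont : ContinuousWithinAt (fun z => |deriv (deriv φ) z / deriv φ z
      - deriv (deriv ψ) (f z) * derivWithin f unitI z / deriv ψ (f z)|) unitI c :=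
    ((hφ.continuous_deriv_deriv.continuousWithinAt.div
      hφ.contDiff_deriv.continuous.continuousWithinAt (hφ.2.2 c)).sub
      (((hψ.continuous_deriv_deriv.continuousAt.comp_continuousWithinAt hfc).mul
        (hf.continuousOn_derivWithin uniqueDiffOn_unitI le_rfl c hc)).div
        (hψ.contDiff_deriv.continuous.continuousAt.comp_continuousWithinAt hfc)
        (hψ.2.2 _))).abs
  obtain ⟨Q, hQ⟩ := h_cont.tendsto.isBoundedUnder_le.eventually_le
  refine ⟨Q, ?_⟩
  filter_upwards [nhdsWithin_mono c Ioo_subset_Icc_self hQ, self_mem_nhdsWithin] with z hz hzI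
  rw [derivWithin_unitI_of_mem_Ioo hzI] at hz
  exact hz

lemma exists_hasDerivAt_log_deriv {f : ℝ → ℝ} {ℓ c : ℝ} (hf : ContDiffOn ℝ 1 f unitI)
    (hn : NonflatAt f ℓ c) : ∃ φ ψ : ℝ → ℝ, IsC3Diffeo φ ∧ IsC3Diffeo ψ ∧ φ c = 0 ∧
      ∀ᶠ z in nhdsWithin c (Ioo 0 1 \ {c}), HasDerivAt (fun w => Real.log (deriv f w))
        ((ℓ - 1) * (deriv φ z / φ z) + nonflatRemainder f φ ψ z) z := by
  obtain ⟨φ, ψ, hφ, hψ, hφc, h⟩ := exists_log_deriv_eq_of_nonflatAt hf hn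
  refine ⟨φ, ψ, hφ, hψ, hφc, ?_⟩
  filter_upwards [eventually_eventually_nhdsWithin.2 h, self_mem_nhdsWithin] with z hz hzI
  rw [(isOpen_Ioo_diff_singleton c).nhdsWithin_eq hzI] at hz
  have hφz : φ z ≠ 0 := fun h0 => hzI.2 (hφ.2.1.1 (h0.trans hφc.symm))
  have hfz := (differentiableAt_of_mem_Ioo hf hzI.1).hasDerivAt
  have hD := ((((hφ.hasDerivAt z).log hφz).const_mul (ℓ - 1)).const_add (Real.log ℓ)).add
    ((hφ.hasDerivAt_deriv z).log (hφ.2.2 z))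
    |>.sub (((hψ.hasDerivAt_deriv (f z)).comp z hfz).log (hψ.2.2 (f z)))
  refine (hD.congr_of_eventuallyEq (hz.mono fun w hw => hw.2)).congr_deriv ?_
  exact add_sub_assoc _ _ _

lemma exists_logDerivBound_of_nonflatAt {f : ℝ → ℝ} {ℓ c : ℝ} (hf : ContDiffOn ℝ 1 f unitI)
    (hc : c ∈ Crit f) (hn : NonflatAt f ℓ c) :
    ∃ C, ∀ᶠ z in nhdsWithin c (regularPts f), LogDerivBound f C z := by
  have hℓ : 0 < ℓ - 1 := sub_pos.2 hn.1
  obtain ⟨φ, ψ, hφ, hψ, hφc, h_deriv⟩ := exists_hasDerivAt_log_deriv hf hn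
  obtain ⟨a, ha, A, -, h_lip⟩ := eventually_mul_abs_sub_le_of_hasDerivAt (hφ.hasDerivAt c)
    (hφ.2.2 c)
  obtain ⟨Q, hQ⟩ := exists_abs_nonflatRemainder_le hf hφ hψ hc.1
  have hφ' := hφ.contDiff_deriv.continuous.abs.continuousAt (x := c)
    |>.eventually_lt_const (lt_add_one _)
  set B := |deriv φ c| + 1
  have h_sub : regularPts f ⊆ Ioo 0 1 \ {c} := fun z hz => ⟨hz.1, fun h => hz.2 (h ▸ hc)⟩
  refine ⟨(ℓ - 1) * (B / a) + Q, ?_⟩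
  filter_upwards [nhdsWithin_mono c h_sub h_deriv, nhdsWithin_mono c sdiff_subset hQ,
    nhdsWithin_le_nhds h_lip, nhdsWithin_le_nhds hφ', self_mem_nhdsWithin] with z hD hQz hlip hB hz
  refine ⟨hD.differentiableAt, fun d hd hd1 hdc => ?_⟩
  rw [hφc, sub_zero] at hlip
  have h_ad : a * d ≤ |φ z| := (mul_le_mul_of_nonneg_left (hdc c hc) ha.le).trans hlip.1
  have h_main : |deriv φ z / φ z| * d ≤ B / a := by
    rw [abs_div, div_mul_eq_mul_div, div_le_div_iff₀ ((mul_pos ha hd).trans_le h_ad) ha, mul_assoc,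
      mul_comm d]
    exact mul_le_mul hB.le h_ad (by positivity) (by positivity)
  rw [hD.deriv]
  calc |(ℓ - 1) * (deriv φ z / φ z) + nonflatRemainder f φ ψ z| * d
      ≤ ((ℓ - 1) * |deriv φ z / φ z| + |nonflatRemainder f φ ψ z|) * d := by
        gcongr
        refine (abs_add_le _ _).trans_eq ?_
        rw [abs_mul, abs_of_pos hℓ]
    _ = (ℓ - 1) * (|deriv φ z / φ z| * d) + |nonflatRemainder f φ ψ z| * d := by ring
    _ ≤ (ℓ - 1) * (B / a) + Q := by
        gcongr
        exact (mul_le_of_le_one_right (abs_nonneg _) hd1).trans hQz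

lemma exists_logDerivBound_of_notMem_Crit {f : ℝ → ℝ} {c : ℝ} (hf : C3Nonflat f) (hc : c ∈ unitI)
    (hcrit : c ∉ Crit f) : ∃ C, ∀ᶠ z in nhdsWithin c (regularPts f), LogDerivBound f C z := by
  have hopen := isOpen_regularPts hf
  have hclosed := (finite_Crit hf).isClosed
  obtain ⟨-, -, hf3, -⟩ := hf
  set V := unitI \ Crit f
  have hud : UniqueDiffOn ℝ V := uniqueDiffOn_unitI.inter hclosed.isOpen_compl
  have hf' : ContDiffOn ℝ 2 (derivWithin f V) V := hf3.derivWithin hud (by norm_num)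
  have hne (z : ℝ) (hz : z ∈ V) : derivWithin f V z ≠ 0 := by
    have hd : deriv f z ≠ 0 := fun h => hz.2 ⟨hz.1, h⟩
    rwa [(differentiableAt_of_deriv_ne_zero hd).derivWithin (hud z hz)]
  have h_cont := ((hf'.continuousOn_derivWithin hud (by norm_num) c ⟨hc, hcrit⟩).div
    (hf'.continuousOn c ⟨hc, hcrit⟩) (hne c ⟨hc, hcrit⟩)).abs
  have hWV : regularPts f ⊆ V := sdiff_subset_sdiff_left Ioo_subset_Icc_self
  have hVnhds {z : ℝ} (hz : z ∈ regularPts f) : V ∈ nhds z :=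
    mem_of_superset (hopen.mem_nhds hz) hWV
  obtain ⟨C, hC⟩ := h_cont.tendsto.isBoundedUnder_le.eventually_le
  refine ⟨C, ?_⟩
  filter_upwards [nhdsWithin_mono c hWV hC, self_mem_nhdsWithin] with z hbound hz
  have hD : HasDerivAt (derivWithin f V) (derivWithin (derivWithin f V) V z) z := by
    rw [derivWithin_of_mem_nhds (f := derivWithin f V) (hVnhds hz)]
    exact ((hf'.differentiableOn (by norm_num)).differentiableAt (hVnhds hz)).hasDerivAt
  have hlog : HasDerivAt (fun w => Real.log (deriv f w)) _ z :=
    (hD.log (hne z (hWV hz))).congr_of_eventuallyEq ((hopen.eventually_mem hz).mono fun w hw =>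
      congrArg Real.log (derivWithin_of_mem_nhds (hVnhds hw)).symm)
  refine ⟨hlog.differentiableAt, fun d _ hd1 _ => ?_⟩
  rw [hlog.deriv]
  exact (mul_le_of_le_one_right (abs_nonneg _) hd1).trans hbound

lemma exists_logDerivBound {f : ℝ → ℝ} (hf : C3Nonflat f) :
    ∃ C > 0, ∀ z ∈ regularPts f, LogDerivBound f C z := by
  suffices ∃ C, ∀ z ∈ unitI, z ∈ regularPts f → LogDerivBound f C z by
    obtain ⟨C, hC⟩ := this
    exact ⟨max C 1, by positivity, fun z hz =>
      (hC z (Ioo_subset_Icc_self hz.1) hz).mono (le_max_left _ _)⟩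
  refine (isCompact_Icc (a := (0 : ℝ)) (b := 1)).induction_on
    (p := fun A => ∃ C, ∀ z ∈ A, z ∈ regularPts f → LogDerivBound f C z)
    ⟨0, fun z hz => absurd hz (notMem_empty z)⟩ ?_ ?_ fun c hc => ?_
  · exact fun A B hAB ⟨C, hC⟩ => ⟨C, fun z hz => hC z (hAB hz)⟩
  · rintro A B ⟨C, hC⟩ ⟨C', hC'⟩
    exact ⟨max C C', fun z hz hreg => hz.elim
      (fun hA => (hC z hA hreg).mono (le_max_left _ _))
      (fun hB => (hC' z hB hreg).mono (le_max_right _ _))⟩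
  · obtain ⟨C, hC⟩ : ∃ C, ∀ᶠ z in nhdsWithin c (regularPts f), LogDerivBound f C z := by
      by_cases hcrit : c ∈ Crit f
      · obtain ⟨ℓ, hf1, -, hn⟩ := hf
        exact exists_logDerivBound_of_nonflatAt hf1 hcrit (hn c hcrit)
      · exact exists_logDerivBound_of_notMem_Crit hf hc hcrit
    exact ⟨_, mem_nhdsWithin_of_mem_nhds (eventually_nhdsWithin_iff.1 hC), C, fun z hz => hz⟩

/-! ### Maps of constant slope in a coordinate -/

lemma rel_of_rel_of_disjoint_Ioo {α : Type*} [LinearOrder α] {R : α → α → Prop}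
    (h_trans : ∀ a b c, a ≤ b → b ≤ c → R a b → R b c → R a c) {S : Set α} (hS : S.Finite)
    (h_disj : ∀ a b, a ≤ b → Disjoint (Ioo a b) S → R a b) : ∀ a b, a ≤ b → R a b := by
  induction S, hS using Set.Finite.induction_on with
  | empty => exact fun a b hab => h_disj a b hab (disjoint_empty _)
  | @insert c S _ _ ih =>
    refine ih fun a b hab hd => ?_
    simp only [disjoint_insert_right] at h_disj
    by_cases hc : c ∈ Ioo a b
    · refine h_trans a c b hc.1.le hc.2.le (h_disj a c hc.1.le ⟨right_notMem_Ioo, ?_⟩)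
        (h_disj c b hc.2.le ⟨left_notMem_Ioo, ?_⟩)
      · exact hd.mono_left (Ioo_subset_Ioo_right hc.2.le)
      · exact hd.mono_left (Ioo_subset_Ioo_left hc.1.le)
    · exact h_disj a b hab ⟨hc, hd⟩

/-- In the coordinate `h`, the map `f` is affine with slope `s` or `-s` on every interval without
critical points in its interior. -/
def HasConstantSlope (h f : ℝ → ℝ) (s : ℝ) : Prop :=
  ∀ y z, y ≤ z → Icc y z ⊆ unitI → Disjoint (Ioo y z) (Crit f) →
    ∃ σ, |σ| = s ∧ HasSlopeOn h f σ (Icc y z)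

lemma HasConstantSlope.abs_apply_sub_le {h f : ℝ → ℝ} {s : ℝ} (hs : HasConstantSlope h f s)
    (hm : Monotone h) (hfin : (Crit f).Finite) {y z : ℝ} (hy : y ∈ unitI) (hz : z ∈ unitI) :
    |h (f z) - h (f y)| ≤ s * |h z - h y| := by
  have h_le (y z : ℝ) (hyz : y ≤ z) :
      Icc y z ⊆ unitI → |h (f z) - h (f y)| ≤ s * (h z - h y) := by
    refine rel_of_rel_of_disjoint_Ioo
      (R := fun y z => Icc y z ⊆ unitI → |h (f z) - h (f y)| ≤ s * (h z - h y))
      (fun a b c hab hbc h_ab h_bc hsub => ?_) hfin (fun a b hab hd hsub => ?_) y z hyz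
    · have h_left := h_ab ((Icc_subset_Icc_right hbc).trans hsub)
      have h_right := h_bc ((Icc_subset_Icc_left hab).trans hsub)
      linarith [abs_sub_le (h (f c)) (h (f b)) (h (f a))]
    · obtain ⟨σ, hσ, h_slope⟩ := hs a b hab hsub hd
      rw [h_slope a ⟨le_rfl, hab⟩ b ⟨hab, le_rfl⟩, abs_mul, hσ,
        abs_of_nonneg (sub_nonneg.2 (hm hab))]
  rcases le_total y z with hyz | hyz
  · rw [abs_of_nonneg (sub_nonneg.2 (hm hyz))]
    exact h_le y z hyz (Icc_subset_Icc hy.1 hz.2)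
  · rw [abs_sub_comm, abs_sub_comm (h z), abs_of_nonneg (sub_nonneg.2 (hm hyz))]
    exact h_le z y hyz (Icc_subset_Icc hz.1 hy.2)

lemma HasConstantSlope.abs_apply_sub_eq {h f : ℝ → ℝ} {s : ℝ} (hs : HasConstantSlope h f s)
    {y z : ℝ} (hy : y ∈ unitI) (hz : z ∈ unitI) (hc : Disjoint (uIoo y z) (Crit f)) :
    |h (f z) - h (f y)| = s * |h z - h y| := by
  obtain ⟨σ, hσ, h_slope⟩ := hs (y ⊓ z) (y ⊔ z) inf_le_sup
    (Icc_subset_Icc (le_inf hy.1 hz.1) (sup_le hy.2 hz.2)) hc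
  rw [h_slope y left_mem_uIcc z right_mem_uIcc, abs_mul, hσ]

/-- A map that does not expand the coordinate cannot blow a small interval up to `[0,1]`. -/
lemma one_lt_of_topExact {f h H : ℝ → ℝ} {s : ℝ} (D : UnitCoordinate h H) (hex : TopExact f)
    (mapsTo : MapsTo f unitI unitI)
    (lip : ∀ y ∈ unitI, ∀ z ∈ unitI, |h (f z) - h (f y)| ≤ s * |h z - h y|) : 1 < s := by
  by_contra! hs
  have h_iter (n : ℕ) :
      ∀ y ∈ unitI, ∀ z ∈ unitI, |h (f^[n] z) - h (f^[n] y)| ≤ |h z - h y| := by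
    induction n with
    | zero => exact fun y _ z _ => le_rfl
    | succ n ih =>
      intro y hy z hz
      rw [Function.iterate_succ_apply, Function.iterate_succ_apply]
      exact (ih _ (mapsTo hy) _ (mapsTo hz)).trans ((lip y hy z hz).trans
        (mul_le_of_le_one_left (abs_nonneg _) hs))
  have h_half : h (H (1 / 2)) = 1 / 2 := D.apply_inv_of_mem ⟨by norm_num, by norm_num⟩
  have h_pos : 0 < H (1 / 2) := D.lt_of_apply_lt (by rw [h_half, D.eq_zero 0 le_rfl]; norm_num)
  obtain ⟨n, -, h_image⟩ := hex (Iio (H (1 / 2)) ∩ unitI) ⟨0, h_pos, zero_mem_unitI⟩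
    inter_subset_right ⟨_, isOpen_Iio, rfl⟩
  obtain ⟨y, hy, hy0⟩ := h_image ▸ zero_mem_unitI
  obtain ⟨z, hz, hz1⟩ := h_image ▸ one_mem_unitI
  have h_dist := h_iter n y hy.2 z hz.2
  rw [hy0, hz1, D.eq_zero 0 le_rfl, D.eq_one 1 le_rfl, sub_zero, abs_one] at h_dist
  have hy_half := h_half ▸ D.mono (le_of_lt hy.1)
  have hz_half := h_half ▸ D.mono (le_of_lt hz.1)
  have := (D.apply_mem y).1
  have := (D.apply_mem z).1
  have : |h z - h y| ≤ 1 / 2 := abs_le.2 ⟨by linarith, by linarith⟩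
  linarith

/-- A smooth map `f` of `[0,1]` with non-flat critical points, together with a doubling coordinate
`h` of inverse `H` in which `f` has constant slope `s > 1`. -/
structure ConstantSlopeModel (f h H : ℝ → ℝ) (K s : ℝ) : Prop
    extends DoublingCoordinate h H K where
  one_lt_slope : 1 < s
  mapsTo : MapsTo f unitI unitI
  nonflat : C3Nonflat f
  hasConstantSlope : HasConstantSlope h f s

lemma exists_constantSlopeModel {f : ℝ → ℝ} {μ : Measure ℝ} [IsProbabilityMeasure μ]
    [NullSingletonClass μ] {s : NNReal} (hI : μ unitIᶜ = 0)
    (hpos : ∀ x ∈ unitI, ∀ r > 0, 0 < μ (ballI x r))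
    (hjac : ∀ A, MeasurableSet A → A ⊆ unitI → InjOn f A → μ (f '' A) = s * μ A)
    (mapsTo : MapsTo f unitI unitI) (nonflat : C3Nonflat f) (hex : TopExact f)
    (hd : DoublingOn μ) : ∃ h H K, ConstantSlopeModel f h H K s := by
  obtain ⟨H, K, D⟩ := exists_doublingCoordinate_cdf hI hpos hd
  obtain ⟨ℓ, hf, -⟩ := id nonflat
  have h_slope : HasConstantSlope (ProbabilityTheory.cdf μ) f s := fun y z =>
    exists_hasSlopeOn_cdf hjac hf.continuousOn
  exact ⟨_, H, K, D, one_lt_of_topExact D.toUnitCoordinate hex mapsTo fun y hy z hz =>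
    h_slope.abs_apply_sub_le D.mono (finite_Crit nonflat) hy hz, mapsTo, nonflat, h_slope⟩

/-- The singular points of `f`: the critical points, and the endpoints of `[0,1]` that are not
mapped to endpoints. A small ball in the coordinate about any other point is mapped onto a ball. -/
def singularPts (f : ℝ → ℝ) : Set ℝ := Crit f ∪ {e | (e = 0 ∨ e = 1) ∧ f e ≠ 0 ∧ f e ≠ 1}

lemma singularPts_subset (f : ℝ → ℝ) : singularPts f ⊆ unitI := by
  rintro b (hb | ⟨rfl | rfl, -⟩)
  · exact hb.1
  · exact zero_mem_unitI
  · exact one_mem_unitI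

lemma finite_singularPts {f : ℝ → ℝ} (hf : C3Nonflat f) : (singularPts f).Finite :=
  (finite_Crit hf).union ((toFinite {0, 1}).subset fun _ he => he.1)

namespace UnitCoordinate

variable {h H : ℝ → ℝ}

lemma inv_sub_le (D : UnitCoordinate h H) {y v : ℝ} (hy : y ∈ unitI) (hv : 0 ≤ v) :
    H (h y - v) ≤ y :=
  (D.inv_mono (sub_le_self _ hv)).trans_eq (D.inv_apply hy)

lemma le_inv_add (D : UnitCoordinate h H) {y v : ℝ} (hy : y ∈ unitI) (hv : 0 ≤ v) :
    y ≤ H (h y + v) :=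
  (D.inv_apply hy).symm.trans_le (D.inv_mono (le_add_of_nonneg_right hv))

lemma Ioo_inv_subset (D : UnitCoordinate h H) (a b : ℝ) : Ioo (H a) (H b) ⊆ Ioo 0 1 := fun _ hw =>
  ⟨(D.inv_mem a).1.trans_lt hw.1, hw.2.trans_le (D.inv_mem b).2⟩

lemma Icc_inv_subset (D : UnitCoordinate h H) (a b : ℝ) : Icc (H a) (H b) ⊆ unitI :=
  Icc_subset_Icc (D.inv_mem a).1 (D.inv_mem b).2

lemma abs_apply_sub_lt_of_mem_Ioo (D : UnitCoordinate h H) {y v w : ℝ} (hv : 0 < v)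
    (hw : w ∈ Ioo (H (h y - v)) (H (h y + v))) : |h w - h y| < v := by
  have hwI := Ioo_subset_Icc_self (D.Ioo_inv_subset _ _ hw)
  have h_left := D.strictMonoOn (D.inv_mem _) hwI hw.1
  have h_right := D.strictMonoOn hwI (D.inv_mem _) hw.2
  rw [D.apply_inv] at h_left h_right
  have := (D.apply_mem y).2
  grind

lemma abs_inv_add_sub_inv_sub (D : UnitCoordinate h H) (t u : ℝ) :
    |H (t + u) - H (t - u)| = ballLength H t |u| := by
  rcases le_total 0 u with hu | hu
  · rw [abs_of_nonneg hu, abs_of_nonneg (sub_nonneg.2 (D.inv_mono (by linarith))), ballLength]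
  · rw [abs_of_nonpos hu, abs_sub_comm, abs_of_nonneg (sub_nonneg.2 (D.inv_mono (by linarith))),
      ballLength, ← sub_eq_add_neg, sub_neg_eq_add]

/-- An endpoint `x = H (h y + u)` of a ball about `y` is sent to an endpoint of the image ball, also
when the ball sticks out of `[0,1]`. The opposite endpoint `w` fixes the orientation of `f` if
`x = y`. -/
lemma inv_add_mul_eq_of_hasSlopeOn (D : UnitCoordinate h H) {f : ℝ → ℝ} {S : Set ℝ} {σ u x y w : ℝ}
    (h_slope : HasSlopeOn h f σ S) (hxS : x ∈ S) (hyS : y ∈ S) (hwS : w ∈ S)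
    (hx : x = H (h y + u)) (hw : 0 < u * (h x - h w)) (hfx : f x ∈ unitI)
    (hend : h x ≠ h y + u → f x = 0 ∨ f x = 1) : H (h (f y) + u * σ) = f x := by
  have h_x := h_slope y hyS x hxS
  have h_w := h_slope x hxS w hwS
  have h_apply : h x = max 0 (min 1 (h y + u)) := by rw [hx, D.apply_inv]
  obtain ⟨hy0, hy1⟩ := D.apply_mem y
  obtain ⟨hfx0, hfx1⟩ := D.apply_mem (f x)
  obtain ⟨hfw0, hfw1⟩ := D.apply_mem (f w)
  refine D.inv_eq_of_apply_eq hfx ?_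
  by_cases hxu : h x = h y + u
  · have : h (f y) + u * σ = h (f x) := by rw [hxu] at h_x; linarith
    rw [this, min_eq_right hfx1, max_eq_right hfx0]
  · have h_shift : h (f y) + u * σ = h (f x) + σ * (u - (h x - h y)) := by linarith
    have h_excess : 0 ≤ (u - (h x - h y)) * (h x - h w) := by
      rcases pos_and_pos_or_neg_and_neg_of_mul_pos hw with ⟨hu, hd⟩ | ⟨hu, hd⟩
      · exact mul_nonneg (by grind) hd.le
      · exact mul_nonneg_of_nonpos_of_nonpos (by grind) hd.le
    have h_sq : 0 < (h x - h w) ^ 2 := sq_pos_of_ne_zero (right_ne_zero_of_mul hw.ne')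
    have h_sign : σ * (u - (h x - h y)) * (h x - h w) ^ 2 =
        (h (f x) - h (f w)) * ((u - (h x - h y)) * (h x - h w)) := by
      linear_combination (u - (h x - h y)) * (h x - h w) * h_w
    rw [h_shift]
    rcases hend hxu with h_end | h_end
    · rw [h_end, D.eq_zero 0 le_rfl] at h_sign ⊢
      have : σ * (u - (h x - h y)) ≤ 0 := nonpos_of_mul_nonpos_left
        (h_sign ▸ mul_nonpos_of_nonpos_of_nonneg (by linarith) h_excess) h_sq
      grind
    · rw [h_end, D.eq_one 1 le_rfl] at h_sign ⊢
      have : 0 ≤ σ * (u - (h x - h y)) := nonneg_of_mul_nonneg_left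
        (h_sign ▸ mul_nonneg (by linarith) h_excess) h_sq
      grind

end UnitCoordinate

namespace ConstantSlopeModel

variable {f h H : ℝ → ℝ} {K s : ℝ}

lemma continuousOn (D : ConstantSlopeModel f h H K s) : ContinuousOn f unitI :=
  let ⟨_, hf, _⟩ := D.nonflat
  hf.continuousOn

lemma abs_apply_sub_le (D : ConstantSlopeModel f h H K s) {y z : ℝ} (hy : y ∈ unitI)
    (hz : z ∈ unitI) : |h (f z) - h (f y)| ≤ s * |h z - h y| :=
  D.hasConstantSlope.abs_apply_sub_le D.mono (finite_Crit D.nonflat) hy hz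

lemma exists_abs_deriv_mul_eq (D : ConstantSlopeModel f h H K s) {p q : ℝ} (hpq : p < q)
    (hsub : Icc p q ⊆ unitI) (hc : Disjoint (Ioo p q) (Crit f)) :
    ∃ ξ ∈ Ioo p q, |f q - f p| = |deriv f ξ| * (q - p) := by
  have h_diff (w : ℝ) (hw : w ∈ Ioo p q) : DifferentiableAt ℝ f w :=
    differentiableAt_of_deriv_ne_zero fun h0 =>
      hc.notMem_of_mem_left hw ⟨hsub (Ioo_subset_Icc_self hw), h0⟩
  obtain ⟨ξ, hξ, h_deriv⟩ := exists_deriv_eq_slope f hpq (D.continuousOn.mono hsub)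
    fun w hw => (h_diff w hw).differentiableWithinAt
  refine ⟨ξ, hξ, ?_⟩
  rw [h_deriv, abs_div, abs_of_pos (sub_pos.2 hpq), div_mul_cancel₀ _ (sub_pos.2 hpq).ne']

lemma exists_hasSlopeOn_ball (D : ConstantSlopeModel f h H K s) {y v : ℝ} (hy : y ∈ unitI)
    (hv : 0 < v) (hc : ∀ b ∈ Crit f, v ≤ |h b - h y|) :
    Disjoint (Ioo (H (h y - v)) (H (h y + v))) (Crit f) ∧
      ∃ σ, |σ| = s ∧ HasSlopeOn h f σ (Icc (H (h y - v)) (H (h y + v))) := by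
  have h_disj : Disjoint (Ioo (H (h y - v)) (H (h y + v))) (Crit f) :=
    disjoint_left.2 fun w hw hwc => (D.abs_apply_sub_lt_of_mem_Ioo hv hw).not_ge (hc w hwc)
  exact ⟨h_disj, D.hasConstantSlope _ _ ((D.inv_sub_le hy hv.le).trans (D.le_inv_add hy hv.le))
    (D.Icc_inv_subset _ _) h_disj⟩

lemma apply_inv_add_eq_zero_or_one (D : ConstantSlopeModel f h H K s) {y u : ℝ}
    (hS : ∀ b ∈ singularPts f, |u| ≤ |h b - h y|) (hne : h (H (h y + u)) ≠ h y + u) :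
    f (H (h y + u)) = 0 ∨ f (H (h y + u)) = 1 := by
  obtain ⟨hy0, hy1⟩ := D.apply_mem y
  by_contra! h_sing
  rcases le_or_gt (h y + u) 0 with h_le | h_gt
  · rw [D.inv_of_nonpos h_le] at hne h_sing
    have := hS 0 (Or.inr ⟨Or.inl rfl, h_sing⟩)
    rw [D.eq_zero 0 le_rfl] at this hne
    grind
  · rcases le_or_gt 1 (h y + u) with h_ge | h_lt
    · rw [D.inv_of_one_le h_ge] at hne h_sing
      have := hS 1 (Or.inr ⟨Or.inr rfl, h_sing⟩)
      rw [D.eq_one 1 le_rfl] at this hne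
      grind
    · exact hne (D.apply_inv_of_mem ⟨h_gt.le, h_lt.le⟩)

/-- The ball is mapped onto the ball of radius `s` times as large, so the mean value theorem
relates the two lengths. -/
lemma exists_ballLength_apply_eq (D : ConstantSlopeModel f h H K s) {y v : ℝ} (hy : y ∈ unitI)
    (hv : 0 < v) (hS : ∀ b ∈ singularPts f, v ≤ |h b - h y|) :
    ∃ ξ ∈ Ioo (H (h y - v)) (H (h y + v)),
      ballLength H (h (f y)) (s * v) = |deriv f ξ| * ballLength H (h y) v := by
  obtain ⟨h_disj, σ, hσ, h_slope⟩ := D.exists_hasSlopeOn_ball hy hv fun b hb => hS b (Or.inl hb)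
  have hpq : H (h y - v) < H (h y + v) := sub_pos.1 (D.ballLength_pos (D.apply_mem y) hv)
  obtain ⟨ξ, hξ, h_mvt⟩ := D.exists_abs_deriv_mul_eq hpq (D.Icc_inv_subset _ _) h_disj
  refine ⟨ξ, hξ, ?_⟩
  have h_lt := D.strictMonoOn (D.inv_mem _) (D.inv_mem _) hpq
  have hyS : y ∈ Icc (H (h y - v)) (H (h y + v)) := ⟨D.inv_sub_le hy hv.le, D.le_inv_add hy hv.le⟩
  have hpS := left_mem_Icc.2 hpq.le
  have hqS := right_mem_Icc.2 hpq.le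
  have h_right : H (h (f y) + v * σ) = f (H (h y + v)) :=
    D.inv_add_mul_eq_of_hasSlopeOn h_slope hqS hyS hpS rfl (mul_pos hv (sub_pos.2 h_lt))
      (D.mapsTo (D.inv_mem _)) (D.apply_inv_add_eq_zero_or_one (by rwa [abs_of_pos hv]))
  have h_left : H (h (f y) + -v * σ) = f (H (h y - v)) :=
    D.inv_add_mul_eq_of_hasSlopeOn h_slope hpS hyS hqS (by rw [sub_eq_add_neg])
      (mul_pos_of_neg_of_neg (neg_lt_zero.2 hv) (sub_neg.2 h_lt)) (D.mapsTo (D.inv_mem _))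
      (D.apply_inv_add_eq_zero_or_one (u := -v) (by rwa [abs_neg, abs_of_pos hv]))
  rw [neg_mul, ← sub_eq_add_neg] at h_left
  have h_image := D.abs_inv_add_sub_inv_sub (h (f y)) (v * σ)
  rw [h_right, h_left, h_mvt, abs_mul, abs_of_pos hv, hσ, mul_comm v] at h_image
  exact h_image.symm

lemma mul_le_apply_and_mul_le_one_sub (D : ConstantSlopeModel f h H K s) {y v : ℝ}
    (hy : y ∈ unitI) (hv : 0 < v) (hc : ∀ b ∈ Crit f, v ≤ |h b - h y|) (h0 : v ≤ h y)
    (h1 : v ≤ 1 - h y) : s * v ≤ h (f y) ∧ s * v ≤ 1 - h (f y) := by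
  obtain ⟨-, σ, rfl, h_slope⟩ := D.exists_hasSlopeOn_ball hy hv hc
  have hyS : y ∈ Icc (H (h y - v)) (H (h y + v)) := ⟨D.inv_sub_le hy hv.le, D.le_inv_add hy hv.le⟩
  have hpq := hyS.1.trans hyS.2
  have h_left := h_slope y hyS _ (left_mem_Icc.2 hpq)
  have h_right := h_slope y hyS _ (right_mem_Icc.2 hpq)
  rw [D.apply_inv_of_mem ⟨by linarith, by linarith⟩] at h_left h_right
  obtain ⟨hp0, hp1⟩ := D.apply_mem (f (H (h y - v)))
  obtain ⟨hq0, hq1⟩ := D.apply_mem (f (H (h y + v)))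
  rcases abs_choice σ with hσ | hσ <;> rw [hσ] <;> constructor <;> linarith

end ConstantSlopeModel

/-! ### Transport of logarithmic lengths -/

/-- Logarithm of the length of the ball of radius `v` about `t` in the coordinate. -/
def logBallLength (H : ℝ → ℝ) (t v : ℝ) : ℝ := Real.log (ballLength H t v)

namespace UnitCoordinate

variable {h H : ℝ → ℝ} {t v v' : ℝ}

lemma logBallLength_nonpos (D : UnitCoordinate h H) (ht : t ∈ unitI) (hv : 0 < v) :
    logBallLength H t v ≤ 0 :=
  Real.log_nonpos (D.ballLength_pos ht hv).le (D.ballLength_le_one t v)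

lemma logBallLength_mono (D : UnitCoordinate h H) (ht : t ∈ unitI) (hv : 0 < v) (hvv : v ≤ v') :
    logBallLength H t v ≤ logBallLength H t v' :=
  Real.log_le_log (D.ballLength_pos ht hv) (D.ballLength_mono (by linarith) (by linarith))

lemma abs_logBallLength_le (D : UnitCoordinate h H) (ht : t ∈ unitI) (hv : 0 < v) (hvv : v ≤ v') :
    |logBallLength H t v'| ≤ |logBallLength H t v| :=
  abs_le_abs_of_nonpos (D.logBallLength_nonpos ht (hv.trans_le hvv))
    (D.logBallLength_mono ht hv hvv)

lemma abs_logBallLength_le_abs_log (D : UnitCoordinate h H) {c : ℝ} (hc : 0 < c)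
    (hle : c ≤ ballLength H t v) : |logBallLength H t v| ≤ |Real.log c| :=
  abs_le_abs_of_nonpos (Real.log_nonpos (hc.trans_le hle).le (D.ballLength_le_one t v))
    (Real.log_le_log hc hle)

lemma exists_abs_apply_sub_eq (D : UnitCoordinate h H) (x : ℝ) (hv : 0 ≤ v) (hv2 : v ≤ 1 / 2) :
    ∃ z ∈ unitI, |h z - h x| = v := by
  obtain ⟨hx0, hx1⟩ := D.apply_mem x
  rcases le_total (h x) (1 / 2) with hx | hx
  · refine ⟨H (h x + v), D.inv_mem _, ?_⟩
    rw [D.apply_inv_of_mem ⟨by linarith, by linarith⟩, add_sub_cancel_left, abs_of_nonneg hv]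
  · refine ⟨H (h x - v), D.inv_mem _, ?_⟩
    rw [D.apply_inv_of_mem ⟨by linarith, by linarith⟩, sub_sub_cancel_left, abs_neg,
      abs_of_nonneg hv]

end UnitCoordinate

namespace DoublingCoordinate

variable {h H : ℝ → ℝ} {K : ℝ}

lemma exists_logBallLength_mul_sub_le (D : DoublingCoordinate h H K) {s : ℝ} (hs : 0 < s) :
    ∃ C ≥ 0, ∀ t ∈ unitI, ∀ v > 0, logBallLength H t (s * v) - logBallLength H t v ≤ C := by
  obtain ⟨K', hK', h_le⟩ := D.exists_ballLength_mul_le s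
  refine ⟨Real.log K', Real.log_nonneg hK', fun t ht v hv => ?_⟩
  have h_log := Real.log_le_log (D.ballLength_pos ht (mul_pos hs hv)) (h_le t ht v hv)
  rw [Real.log_mul (by linarith) (D.ballLength_pos ht hv).ne'] at h_log
  unfold logBallLength
  linarith

lemma abs_logBallLength_sub_le (D : DoublingCoordinate h H K) {t t' v : ℝ} (ht : t ∈ unitI)
    (ht' : t' ∈ unitI) (hv : 0 < v) (htt : |t - t'| ≤ 2 * v) :
    |logBallLength H t v - logBallLength H t' v| ≤ 2 * Real.log K := by
  have hK := D.one_le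
  have h_le (t t' : ℝ) (ht : t ∈ unitI) (ht' : t' ∈ unitI) (htt : |t - t'| ≤ 2 * v) :
      logBallLength H t v - logBallLength H t' v ≤ 2 * Real.log K := by
    have h_log := Real.log_le_log (D.ballLength_pos ht hv)
      (D.ballLength_le_of_abs_sub_le ht' hv 2 (by linarith))
    rw [Real.log_mul (by positivity) (D.ballLength_pos ht' hv).ne', Real.log_pow,
      Nat.cast_ofNat] at h_log
    unfold logBallLength
    linarith
  exact abs_sub_le_iff.2 ⟨h_le t t' ht ht' htt, h_le t' t ht' ht (by rwa [abs_sub_comm])⟩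

lemma abs_logBallLength_sub_log_le (D : DoublingCoordinate h H K) {x z : ℝ} (hx : x ∈ unitI)
    (hz : z ∈ unitI) (hne : z ≠ x) :
    |logBallLength H (h x) (|h z - h x|) - Real.log (|z - x|)| ≤ 2 * Real.log K := by
  have hK := D.one_le
  have h_pos : 0 < |z - x| := abs_pos.2 (sub_ne_zero.2 hne)
  have h_le := D.abs_sub_le_ballLength hx hz
  have h_log_le := Real.log_le_log h_pos h_le
  have h_log_ge := Real.log_le_log (h_pos.trans_le h_le) (D.ballLength_le_sq_mul_abs_sub hx hz hne)
  rw [Real.log_mul (by positivity) h_pos.ne', Real.log_pow, Nat.cast_ofNat] at h_log_ge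
  have := Real.log_nonneg hK
  unfold logBallLength
  exact abs_le.2 ⟨by linarith, by linarith⟩

lemma ballLength_le_mul_abs_sub_of_two_mul_le (D : DoublingCoordinate h H K) {y z w η : ℝ}
    (hz : z ∈ unitI) (hw : w ∈ unitI) (hη : 0 < η) (hzy : |h z - h y| ≤ η)
    (hwy : 2 * η ≤ |h w - h y|) : ballLength H (h y) η ≤ K ^ 3 * |z - w| := by
  have h_ball := D.ballLength_le_mul_abs_sub (t := h y) (v := η) (D.apply_mem z) (D.apply_mem w)
    (by grind) 3 (by grind)
  rwa [D.inv_apply hz, D.inv_apply hw, abs_sub_comm w] at h_ball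

lemma abs_logBallLength_sub_mul_le_of_power_law (D : DoublingCoordinate h H K)
    {a A ℓ x z x' z' : ℝ} (ha : 0 < a) (hA : 0 < A) (hℓ : 0 ≤ ℓ) (hx : x ∈ unitI) (hz : z ∈ unitI)
    (hne : z ≠ x) (hx' : x' ∈ unitI) (hz' : z' ∈ unitI) (h_low : a * |z - x| ^ ℓ ≤ |z' - x'|)
    (h_up : |z' - x'| ≤ A * |z - x| ^ ℓ) :
    |logBallLength H (h x') (|h z' - h x'|) - ℓ * logBallLength H (h x) (|h z - h x|)| ≤
      |Real.log a| + |Real.log A| + (1 + ℓ) * (2 * Real.log K) := by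
  have h_pos : 0 < |z - x| := abs_pos.2 (sub_ne_zero.2 hne)
  have h_pow : 0 < |z - x| ^ ℓ := by positivity
  have h_pos' : 0 < |z' - x'| := (mul_pos ha h_pow).trans_le h_low
  have hne' : z' ≠ x' := sub_ne_zero.1 (abs_pos.1 h_pos')
  have h_log_low := Real.log_le_log (mul_pos ha h_pow) h_low
  have h_log_up := Real.log_le_log h_pos' h_up
  rw [Real.log_mul ha.ne' h_pow.ne', Real.log_rpow h_pos] at h_log_low
  rw [Real.log_mul hA.ne' h_pow.ne', Real.log_rpow h_pos] at h_log_up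
  have h_image := abs_le.1 (D.abs_logBallLength_sub_log_le hx' hz' hne')
  have h_source : |ℓ * (logBallLength H (h x) (|h z - h x|) - Real.log (|z - x|))| ≤
      ℓ * (2 * Real.log K) := by
    rw [abs_mul, abs_of_nonneg hℓ]
    exact mul_le_mul_of_nonneg_left (D.abs_logBallLength_sub_log_le hx hz hne) hℓ
  have h_source := abs_le.1 h_source
  exact abs_le.2 ⟨by linarith [neg_abs_le (Real.log a), abs_nonneg (Real.log A)],
    by linarith [le_abs_self (Real.log A), abs_nonneg (Real.log a)]⟩

end DoublingCoordinate

/-- Integrates the bound on `(log |f'|)'`. -/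
lemma abs_log_deriv_sub_le {f : ℝ → ℝ} {C d p q : ℝ} (hd0 : 0 < d) (hd1 : d ≤ 1)
    (hpq : Ioo p q ⊆ Ioo 0 1) (hC : ∀ z ∈ regularPts f, LogDerivBound f C z)
    (hdist : ∀ z ∈ Ioo p q, ∀ w ∈ Crit f, d ≤ |z - w|) {ξ ξ' : ℝ} (hξ : ξ ∈ Ioo p q)
    (hξ' : ξ' ∈ Ioo p q) :
    |Real.log (deriv f ξ') - Real.log (deriv f ξ)| ≤ C / d * |ξ' - ξ| := by
  have h_reg (z : ℝ) (hz : z ∈ Ioo p q) : z ∈ regularPts f :=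
    ⟨hpq hz, fun hc => by simpa using hd0.trans_le (hdist z hz z hc)⟩
  refine (convex_Ioo p q).norm_image_sub_le_of_norm_deriv_le
    (f := fun w => Real.log (deriv f w)) (fun z hz => (hC z (h_reg z hz)).1) (fun z hz => ?_) hξ hξ'
  rw [Real.norm_eq_abs, le_div_iff₀ hd0]
  exact (hC z (h_reg z hz)).2 d hd0 hd1 (hdist z hz)

namespace ConstantSlopeModel

variable {f h H : ℝ → ℝ} {K s : ℝ}

lemma exists_logBallLength_apply_eq (D : ConstantSlopeModel f h H K s) {y v : ℝ} (hy : y ∈ unitI)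
    (hv : 0 < v) (hS : ∀ b ∈ singularPts f, v ≤ |h b - h y|) :
    ∃ ξ ∈ Ioo (H (h y - v)) (H (h y + v)),
      logBallLength H (h (f y)) (s * v) = Real.log (deriv f ξ) + logBallLength H (h y) v := by
  obtain ⟨ξ, hξ, h_eq⟩ := D.exists_ballLength_apply_eq hy hv hS
  have h_deriv : deriv f ξ ≠ 0 := fun h0 =>
    (D.abs_apply_sub_lt_of_mem_Ioo hv hξ).not_ge
      (hS ξ (Or.inl ⟨Ioo_subset_Icc_self (D.Ioo_inv_subset _ _ hξ), h0⟩))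
  refine ⟨ξ, hξ, ?_⟩
  unfold logBallLength
  rw [h_eq, Real.log_mul (abs_ne_zero.2 h_deriv) (D.ballLength_pos (D.apply_mem y) hv).ne',
    Real.log_abs]

lemma exists_logBallLength_sub_le (D : ConstantSlopeModel f h H K s) :
    ∃ C > 0, ∀ y ∈ unitI, ∀ η > 0, (∀ b ∈ singularPts f, 2 * η ≤ |h b - h y|) →
      ∀ v v', 0 < v → v ≤ v' → v' ≤ η →
        logBallLength H (h y) v' - logBallLength H (h y) v ≤
          logBallLength H (h (f y)) (s * v') - logBallLength H (h (f y)) (s * v) +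
            C * (ballLength H (h y) v' / ballLength H (h y) η) := by
  have hK := D.one_le
  obtain ⟨C, hC, h_bound⟩ := exists_logDerivBound D.nonflat
  refine ⟨C * K ^ 3, by positivity, fun y hy η hη hS v v' hv hvv hv'η => ?_⟩
  have hv' := hv.trans_le hvv
  obtain ⟨ξ, hξ, h_eq⟩ := D.exists_logBallLength_apply_eq hy hv
    fun b hb => (by linarith : v ≤ 2 * η).trans (hS b hb)
  obtain ⟨ξ', hξ', h_eq'⟩ := D.exists_logBallLength_apply_eq hy hv'
    fun b hb => (by linarith : v' ≤ 2 * η).trans (hS b hb)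
  replace hξ : ξ ∈ Ioo (H (h y - v')) (H (h y + v')) :=
    Ioo_subset_Ioo (D.inv_mono (by linarith)) (D.inv_mono (by linarith)) hξ
  have h_pos := D.ballLength_pos (D.apply_mem y) hη
  have h_dist (z : ℝ) (hz : z ∈ Ioo (H (h y - v')) (H (h y + v'))) (w : ℝ) (hw : w ∈ Crit f) :
      ballLength H (h y) η / K ^ 3 ≤ |z - w| := by
    rw [div_le_iff₀' (by positivity)]
    exact D.ballLength_le_mul_abs_sub_of_two_mul_le
      (Ioo_subset_Icc_self (D.Ioo_inv_subset _ _ hz)) hw.1 hη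
      ((D.abs_apply_sub_lt_of_mem_Ioo hv' hz).le.trans hv'η) (hS w (Or.inl hw))
  have h_distortion := abs_log_deriv_sub_le (by positivity)
    (div_le_one_of_le₀ ((D.ballLength_le_one _ _).trans (one_le_pow₀ hK)) (by positivity))
    (D.Ioo_inv_subset _ _) h_bound h_dist hξ hξ'
  have h_near : |ξ' - ξ| ≤ ballLength H (h y) v' := by
    unfold ballLength
    exact abs_le.2 ⟨by linarith [hξ'.1, hξ.2], by linarith [hξ'.2, hξ.1]⟩
  have h_error : C / (ballLength H (h y) η / K ^ 3) * |ξ' - ξ| ≤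
      C * K ^ 3 * (ballLength H (h y) v' / ballLength H (h y) η) := by
    calc _ ≤ C / (ballLength H (h y) η / K ^ 3) * ballLength H (h y) v' := by gcongr
      _ = _ := by field_simp
  linarith [(abs_le.1 (h_distortion.trans h_error)).1]

lemma exists_point_at_apply_dist (D : ConstantSlopeModel f h H K s) {b : ℝ} (hb : b ∈ unitI)
    {P : ℝ → Prop} (hP : ∀ᶠ z in nhdsWithin b unitI, P z) :
    ∃ v₁ > 0, ∀ v, 0 < v → v < v₁ →
      ∃ z ∈ unitI, |h z - h b| = v ∧ P z ∧ Disjoint (uIoo b z) (Crit f) := by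
  have h_crit : ∀ᶠ w in nhds b, w ∉ Crit f \ {b} :=
    ((finite_Crit D.nonflat).subset sdiff_subset).isClosed.isOpen_compl.eventually_mem
      fun hw => hw.2 rfl
  obtain ⟨ε, hε, h_ball⟩ := Metric.eventually_nhds_iff.1
    ((eventually_nhdsWithin_iff.1 hP).and h_crit)
  obtain ⟨v₁, hv₁, h_lt⟩ := D.exists_ballLength_lt hε
  refine ⟨min v₁ (1 / 2), by positivity, fun v hv hvv => ?_⟩
  obtain ⟨z, hz, hzv⟩ :=
    D.exists_abs_apply_sub_eq b hv.le (hvv.le.trans (min_le_right _ _))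
  have hzε : |z - b| < ε := (D.abs_sub_le_ballLength hb hz).trans_lt
    (hzv ▸ h_lt _ (D.apply_mem b) v (hvv.le.trans (min_le_left _ _)))
  refine ⟨z, hz, hzv, (h_ball hzε).1 hz, disjoint_left.2 fun w hw hwc => ?_⟩
  have hwb : |w - b| ≤ |z - b| := abs_sub_left_of_mem_uIcc (Ioo_subset_Icc_self hw)
  refine (h_ball (hwb.trans_lt hzε)).2 ⟨hwc, ?_⟩
  rintro rfl
  exact left_notMem_uIoo hw

lemma exists_abs_logBallLength_apply_sub_le_at (D : ConstantSlopeModel f h H K s) {b ℓ : ℝ}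
    (hb : b ∈ unitI) (hℓ : 0 ≤ ℓ) (hpow : HasPowerLawAt f ℓ b) :
    ∃ C, ∀ v > 0, |logBallLength H (h (f b)) (s * v) - ℓ * logBallLength H (h b) v| ≤ C := by
  obtain ⟨a, ha, A, hA, h_power⟩ := hpow
  obtain ⟨v₁, hv₁, h_small⟩ := D.exists_point_at_apply_dist hb h_power
  obtain ⟨c, hc, h_large⟩ := D.exists_le_ballLength hv₁
  refine ⟨max (|Real.log a| + |Real.log A| + (1 + ℓ) * (2 * Real.log K))
    (|Real.log c| + ℓ * |Real.log c|), fun v hv => ?_⟩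
  rcases lt_or_ge v v₁ with hvv | hvv
  · obtain ⟨z, hz, rfl, ⟨h_low, h_up⟩, h_disj⟩ := h_small v hv hvv
    have hne : z ≠ b := by
      rintro rfl
      simp at hv
    refine le_max_of_le_left ?_
    rw [← D.hasConstantSlope.abs_apply_sub_eq hb hz h_disj]
    exact D.abs_logBallLength_sub_mul_le_of_power_law ha hA hℓ hb hz hne (D.mapsTo hb)
      (D.mapsTo hz) h_low h_up
  · refine le_max_of_le_right ((abs_sub _ _).trans ?_)
    rw [abs_mul, abs_of_nonneg hℓ]
    have hsv : v₁ ≤ s * v := hvv.trans (le_mul_of_one_le_left hv.le D.one_lt_slope.le)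
    exact add_le_add (D.abs_logBallLength_le_abs_log hc (h_large _ (D.apply_mem _) _ hsv))
      (mul_le_mul_of_nonneg_left
        (D.abs_logBallLength_le_abs_log hc (h_large _ (D.apply_mem _) _ hvv)) hℓ)

lemma exists_abs_logBallLength_apply_sub_le (D : ConstantSlopeModel f h H K s) {b ℓ : ℝ}
    (hb : b ∈ unitI) (hℓ : 0 ≤ ℓ) (hpow : HasPowerLawAt f ℓ b) :
    ∃ C, ∀ y ∈ unitI, ∀ v > 0, |h y - h b| ≤ 2 * v →
      |logBallLength H (h (f y)) (s * v) - ℓ * logBallLength H (h y) v| ≤ C := by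
  have hs := D.one_lt_slope
  obtain ⟨C, hC⟩ := D.exists_abs_logBallLength_apply_sub_le_at hb hℓ hpow
  refine ⟨C + 2 * Real.log K + ℓ * (2 * Real.log K), fun y hy v hv hyb => ?_⟩
  have h_image := D.abs_logBallLength_sub_le (D.apply_mem (f y)) (D.apply_mem (f b))
    (show 0 < s * v by positivity)
    ((D.abs_apply_sub_le hb hy).trans (by nlinarith))
  have h_source := mul_le_mul_of_nonneg_left
    (D.abs_logBallLength_sub_le (D.apply_mem y) (D.apply_mem b) hv hyb) hℓ
  rw [← abs_of_nonneg hℓ, ← abs_mul, abs_of_nonneg hℓ, mul_sub] at h_source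
  have h_image := abs_le.1 h_image
  have h_source := abs_le.1 h_source
  have h_at := abs_le.1 (hC v hv)
  exact abs_le.2 ⟨by linarith, by linarith⟩

end ConstantSlopeModel

/-! ### Profiles over the scales -/

/-- The number of steps after which the geometric sequence `u, u * s, u * s ^ 2, …` exceeds `d`,
and the junk value `0` if it never does. -/
def scaleIndex (s u d : ℝ) : ℕ := sInf {k : ℕ | d < u * s ^ k}

section ScaleIndex

variable {s u d : ℝ}

lemma lt_mul_pow_scaleIndex (hs : 1 < s) (hu : 0 < u) (d : ℝ) : d < u * s ^ scaleIndex s u d := by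
  obtain ⟨n, hn⟩ := pow_unbounded_of_one_lt (d / u) hs
  exact Nat.sInf_mem (s := {k : ℕ | d < u * s ^ k}) ⟨n, (div_lt_iff₀' hu).1 hn⟩

lemma scaleIndex_le {k : ℕ} (hk : d < u * s ^ k) : scaleIndex s u d ≤ k := Nat.sInf_le hk

lemma mul_pow_le_of_lt_scaleIndex {k : ℕ} (hk : k < scaleIndex s u d) : u * s ^ k ≤ d :=
  not_lt.1 fun h_lt => hk.not_ge (scaleIndex_le h_lt)

lemma lt_mul_pow_of_scaleIndex_le (hs : 1 < s) (hu : 0 < u) {k : ℕ} (hk : scaleIndex s u d ≤ k) :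
    d < u * s ^ k :=
  (lt_mul_pow_scaleIndex hs hu d).trans_le
    (mul_le_mul_of_nonneg_left (pow_le_pow_right₀ hs.le hk) hu.le)

lemma scaleIndex_mono (hs : 1 < s) (hu : 0 < u) : Monotone (scaleIndex s u) := fun _ d' hd =>
  scaleIndex_le (hd.trans_lt (lt_mul_pow_scaleIndex hs hu d'))

lemma scaleIndex_mul_mul (hs : 0 < s) : scaleIndex s (s * u) (s * d) = scaleIndex s u d := by
  simp only [scaleIndex, mul_assoc, mul_lt_mul_iff_right₀ hs]

lemma scaleIndex_mul_add_one_le (hs : 1 < s) (hu : 0 < u) (hd : u ≤ d) :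
    scaleIndex s (s * u) d + 1 ≤ scaleIndex s u d := by
  have h_lt := lt_mul_pow_scaleIndex hs hu d
  cases hn : scaleIndex s u d with
  | zero => rw [hn, pow_zero, mul_one] at h_lt; exact absurd hd h_lt.not_ge
  | succ m => exact Nat.succ_le_succ (scaleIndex_le (by rwa [hn, pow_succ', ← mul_assoc,
      mul_comm u] at h_lt))

end ScaleIndex

/-- Logarithmic lengths of the balls of radii `u, u * s, u * s ^ 2, …` about `t`. -/
def logProfile (H : ℝ → ℝ) (s t u : ℝ) (k : ℕ) : ℝ := logBallLength H t (u * s ^ k)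

/-- At the scales below `η`, the increments of the profile at `y` are at most those of the profile
at `f y`, up to an error that decays geometrically below `η`. -/
def TransportsIncrementsBelow (f h H : ℝ → ℝ) (s C γ η y : ℝ) : Prop :=
  ∀ u > 0, ∀ k < scaleIndex s u η,
    logProfile H s (h y) u (k + 1) - logProfile H s (h y) u k ≤
      logProfile H s (h (f y)) (s * u) (k + 1) - logProfile H s (h (f y)) (s * u) k +
        C * γ ^ (scaleIndex s u η - 1 - k)

/-- At the scales above `η`, passing from the profile at `y` to the profile at `f y` is
multiplication by `l` up to the error `C`. -/
def MultipliesProfileAbove (f h H : ℝ → ℝ) (s C η l y : ℝ) : Prop :=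
  ∀ u > 0, ∀ k ≥ scaleIndex s u η,
    |logProfile H s (h (f y)) (s * u) k - l * logProfile H s (h y) u k| ≤ C

lemma TransportsIncrementsBelow.mono {f h H : ℝ → ℝ} {s C C' γ η y : ℝ} (hγ : 0 ≤ γ)
    (hCC : C ≤ C') (hT : TransportsIncrementsBelow f h H s C γ η y) :
    TransportsIncrementsBelow f h H s C' γ η y := fun u hu k hk =>
  (hT u hu k hk).trans (by gcongr)

lemma MultipliesProfileAbove.mono {f h H : ℝ → ℝ} {s C C' η l y : ℝ} (hCC : C ≤ C')
    (hM : MultipliesProfileAbove f h H s C η l y) : MultipliesProfileAbove f h H s C' η l y :=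
  fun u hu k hk => (hM u hu k hk).trans hCC

lemma DoublingCoordinate.exists_ballLength_div_le {h H : ℝ → ℝ} {K s : ℝ}
    (D : DoublingCoordinate h H K) (hs : 1 < s) :
    ∃ γ, 0 < γ ∧ γ < 1 ∧ ∀ t ∈ unitI, ∀ v > 0, ∀ η ≤ 1 / 2, ∀ j : ℕ, v * s ^ j ≤ η →
      ballLength H t v / ballLength H t η ≤ γ ^ j := by
  obtain ⟨κ, hκ, h_grow⟩ := D.exists_pow_mul_ballLength_le hs
  refine ⟨(1 + κ)⁻¹, by positivity, inv_lt_one_of_one_lt₀ (by linarith),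
    fun t ht v hv η hη j hj => ?_⟩
  have h_mono : ballLength H t (v * s ^ j) ≤ ballLength H t η :=
    D.ballLength_mono (by linarith) (by linarith)
  have h_pos := D.ballLength_pos ht (lt_of_lt_of_le (by positivity) hj)
  rw [inv_pow, div_le_iff₀ h_pos, ← div_eq_inv_mul, le_div_iff₀' (by positivity)]
  exact (h_grow t ht v hv j (hj.trans hη)).trans h_mono

namespace ConstantSlopeModel

variable {f h H : ℝ → ℝ} {K s : ℝ}

lemma logProfile_mono (D : ConstantSlopeModel f h H K s) {t u : ℝ} (ht : t ∈ unitI) (hu : 0 < u) :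
    Monotone (logProfile H s t u) := fun _ _ hkk =>
  D.logBallLength_mono ht (by have := D.one_lt_slope; positivity)
    (mul_le_mul_of_nonneg_left (pow_le_pow_right₀ D.one_lt_slope.le hkk) hu.le)

/-- Reverse doubling turns the distortion bound into a geometric series over the scales. -/
lemma exists_transportsIncrementsBelow (D : ConstantSlopeModel f h H K s) :
    ∃ C > 0, ∃ γ, 0 < γ ∧ γ < 1 ∧ ∀ y ∈ unitI, ∀ η ≤ 1 / 2,
      (∀ b ∈ singularPts f, 2 * η ≤ |h b - h y|) →
        TransportsIncrementsBelow f h H s C γ η y := by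
  have hs := D.one_lt_slope
  obtain ⟨C, hC, h_transport⟩ := D.exists_logBallLength_sub_le
  obtain ⟨γ, hγ0, hγ1, h_ratio⟩ := D.exists_ballLength_div_le hs
  obtain ⟨C', hC', h_scale⟩ := D.exists_logBallLength_mul_sub_le (s := s) (by linarith)
  refine ⟨C / γ + C', by positivity, γ, hγ0, hγ1, fun y hy η hη hS u hu k hk => ?_⟩
  have huk : 0 < u * s ^ k := by positivity
  have h_le := mul_pow_le_of_lt_scaleIndex hk
  rcases Nat.lt_or_ge (k + 1) (scaleIndex s u η) with hlt | hge
  · obtain ⟨j, hj⟩ := Nat.exists_eq_add_of_lt hlt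
    have h_ratio_j := h_ratio (h y) (D.apply_mem y) (u * s ^ (k + 1)) (by positivity) η hη j (by
      rw [mul_assoc, ← pow_add]
      exact mul_pow_le_of_lt_scaleIndex (by omega))
    have h_diff := h_transport y hy η (huk.trans_le h_le) hS _ _ huk
      (mul_le_mul_of_nonneg_left (pow_le_pow_right₀ hs.le k.le_succ) hu.le)
      (mul_pow_le_of_lt_scaleIndex hlt)
    rw [← mul_assoc s, ← mul_assoc s] at h_diff
    have h_error : C * (ballLength H (h y) (u * s ^ (k + 1)) / ballLength H (h y) η) ≤
        (C / γ + C') * γ ^ (scaleIndex s u η - 1 - k) := by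
      calc _ ≤ C * γ ^ j := by gcongr
        _ = C / γ * γ ^ (j + 1) := by rw [pow_succ']; field_simp
        _ ≤ (C / γ + C') * γ ^ (j + 1) := by gcongr; linarith
        _ = _ := by rw [show scaleIndex s u η - 1 - k = j + 1 by omega]
    unfold logProfile
    linarith
  · have h_top : scaleIndex s u η - 1 - k = 0 := by omega
    have h_source := h_scale (h y) (D.apply_mem y) _ huk
    have h_image := D.logProfile_mono (D.apply_mem (f y)) (show 0 < s * u by positivity) k.le_succ
    rw [h_top, pow_zero, mul_one]
    rw [show s * (u * s ^ k) = u * s ^ (k + 1) by ring] at h_source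
    have : 0 < C / γ := by positivity
    unfold logProfile at h_image ⊢
    linarith

lemma exists_multipliesProfileAbove_one (D : ConstantSlopeModel f h H K s) {δ : ℝ} (hδ : 0 < δ) :
    ∃ C ≥ 0, ∀ y, MultipliesProfileAbove f h H s C δ 1 y := by
  have hs := D.one_lt_slope
  obtain ⟨c, hc, h_le⟩ := D.exists_le_ballLength hδ
  refine ⟨2 * |Real.log c|, by positivity, fun y u hu k hk => ?_⟩
  have hk := (lt_mul_pow_of_scaleIndex_le hs hu hk).le
  have hk' : δ ≤ s * u * s ^ k := by
    rw [mul_assoc]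
    exact hk.trans (le_mul_of_one_le_left (hδ.le.trans hk) hs.le)
  rw [one_mul, two_mul]
  exact (abs_sub _ _).trans (add_le_add
    (D.abs_logBallLength_le_abs_log hc (h_le _ (D.apply_mem _) _ hk'))
    (D.abs_logBallLength_le_abs_log hc (h_le _ (D.apply_mem _) _ hk)))

lemma exists_multipliesProfileAbove_of_power_law (D : ConstantSlopeModel f h H K s) {b ℓ : ℝ}
    (hb : b ∈ unitI) (hℓ : 0 ≤ ℓ) (hpow : HasPowerLawAt f ℓ b) :
    ∃ C, ∀ y ∈ unitI, ∀ η, |h b - h y| ≤ 2 * η → MultipliesProfileAbove f h H s C η ℓ y := by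
  obtain ⟨C, hC⟩ := D.exists_abs_logBallLength_apply_sub_le hb hℓ hpow
  refine ⟨C, fun y hy η hη u hu k hk => ?_⟩
  have hk := lt_mul_pow_of_scaleIndex_le D.one_lt_slope hu hk
  have h_pos : 0 < u * s ^ k := by linarith [abs_nonneg (h b - h y)]
  have h_near := hC y hy (u * s ^ k) h_pos (by rw [abs_sub_comm]; linarith)
  rwa [← mul_assoc] at h_near

lemma exists_multipliesProfileAbove (D : ConstantSlopeModel f h H K s) :
    ∃ C ≥ 0, ∃ lam > 0, ∀ b ∈ singularPts f, ∃ l ≥ 1, (b ∈ Crit f → 1 / l ≤ 1 - lam) ∧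
      ∀ y ∈ unitI, ∀ η, |h b - h y| ≤ 2 * η → MultipliesProfileAbove f h H s C η l y := by
  have h_each : ∀ b ∈ singularPts f, ∀ᶠ p : ℝ × ℝ in atTop ×ˢ nhdsWithin 0 (Ioi 0),
      ∃ l ≥ 1, (b ∈ Crit f → 1 / l ≤ 1 - p.2) ∧
        ∀ y ∈ unitI, ∀ η, |h b - h y| ≤ 2 * η → MultipliesProfileAbove f h H s p.1 η l y := by
    intro b hb
    obtain ⟨ℓ, hℓ, hcrit, hpow⟩ := exists_hasPowerLawAt D.nonflat (singularPts_subset f hb)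
    obtain ⟨C, hC⟩ := D.exists_multipliesProfileAbove_of_power_law (singularPts_subset f hb)
      (zero_le_one.trans hℓ) hpow
    have h_gain : ∀ᶠ lam in nhdsWithin (0 : ℝ) (Ioi 0), b ∈ Crit f → 1 / ℓ ≤ 1 - lam := by
      rw [eventually_imp_distrib_left]
      intro hb'
      have h_lt : 1 / ℓ < 1 := (div_lt_one (by linarith)).2 (hcrit hb')
      filter_upwards [Ioc_mem_nhdsGT (sub_pos.2 h_lt)] with lam hlam
      linarith [hlam.2]
    filter_upwards [(eventually_ge_atTop C).prod_mk h_gain] with p hp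
    exact ⟨ℓ, hℓ, hp.2, fun y hy η hη => (hC y hy η hη).mono hp.1⟩
  obtain ⟨⟨C, lam⟩, h_all, hC, hlam⟩ :=
    (((eventually_all_finite (finite_singularPts D.nonflat)).2 h_each).and
      ((eventually_ge_atTop 0).prod_mk self_mem_nhdsWithin)).exists
  exact ⟨C, hC, lam, hlam, h_all⟩

end ConstantSlopeModel

/-! ### The three local situations -/

/-- Distance to the boundary of the unit interval in the coordinate `h`. -/
def bdryDist (h : ℝ → ℝ) (y : ℝ) : ℝ := min (h y) (1 - h y)

/-- The possible reasons for which `η` separates the scales at `y` that `f` transports from those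
whose profile it multiplies by `l`: `η` is half the distance to a nearby critical point, half the
distance to a nearby singular endpoint, or at least the fixed scale `δ` if no singular point is
near. Each case records what happens to the distance to the boundary. -/
inductive LocalSituation (f h : ℝ → ℝ) (s lam δ ε y η l : ℝ) : Prop
  | critical (exponent_gain : 1 / l ≤ 1 - lam)
      (le_image : s * η ≤ bdryDist h (f y) ∨ ε ≤ bdryDist h (f y))
  | endpoint (source_le : bdryDist h y ≤ 2 * η) (le_image : ε ≤ bdryDist h (f y))
  | regular (le_scale : δ ≤ η) (le_image : s * min (2 * δ) (bdryDist h y) ≤ bdryDist h (f y))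

lemma bdryDist_sub_abs_sub_le (h : ℝ → ℝ) (x y : ℝ) :
    bdryDist h x - |h y - h x| ≤ bdryDist h y := by
  unfold bdryDist
  grind

namespace UnitCoordinate

variable {h H : ℝ → ℝ} {b e x y : ℝ}

lemma bdryDist_nonneg (D : UnitCoordinate h H) (x : ℝ) : 0 ≤ bdryDist h x :=
  le_min (D.apply_mem x).1 (sub_nonneg.2 (D.apply_mem x).2)

lemma bdryDist_pos (D : UnitCoordinate h H) (hx : x ∈ unitI) (h0 : x ≠ 0) (h1 : x ≠ 1) :
    0 < bdryDist h x := by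
  have h_left := D.strictMonoOn zero_mem_unitI hx (hx.1.lt_of_ne' h0)
  have h_right := D.strictMonoOn hx one_mem_unitI (hx.2.lt_of_ne h1)
  rw [D.eq_zero 0 le_rfl] at h_left
  rw [D.eq_one 1 le_rfl] at h_right
  exact lt_min h_left (sub_pos.2 h_right)

lemma abs_apply_sub_of_endpoint (D : UnitCoordinate h H) (he : e = 0 ∨ e = 1) (y : ℝ) :
    |h e - h y| = h y ∨ |h e - h y| = 1 - h y := by
  obtain ⟨hy0, hy1⟩ := D.apply_mem y
  rcases he with rfl | rfl
  · rw [D.eq_zero 0 le_rfl, zero_sub, abs_neg, abs_of_nonneg hy0]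
    exact Or.inl rfl
  · rw [D.eq_one 1 le_rfl, abs_of_nonneg (sub_nonneg.2 hy1)]
    exact Or.inr rfl

lemma bdryDist_le_abs_sub_of_endpoint (D : UnitCoordinate h H) (he : e = 0 ∨ e = 1) (y : ℝ) :
    bdryDist h y ≤ |h e - h y| := by
  rcases D.abs_apply_sub_of_endpoint he y with h_eq | h_eq <;> rw [h_eq]
  exacts [min_le_left _ _, min_le_right _ _]

lemma abs_sub_le_bdryDist_of_endpoint (D : UnitCoordinate h H) (he : e = 0 ∨ e = 1)
    (hy : |h e - h y| ≤ 1 / 2) : |h e - h y| ≤ bdryDist h y := by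
  rcases D.abs_apply_sub_of_endpoint he y with h_eq | h_eq <;> rw [h_eq] at hy ⊢
  exacts [le_min le_rfl (by linarith), le_min (by linarith) le_rfl]

lemma disjoint_uIoo_of_nearest (D : UnitCoordinate h H) {S : Set ℝ} (hS : S ⊆ unitI)
    (hb : b ∈ unitI) (hy : y ∈ unitI) (hmin : ∀ w ∈ S, |h b - h y| ≤ |h w - h y|) :
    Disjoint (uIoo b y) S := by
  refine disjoint_left.2 fun w hw hwS => (hmin w hwS).not_gt ?_
  rcases le_total b y with hby | hby
  · rw [uIoo_of_le hby] at hw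
    have h_left := D.strictMonoOn hb (hS hwS) hw.1
    have h_right := D.strictMonoOn (hS hwS) hy hw.2
    rw [abs_of_neg (by linarith), abs_of_neg (by linarith)]
    linarith
  · rw [uIoo_of_ge hby] at hw
    have h_left := D.strictMonoOn hy (hS hwS) hw.1
    have h_right := D.strictMonoOn (hS hwS) hb hw.2
    rw [abs_of_pos (by linarith), abs_of_pos (by linarith)]
    linarith

end UnitCoordinate

namespace ConstantSlopeModel

variable {f h H : ℝ → ℝ} {K s : ℝ}

lemma mul_min_le_bdryDist_apply (D : ConstantSlopeModel f h H K s) {y d : ℝ} (hy : y ∈ unitI)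
    (hd : 0 < d) (hfar : ∀ b ∈ Crit f, d ≤ |h b - h y|) :
    s * min d (bdryDist h y) ≤ bdryDist h (f y) := by
  rcases (D.bdryDist_nonneg y).eq_or_lt with h0 | h0
  · rw [← h0, min_eq_right hd.le, mul_zero]
    exact D.bdryDist_nonneg _
  · exact le_min_iff.2 (D.mul_le_apply_and_mul_le_one_sub hy (lt_min hd h0)
      (fun b hb => (min_le_left _ _).trans (hfar b hb))
      ((min_le_right _ _).trans (min_le_left _ _)) ((min_le_right _ _).trans (min_le_right _ _)))

lemma mul_abs_sub_le_bdryDist_apply (D : ConstantSlopeModel f h H K s) {b y : ℝ} (hb : b ∈ unitI)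
    (hy : y ∈ unitI) (hmin : ∀ w ∈ Crit f, |h b - h y| ≤ |h w - h y|) (hfb : f b = 0 ∨ f b = 1)
    (h_le : s * |h b - h y| ≤ 1 / 2) : s * |h b - h y| ≤ bdryDist h (f y) := by
  have h_slope := D.hasConstantSlope.abs_apply_sub_eq hb hy
    (D.disjoint_uIoo_of_nearest (fun w hw => hw.1) hb hy hmin)
  rw [abs_sub_comm, abs_sub_comm (h y)] at h_slope
  rw [← h_slope] at h_le ⊢
  exact D.abs_sub_le_bdryDist_of_endpoint hfb h_le

lemma exists_le_bdryDist_apply_of_mem_singularPts (D : ConstantSlopeModel f h H K s) :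
    ∃ ε > 0, ∀ b ∈ singularPts f, f b ≠ 0 → f b ≠ 1 → 2 * ε ≤ bdryDist h (f b) := by
  have h_each : ∀ b ∈ singularPts f, ∀ᶠ ε in nhdsWithin (0 : ℝ) (Ioi 0),
      f b ≠ 0 → f b ≠ 1 → 2 * ε ≤ bdryDist h (f b) := by
    intro b hb
    simp only [eventually_imp_distrib_left]
    intro h0 h1
    have h_pos := D.bdryDist_pos (D.mapsTo (singularPts_subset f hb)) h0 h1
    filter_upwards [Ioc_mem_nhdsGT (half_pos h_pos)] with ε hε
    linarith [hε.2]
  obtain ⟨ε, h_all, hε⟩ :=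
    (((eventually_all_finite (finite_singularPts D.nonflat)).2 h_each).and
      self_mem_nhdsWithin).exists
  exact ⟨ε, hε, h_all⟩

lemma localSituation_of_near (D : ConstantSlopeModel f h H K s) {lam δ ε l b y η : ℝ}
    (hε : ∀ b ∈ singularPts f, f b ≠ 0 → f b ≠ 1 → 2 * ε ≤ bdryDist h (f b))
    (hl : b ∈ Crit f → 1 / l ≤ 1 - lam) (hb : b ∈ singularPts f) (hy : y ∈ unitI)
    (hmin : ∀ w ∈ singularPts f, |h b - h y| ≤ |h w - h y|) (hη : |h b - h y| = 2 * η)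
    (hηε : s * (2 * η) ≤ ε) (hη2 : s * (2 * η) ≤ 1 / 2) :
    LocalSituation f h s lam δ ε y η l := by
  have hbI := singularPts_subset f hb
  have h_interior (h0 : f b ≠ 0) (h1 : f b ≠ 1) : ε ≤ bdryDist h (f y) := by
    have h_lip := D.abs_apply_sub_le hbI hy
    rw [abs_sub_comm (h y), hη] at h_lip
    linarith [hε b hb h0 h1, bdryDist_sub_abs_sub_le h (f b) (f y)]
  by_cases hcrit : b ∈ Crit f
  · refine .critical (hl hcrit) ?_
    by_cases hfb : f b = 0 ∨ f b = 1
    · have h_le := D.mul_abs_sub_le_bdryDist_apply hbI hy (fun w hw => hmin w (Or.inl hw)) hfb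
        (hη ▸ hη2)
      have hη0 : 0 ≤ s * |h b - h y| := mul_nonneg (by linarith [D.one_lt_slope]) (abs_nonneg _)
      rw [hη] at h_le hη0
      exact Or.inl (by linarith)
    · push Not at hfb
      exact Or.inr (h_interior hfb.1 hfb.2)
  · obtain ⟨he, h0, h1⟩ := hb.resolve_left hcrit
    exact .endpoint (hη ▸ D.bdryDist_le_abs_sub_of_endpoint he y) (h_interior h0 h1)

lemma exists_localSituation (D : ConstantSlopeModel f h H K s) :
    ∃ C > 0, ∃ γ, 0 < γ ∧ γ < 1 ∧ ∃ lam > 0, ∃ δ > 0, ∃ ε > 0, ∀ y ∈ unitI, ∃ η, ∃ l ≥ 1,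
      TransportsIncrementsBelow f h H s C γ η y ∧ MultipliesProfileAbove f h H s C η l y ∧
        LocalSituation f h s lam δ ε y η l := by
  have hs := D.one_lt_slope
  obtain ⟨C₁, hC₁, γ, hγ, hγ1, h_below⟩ := D.exists_transportsIncrementsBelow
  obtain ⟨C₂, hC₂, lam, hlam, h_near⟩ := D.exists_multipliesProfileAbove
  obtain ⟨ε, hε, h_bdry⟩ := D.exists_le_bdryDist_apply_of_mem_singularPts
  obtain ⟨δ, hδ, hδε, hδ2⟩ : ∃ δ > 0, s * (2 * δ) ≤ ε ∧ s * (2 * δ) ≤ 1 / 2 :=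
    ⟨min ε (1 / 2) / (2 * s), by positivity, by field_simp; exact min_le_left _ _,
      by field_simp; linarith [min_le_right ε (1 / 2)]⟩
  have hδ4 : 2 * δ ≤ 1 / 2 := (le_mul_of_one_le_left (by linarith) hs.le).trans hδ2
  obtain ⟨C₃, hC₃, h_far⟩ := D.exists_multipliesProfileAbove_one hδ
  refine ⟨C₁ + C₂ + C₃, by positivity, γ, hγ, hγ1, lam, hlam, δ, hδ, ε, hε, fun y hy => ?_⟩
  by_cases hfar : ∀ b ∈ singularPts f, 2 * δ ≤ |h b - h y|
  · exact ⟨δ, 1, le_rfl, (h_below y hy δ (by linarith) hfar).mono hγ.le (by linarith),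
      (h_far y).mono (by linarith), .regular le_rfl (D.mul_min_le_bdryDist_apply hy (by positivity)
        fun b hb => hfar b (Or.inl hb))⟩
  · push Not at hfar
    obtain ⟨b₀, hb₀, hb₀δ⟩ := hfar
    obtain ⟨b, hb, hmin⟩ := Set.exists_min_image (singularPts f) (fun b => |h b - h y|)
      (finite_singularPts D.nonflat) ⟨b₀, hb₀⟩
    obtain ⟨η, hη⟩ : ∃ η, |h b - h y| = 2 * η := ⟨_, (mul_div_cancel₀ _ two_ne_zero).symm⟩
    have hηδ : 2 * η ≤ 2 * δ := hη ▸ ((hmin b₀ hb₀).trans hb₀δ.le)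
    have hsη : s * (2 * η) ≤ s * (2 * δ) := by gcongr
    obtain ⟨l, hl, hl_crit, h_above⟩ := h_near b hb
    exact ⟨η, l, hl, (h_below y hy η (by linarith) (hη ▸ hmin)).mono hγ.le (by linarith),
      (h_above y hy η hη.le).mono (by linarith), D.localSituation_of_near h_bdry hl_crit hb hy hmin
        hη (hsη.trans hδε) (hsη.trans hδ2)⟩

end ConstantSlopeModel

/-! ### The potential along one step -/

/-- The potential `Φ t u` at the point `t` and the scale `u`: the discounted increment of the
profile at `t` over the scales from `u` on. -/
def scalePotential (H : ℝ → ℝ) (s θ t u : ℝ) : ℝ := discountedIncrement θ (logProfile H s t u)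

/-- The potential at `y` corrected by a term that counts the scales up to the distance of `y` to the
boundary; the term pays for the loss of potential near singular endpoints. -/
def correctedPotential (h H : ℝ → ℝ) (s θ M y u : ℝ) : ℝ :=
  scalePotential H s θ (h y) u - M * θ ^ scaleIndex s u (bdryDist h y)

section PowScaleIndex

variable {s θ u d d' : ℝ}

lemma pow_scaleIndex_le_pow_scaleIndex (hs : 1 < s) (h0 : 0 ≤ θ) (h1 : θ ≤ 1) (hu : 0 < u)
    (hd : d ≤ d') : θ ^ scaleIndex s u d' ≤ θ ^ scaleIndex s u d :=
  pow_le_pow_of_le_one h0 h1 (scaleIndex_mono hs hu hd)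

lemma pow_scaleIndex_mul_le_pow_scaleIndex (hs : 1 < s) (h0 : 0 ≤ θ) (h1 : θ ≤ 1) (hu : 0 < u)
    (hd : s * d ≤ d') : θ ^ scaleIndex s (s * u) d' ≤ θ ^ scaleIndex s u d := by
  rw [← scaleIndex_mul_mul (zero_lt_one.trans hs) (u := u)]
  exact pow_scaleIndex_le_pow_scaleIndex hs h0 h1 (mul_pos (zero_lt_one.trans hs) hu) hd

lemma pow_scaleIndex_le_two_mul (hs : 1 < s) (h0 : 0 ≤ θ) (h1 : θ ≤ 1) (hu : 0 < u) {j : ℕ}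
    (hj : 2 ≤ s ^ j) (hθj : 1 / 2 ≤ θ ^ j) (hd : d' ≤ 2 * d) :
    θ ^ scaleIndex s u d ≤ 2 * θ ^ scaleIndex s u d' := by
  have h_index : scaleIndex s u d' ≤ scaleIndex s u d + j := by
    have h_pos : 0 < u * s ^ scaleIndex s u d := by positivity
    have h_lt := lt_mul_pow_scaleIndex hs hu d
    refine scaleIndex_le ?_
    rw [pow_add, ← mul_assoc]
    nlinarith
  calc θ ^ scaleIndex s u d ≤ 2 * (θ ^ scaleIndex s u d * θ ^ j) := by
        nlinarith [pow_nonneg h0 (scaleIndex s u d)]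
    _ ≤ 2 * θ ^ scaleIndex s u d' := by
        rw [← pow_add]
        gcongr ?_ * ?_
        exact pow_le_pow_of_le_one h0 h1 h_index

lemma exists_lt_and_lt_pow_of_lt_one {a : ℝ} (ha : a < 1) (n : ℕ) :
    ∃ θ, a < θ ∧ θ < 1 ∧ a < θ ^ n := by
  have h_pow : ∀ᶠ θ : ℝ in nhdsWithin 1 (Iio 1), a < θ ^ n :=
    ((continuous_pow n).continuousAt.eventually_const_lt (by simpa using ha)).filter_mono
      nhdsWithin_le_nhds
  obtain ⟨θ, h_pow, h_lt⟩ := (h_pow.and (Ioo_mem_nhdsLT ha)).exists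
  exact ⟨θ, h_lt.1, h_lt.2, h_pow⟩

end PowScaleIndex

namespace LocalSituation

variable {f h : ℝ → ℝ} {s lam δ ε y η l θ u v ε' A G : ℝ} {j : ℕ}

/-- The loss `A` is paid at a critical point by the gain `G`, unless `η` exceeds a fixed scale; at
a singular endpoint by the boundary term at `y`; and at a regular point by the error, as `η` exceeds
a fixed scale there. -/
lemma pow_mul_sub_add_le (hsit : LocalSituation f h s lam δ ε y η l) (hs : 1 < s) (h0 : 0 < θ)
    (h1 : θ < 1) (hu : 0 < u) (hj : 2 ≤ s ^ j) (hθj : 1 / 2 ≤ θ ^ j) (hA : 0 ≤ A) (hG : 0 ≤ G)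
    (h_gain : 1 / l ≤ 1 - lam → s * u * s ^ scaleIndex s u η ≤ v → 3 * A ≤ G) (hε'v : s * ε' ≤ v)
    (hε'ε : s * ε' ≤ ε) (hδ : 0 ≤ δ) (hε'δ : ε' ≤ δ) :
    θ ^ scaleIndex s u η * (A - G) + 2 * A * θ ^ scaleIndex s (s * u) (bdryDist h (f y)) ≤
      2 * A * θ ^ scaleIndex s u (bdryDist h y) + 3 * A * θ ^ scaleIndex s u ε' := by
  have hT : 0 < θ ^ scaleIndex s u η := by positivity
  have hW : 0 < θ ^ scaleIndex s u ε' := by positivity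
  have hω : 0 < θ ^ scaleIndex s u (bdryDist h y) := by positivity
  have h_anti {d d' : ℝ} : d ≤ d' → θ ^ scaleIndex s u d' ≤ θ ^ scaleIndex s u d :=
    pow_scaleIndex_le_pow_scaleIndex hs h0.le h1.le hu
  have h_image {d : ℝ} : s * d ≤ bdryDist h (f y) →
      θ ^ scaleIndex s (s * u) (bdryDist h (f y)) ≤ θ ^ scaleIndex s u d :=
    pow_scaleIndex_mul_le_pow_scaleIndex hs h0.le h1.le hu
  rcases hsit with ⟨h_exp, h_bdry⟩ | ⟨h_source, h_bdry⟩ | ⟨h_scale, h_bdry⟩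
  · have h_new := h_bdry.imp h_image fun h_le => h_image (hε'ε.trans h_le)
    rcases le_or_gt (s * u * s ^ scaleIndex s u η) v with h_small | h_large
    · have h_pay := h_gain h_exp h_small
      rcases h_new with h_new | h_new <;> nlinarith
    · have h_old : θ ^ scaleIndex s u η ≤ θ ^ scaleIndex s u ε' :=
        pow_le_pow_of_le_one h0.le h1.le (scaleIndex_le (by nlinarith))
      rcases h_new with h_new | h_new <;> nlinarith
  · have h_new := h_image (hε'ε.trans h_bdry)
    have h_pay := pow_scaleIndex_le_two_mul hs h0.le h1.le hu hj hθj h_source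
    nlinarith
  · have h_old := h_anti (hε'δ.trans h_scale)
    have h_new := h_image h_bdry
    have h_error : θ ^ scaleIndex s u (2 * δ) ≤ θ ^ scaleIndex s u ε' :=
      h_anti (by linarith)
    rcases min_choice (2 * δ) (bdryDist h y) with h_min | h_min <;> rw [h_min] at h_new <;>
      nlinarith

end LocalSituation

namespace ConstantSlopeModel

variable {f h H : ℝ → ℝ} {K s θ t t' u u' : ℝ}

lemma abs_logProfile_le (D : ConstantSlopeModel f h H K s) (ht : t ∈ unitI) (hu : 0 < u) (k : ℕ) :
    |logProfile H s t u k| ≤ |logBallLength H t u| :=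
  D.abs_logBallLength_le ht hu (le_mul_of_one_le_right hu.le (one_le_pow₀ D.one_lt_slope.le))

lemma scalePotential_nonneg (D : ConstantSlopeModel f h H K s) (h0 : 0 ≤ θ) (h1 : θ < 1)
    (ht : t ∈ unitI) (hu : 0 < u) : 0 ≤ scalePotential H s θ t u :=
  discountedIncrement_nonneg h0 h1 (D.abs_logProfile_le ht hu) (D.logProfile_mono ht hu)

lemma abs_scalePotential_sub_mul_le (D : ConstantSlopeModel f h H K s) {l C : ℝ} (h0 : 0 ≤ θ)
    (h1 : θ < 1) (ht : t ∈ unitI) (ht' : t' ∈ unitI) (hu : 0 < u) (hu' : 0 < u')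
    (hC : ∀ k, |logProfile H s t' u' k - l * logProfile H s t u k| ≤ C) :
    |scalePotential H s θ t' u' - l * scalePotential H s θ t u| ≤ 2 * C :=
  abs_discountedIncrement_sub_mul_le h0 h1
    (fun k => (D.abs_logProfile_le ht hu k).trans (le_max_left _ (|logBallLength H t' u'|)))
    (fun k => (D.abs_logProfile_le ht' hu' k).trans (le_max_right _ _)) hC

lemma abs_scalePotential_sub_le (D : ConstantSlopeModel f h H K s) (h0 : 0 ≤ θ) (h1 : θ < 1)
    (ht : t ∈ unitI) (ht' : t' ∈ unitI) (hu : 0 < u) (htt : |t' - t| ≤ u) :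
    |scalePotential H s θ t' u - scalePotential H s θ t u| ≤ 4 * Real.log K := by
  have hs := D.one_lt_slope
  have h_compare := D.abs_scalePotential_sub_mul_le (l := 1) h0 h1 ht ht' hu hu fun k => by
    rw [one_mul]
    refine D.abs_logBallLength_sub_le ht' ht (by positivity) (htt.trans ?_)
    nlinarith [one_le_pow₀ (n := k) hs.le]
  rw [one_mul] at h_compare
  linarith

lemma exists_le_scalePotential (D : ConstantSlopeModel f h H K s) (B : ℝ) :
    ∃ n : ℕ, ∃ v > 0, ∀ θ, 0 ≤ θ → θ < 1 → 1 / 2 ≤ θ ^ n →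
      ∀ t ∈ unitI, ∀ u, 0 < u → u ≤ v → B ≤ scalePotential H s θ t u := by
  have hs := D.one_lt_slope
  obtain ⟨κ, hκ, h_grow⟩ := D.exists_pow_mul_ballLength_le hs
  have h_log : 0 < Real.log (1 + κ) := Real.log_pos (by linarith)
  obtain ⟨n, hn⟩ := exists_nat_ge (2 * B / Real.log (1 + κ))
  rw [div_le_iff₀ h_log] at hn
  refine ⟨n, 1 / 2 / s ^ n, by positivity, fun θ h0 h1 hθ t ht u hu huv => ?_⟩
  rw [le_div_iff₀ (by positivity)] at huv
  have h_pos := D.ballLength_pos ht hu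
  have h_log_le := Real.log_le_log (by positivity) (h_grow t ht u hu n huv)
  rw [Real.log_mul (by positivity) h_pos.ne', Real.log_pow] at h_log_le
  have h_increment : n * Real.log (1 + κ) ≤ logProfile H s t u n - logProfile H s t u 0 := by
    unfold logProfile logBallLength
    rw [pow_zero, mul_one]
    linarith
  have h_discount := pow_mul_sub_le_discountedIncrement h0 h1 (D.abs_logProfile_le ht hu)
    (D.logProfile_mono ht hu) n
  have h_mono := D.logProfile_mono ht hu n.zero_le
  unfold scalePotential
  nlinarith

lemma scalePotential_le_of_transports (D : ConstantSlopeModel f h H K s) {C γ η l y : ℝ}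
    (h1 : θ < 1) (hγ0 : 0 ≤ γ) (hγ : γ < θ) (hC : 0 ≤ C) (hl : 1 ≤ l) (hu : 0 < u)
    (h_below : TransportsIncrementsBelow f h H s C γ η y)
    (h_above : MultipliesProfileAbove f h H s C η l y) :
    scalePotential H s θ (h y) u ≤ scalePotential H s θ (h (f y)) (s * u) +
      θ ^ scaleIndex s u η * (C / (θ - γ) + 2 * C -
        (1 - 1 / l) * scalePotential H s θ (h (f y)) (s * u * s ^ scaleIndex s u η)) := by
  have hs := D.one_lt_slope
  have h_tail : logProfile H s (h (f y)) (s * u * s ^ scaleIndex s u η) =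
      fun k => logProfile H s (h (f y)) (s * u) (k + scaleIndex s u η) := by
    funext k
    rw [logProfile, logProfile, pow_add, mul_assoc _ (s ^ _), mul_comm (s ^ k)]
  have h_step := discountedIncrement_le_of_scaled_tail h1 hγ0 hγ hC hl
    (fun k => (D.abs_logProfile_le (D.apply_mem y) hu k).trans
      (le_max_left _ (|logBallLength H (h (f y)) (s * u)|)))
    (fun k => (D.abs_logProfile_le (D.apply_mem (f y)) (by positivity) k).trans (le_max_right _ _))
    _ (h_below u hu) (h_above u hu)
  rwa [← h_tail] at h_step

lemma correctedPotential_le_of_localSituation (D : ConstantSlopeModel f h H K s)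
    {C γ lam δ ε ε' v A η l y : ℝ} {j : ℕ} (h0 : 0 < θ) (h1 : θ < 1) (hγ0 : 0 ≤ γ) (hγ : γ < θ)
    (hC : 0 ≤ C) (hA : C / (θ - γ) + 2 * C ≤ A) (hlam : 0 < lam) (hl : 1 ≤ l) (hu : 0 < u)
    (hj : 2 ≤ s ^ j) (hθj : 1 / 2 ≤ θ ^ j)
    (h_big : ∀ t ∈ unitI, ∀ u, 0 < u → u ≤ v → 3 * A / lam ≤ scalePotential H s θ t u)
    (hε'v : s * ε' ≤ v) (hε'ε : s * ε' ≤ ε) (hδ : 0 ≤ δ) (hε'δ : ε' ≤ δ)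
    (h_below : TransportsIncrementsBelow f h H s C γ η y)
    (h_above : MultipliesProfileAbove f h H s C η l y)
    (hsit : LocalSituation f h s lam δ ε y η l) :
    correctedPotential h H s θ (2 * A) y u ≤
      correctedPotential h H s θ (2 * A) (f y) (s * u) + 3 * A * θ ^ scaleIndex s u ε' := by
  have hs := D.one_lt_slope
  have hA0 : 0 ≤ A := by
    have := sub_pos.2 hγ
    exact le_trans (by positivity) hA
  have h_step := D.scalePotential_le_of_transports h1 hγ0 hγ hC hl hu h_below h_above
  have h_distortion := mul_le_mul_of_nonneg_left hA (pow_nonneg h0.le (scaleIndex s u η))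
  have hl' : 0 ≤ 1 - 1 / l := sub_nonneg.2 ((div_le_one (by linarith)).2 hl)
  have h_tail := D.scalePotential_nonneg h0.le h1 (D.apply_mem (f y))
    (show 0 < s * u * s ^ scaleIndex s u η by positivity)
  have h_gain (h_exp : 1 / l ≤ 1 - lam) (h_small : s * u * s ^ scaleIndex s u η ≤ v) :
      3 * A ≤
        (1 - 1 / l) * scalePotential H s θ (h (f y)) (s * u * s ^ scaleIndex s u η) :=
    calc 3 * A = lam * (3 * A / lam) := by field_simp
      _ ≤ _ := mul_le_mul (by linarith) (h_big _ (D.apply_mem (f y)) _ (by positivity) h_small)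
          (by positivity) hl'
  have h_loss := hsit.pow_mul_sub_add_le hs h0 h1 hu hj hθj hA0 (mul_nonneg hl' h_tail) h_gain
    hε'v hε'ε hδ hε'δ
  unfold correctedPotential
  linarith

/-- The order of the quantifiers matters: `M` does not depend on the lower bound `B` for the
potential at small scales, and `θ` is chosen last, close to `1`. -/
lemma exists_correctedPotential_le (D : ConstantSlopeModel f h H K s) :
    ∃ M ≥ 0, ∀ B : ℝ, ∃ θ, 0 < θ ∧ θ < 1 ∧
      (∃ v > 0, ∀ t ∈ unitI, ∀ u, 0 < u → u ≤ v → B ≤ scalePotential H s θ t u) ∧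
      ∃ C ≥ 0, ∃ ε > 0, ∀ y ∈ unitI, ∀ u > 0, correctedPotential h H s θ M y u ≤
        correctedPotential h H s θ M (f y) (s * u) + C * θ ^ scaleIndex s u ε := by
  have hs := D.one_lt_slope
  obtain ⟨C, hC, γ, hγ, hγ1, lam, hlam, δ, hδ, ε, hε, h_local⟩ := D.exists_localSituation
  have : 0 < 1 - γ := sub_pos.2 hγ1
  obtain ⟨A, hA, hA_eq⟩ : ∃ A > 0, A = C / ((1 - γ) / 2) + 2 * C := ⟨_, by positivity, rfl⟩
  refine ⟨2 * A, by positivity, fun B => ?_⟩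
  obtain ⟨j, hj⟩ := pow_unbounded_of_one_lt 2 hs
  obtain ⟨n, v, hv, h_big⟩ := D.exists_le_scalePotential (max B (3 * A / lam))
  obtain ⟨θ, hγθ, h1, hθ⟩ :=
    exists_lt_and_lt_pow_of_lt_one (show (1 + γ) / 2 < 1 by linarith) (n + j)
  have h0 : 0 < θ := by linarith
  have hθ_pow {m : ℕ} (hm : m ≤ n + j) : 1 / 2 ≤ θ ^ m := by
    linarith [pow_le_pow_of_le_one h0.le h1.le hm]
  replace h_big := h_big θ h0.le h1 (hθ_pow le_self_add)
  have h_distortion : C / (θ - γ) + 2 * C ≤ A := by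
    rw [hA_eq]
    gcongr
    linarith
  have h_scale : s * min (min v ε / s) δ ≤ min v ε := by
    rw [mul_comm, ← le_div_iff₀ (by positivity)]
    exact min_le_left _ _
  refine ⟨θ, h0, h1, ⟨v, hv, fun t ht u hu huv => (le_max_left _ _).trans (h_big t ht u hu huv)⟩,
    3 * A, by positivity, min (min v ε / s) δ, by positivity, fun y hy u hu => ?_⟩
  obtain ⟨η, l, hl, h_below, h_above, hsit⟩ := h_local y hy
  exact D.correctedPotential_le_of_localSituation h0 h1 hγ.le (by linarith) hC.le h_distortion hlam
    hl hu hj.le (hθ_pow le_add_self)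
    (fun t ht u hu huv => (le_max_right _ _).trans (h_big t ht u hu huv))
    (h_scale.trans (min_le_left _ _)) (h_scale.trans (min_le_right _ _)) hδ.le (min_le_right _ _)
    h_below h_above hsit

end ConstantSlopeModel

/-! ### Orbits returning to a critical point -/

section

variable {s θ ε : ℝ}

/-- The errors along the orbit form a geometric series dominated by the last one. -/
lemma le_apply_iterate_add_of_le_apply_add {f : ℝ → ℝ} {S : Set ℝ} {Ψ : ℝ → ℝ → ℝ} {C y u : ℝ}
    (hs : 1 < s) (h0 : 0 ≤ θ) (h1 : θ < 1) (hC : 0 ≤ C) (hf : MapsTo f S S)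
    (h_step : ∀ y ∈ S, ∀ u > 0, Ψ y u ≤ Ψ (f y) (s * u) + C * θ ^ scaleIndex s u ε)
    (hy : y ∈ S) (hu : 0 < u) (n : ℕ) (hn : s ^ n * u ≤ ε) :
    Ψ y u ≤ Ψ (f^[n] y) (s ^ n * u) + C / (1 - θ) * θ ^ scaleIndex s (s ^ n * u) ε := by
  have hθ : 0 < 1 - θ := sub_pos.2 h1
  induction n with
  | zero =>
    simp only [pow_zero, one_mul, Function.iterate_zero, id]
    exact le_add_of_nonneg_right (by positivity)
  | succ n ih =>
    have h_pos : 0 < s ^ n * u := by positivity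
    rw [pow_succ', mul_assoc] at hn ⊢
    have hn' : s ^ n * u ≤ ε := by nlinarith
    rw [Function.iterate_succ_apply']
    have h_last := h_step _ (hf.iterate n hy) _ h_pos
    set w := θ ^ scaleIndex s (s * (s ^ n * u)) ε
    have h_ratio : θ ^ scaleIndex s (s ^ n * u) ε ≤ w * θ := by
      rw [← pow_succ]
      exact pow_le_pow_of_le_one h0 h1.le (scaleIndex_mul_add_one_le hs h_pos hn')
    have h_geometric : (C / (1 - θ) + C) * θ ^ scaleIndex s (s ^ n * u) ε ≤ C / (1 - θ) * w :=
      calc (C / (1 - θ) + C) * θ ^ scaleIndex s (s ^ n * u) ε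
          ≤ (C / (1 - θ) + C) * (w * θ) := by gcongr
        _ = C / (1 - θ) * w - C * (1 - θ) * w := by field_simp; ring
        _ ≤ C / (1 - θ) * w := sub_le_self _ (by positivity)
    linarith [ih hn']

lemma exists_mul_pow_scaleIndex_le_one (hs : 1 < s) (h0 : 0 ≤ θ) (h1 : θ < 1) (hε : 0 < ε) {a : ℝ}
    (ha : 0 ≤ a) : ∃ r₁ > 0, r₁ ≤ ε ∧ ∀ r, 0 < r → r ≤ r₁ → a * θ ^ scaleIndex s r ε ≤ 1 := by
  obtain ⟨k, hk⟩ : ∃ k : ℕ, a * θ ^ k < 1 := by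
    have h_lim := (tendsto_pow_atTop_nhds_zero_of_lt_one h0 h1).const_mul a
    rw [mul_zero] at h_lim
    exact (h_lim.eventually_lt_const one_pos).exists
  refine ⟨ε / s ^ k, by positivity, div_le_self hε.le (one_le_pow₀ hs.le), fun r hr hrε => ?_⟩
  rw [le_div_iff₀ (by positivity)] at hrε
  have h_index : k ≤ scaleIndex s r ε := by
    by_contra! h_lt
    exact hrε.not_gt (lt_mul_pow_of_scaleIndex_le hs hr h_lt.le)
  exact (mul_le_mul_of_nonneg_left (pow_le_pow_of_le_one h0 h1.le h_index) ha).trans hk.le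

end

lemma not_exists_of_forall_exists_le_sub_one {α : Type*} {p : α → Prop} {F : α → ℝ}
    (h_nonneg : ∀ a, p a → 0 ≤ F a) (h_desc : ∀ a, p a → ∃ b, p b ∧ F b ≤ F a - 1) :
    ¬∃ a, p a := by
  rintro ⟨a, ha⟩
  obtain ⟨n, hn⟩ := exists_nat_gt (F a)
  induction n generalizing a with
  | zero => exact (h_nonneg a ha).not_gt (by simpa using hn)
  | succ n ih =>
    obtain ⟨b, hb, hba⟩ := h_desc a ha
    rw [Nat.cast_succ] at hn
    exact ih b hb (by linarith)

lemma RecurrentPt.exists_iterate_apply_lt {f g : ℝ → ℝ} {c r : ℝ} (hrec : RecurrentPt f c)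
    (hg : ContinuousAt g c) (hr : 0 < r) : ∃ n : ℕ, |g (f^[n] (f c)) - g c| < r := by
  obtain ⟨τ, hτ, h_near⟩ := Metric.continuousAt_iff.1 hg r hr
  obtain ⟨n, hn, hnc⟩ := hrec τ hτ 1
  obtain ⟨m, rfl⟩ := Nat.exists_eq_add_of_le' hn
  exact ⟨m, h_near hnc⟩

namespace ConstantSlopeModel

variable {f h H : ℝ → ℝ} {K s c : ℝ}

lemma exists_abs_scalePotential_apply_sub_le (D : ConstantSlopeModel f h H K s) (hc : c ∈ Crit f) :
    ∃ ℓ > 1, ∃ A, ∀ θ, 0 ≤ θ → θ < 1 → ∀ u > 0,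
      |scalePotential H s θ (h (f c)) (s * u) - ℓ * scalePotential H s θ (h c) u| ≤ A := by
  have hs := D.one_lt_slope
  obtain ⟨ℓ, -, hℓ, h_pow⟩ := exists_hasPowerLawAt D.nonflat hc.1
  replace hℓ := hℓ hc
  obtain ⟨C, hC⟩ := D.exists_abs_logBallLength_apply_sub_le_at hc.1 (by linarith) h_pow
  refine ⟨ℓ, hℓ, 2 * C, fun θ h0 h1 u hu => ?_⟩
  refine D.abs_scalePotential_sub_mul_le h0 h1 (D.apply_mem c) (D.apply_mem (f c)) hu
    (by positivity) fun k => ?_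
  rw [logProfile, mul_assoc]
  exact hC _ (by positivity)

lemma mul_scalePotential_le_of_return (D : ConstantSlopeModel f h H K s) {θ A M ℓ y u r : ℝ}
    (h0 : 0 ≤ θ) (h1 : θ < 1) (hM : 0 ≤ M) (hr : 0 < r)
    (h_leave : |scalePotential H s θ (h (f c)) (s * u) - ℓ * scalePotential H s θ (h c) u| ≤ A)
    (h_orbit : correctedPotential h H s θ M (f c) (s * u) ≤ correctedPotential h H s θ M y r + 1)
    (hy : |h y - h c| ≤ r) :
    ℓ * scalePotential H s θ (h c) u ≤
      scalePotential H s θ (h c) r + (A + M + 1 + 4 * Real.log K) := by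
  have h_bdry_start : M * θ ^ scaleIndex s (s * u) (bdryDist h (f c)) ≤ M :=
    mul_le_of_le_one_right hM (pow_le_one₀ h0 h1.le)
  have h_bdry_end : 0 ≤ M * θ ^ scaleIndex s r (bdryDist h y) := by positivity
  have h_return := D.abs_scalePotential_sub_le h0 h1 (D.apply_mem c) (D.apply_mem y) hr hy
  unfold correctedPotential at h_orbit
  linarith [(abs_le.1 h_leave).1, (abs_le.1 h_return).2]

/-- At a recurrent critical point `c`, leaving `c` divides the potential by `ℓ > 1`, and returning
to `c` loses only a bounded amount. As the potential is large at small scales, each return would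
decrease it by at least `1`, although it is nonnegative. -/
theorem not_recurrentPt (D : ConstantSlopeModel f h H K s) (hc : c ∈ Crit f) :
    ¬RecurrentPt f c := by
  intro hrec
  have hs := D.one_lt_slope
  obtain ⟨ℓ, hℓ, A, h_leave⟩ := D.exists_abs_scalePotential_apply_sub_le hc
  obtain ⟨M, hM, h_main⟩ := D.exists_correctedPotential_le
  obtain ⟨θ, h0, h1, ⟨v, hv, h_big⟩, C, hC, ε, hε, h_step⟩ :=
    h_main ((A + M + 1 + 4 * Real.log K + ℓ) / (ℓ - 1))
  obtain ⟨r₁, hr₁, hr₁ε, h_error⟩ := exists_mul_pow_scaleIndex_le_one hs h0.le h1 hε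
    (div_nonneg hC (sub_nonneg.2 h1.le))
  refine not_exists_of_forall_exists_le_sub_one (p := fun r => 0 < r ∧ r ≤ min v r₁)
    (F := scalePotential H s θ (h c)) (fun r hr => D.scalePotential_nonneg h0.le h1
      (D.apply_mem c) hr.1) (fun r ⟨hr, hr_le⟩ => ?_) ⟨min v r₁, by positivity, le_rfl⟩
  obtain ⟨hrv, hrr₁⟩ := le_min_iff.1 hr_le
  obtain ⟨m, hm⟩ := hrec.exists_iterate_apply_lt D.continuous.continuousAt hr
  obtain ⟨u, hu, hur⟩ : ∃ u > 0, s ^ m * (s * u) = r :=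
    ⟨r / s ^ (m + 1), by positivity, by field_simp; ring⟩
  have hu_le : u ≤ r := by
    rw [← hur, ← mul_assoc, ← pow_succ]
    exact le_mul_of_one_le_left hu.le (one_le_pow₀ hs.le)
  have h_orbit := le_apply_iterate_add_of_le_apply_add hs h0.le h1 hC D.mapsTo h_step
    (D.mapsTo hc.1) (by positivity) m (hur.trans_le (hrr₁.trans hr₁ε))
  rw [hur] at h_orbit
  have h_return := D.mul_scalePotential_le_of_return h0.le h1 hM hr (h_leave θ h0.le h1 u hu)
    (h_orbit.trans (by gcongr; exact h_error r hr hrr₁)) hm.le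
  have h_large := h_big (h c) (D.apply_mem c) r hr hrv
  rw [div_le_iff₀ (sub_pos.2 hℓ)] at h_large
  refine ⟨u, ⟨hu, hu_le.trans hr_le⟩, le_of_mul_le_mul_left (a := ℓ) ?_ (by linarith)⟩
  linarith

end ConstantSlopeModel

theorem doubling_implies_no_recurrent_general {f : ℝ → ℝ} {μ : Measure ℝ} [IsProbabilityMeasure μ]
    [NullSingletonClass μ] {s : NNReal} (hI : μ unitIᶜ = 0)
    (hpos : ∀ x ∈ unitI, ∀ r > 0, 0 < μ (ballI x r))
    (hjac : ∀ A, MeasurableSet A → A ⊆ unitI → InjOn f A → μ (f '' A) = s * μ A)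
    (hmaps : MapsTo f unitI unitI) (hc3 : C3Nonflat f) (hex : TopExact f) (hdoub : DoublingOn μ) :
    ∀ c ∈ Crit f, ¬RecurrentPt f c := by
  obtain ⟨h, H, K, D⟩ := exists_constantSlopeModel hI hpos hjac hmaps hc3 hex hdoub
  exact fun c hc => D.not_recurrentPt hc

/-- **Proposition 4.1**: if the maximal entropy measure of `f` is doubling then `f` has
no recurrent critical points. -/
theorem doubling_implies_no_recurrent (f : ℝ → ℝ) (μ : Measure ℝ)
    (hmm : Multimodal f) (hc3 : C3Nonflat f) (hrep : AllPeriodicRepelling f)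
    (hex : TopExact f) (hμ : IsMaxEntropyLike f μ (Real.exp (htop f)))
    (hdoub : DoublingOn μ) :
    ∀ c ∈ Crit f, ¬ RecurrentPt f c := by
  obtain ⟨_, hI, -, hnull, hpos, hjac⟩ := hμ
  have : NullSingletonClass μ := ⟨hnull⟩
  exact doubling_implies_no_recurrent_general hI hpos hjac hmm.2.1 hc3 hex hdoub

end
end
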